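/- arXiv:1306.3930 — 3 statements merged into one kernel-verified Lean document; each statement's English description precedes it below -/
import Mathlib

section
/- Let (U_i)_{i∈ℤ} be a strictly stationary sequence of [0,1]^d-valued random vectors with common c.d.f. C whose strong mixing coefficients satisfy α_r = O(r^{−a}) for some a > 3; let ℓ_n be a sequence of positive reals with ℓ_n → ∞ and ℓ_n = O(n^{1/2−ε}) for some ε ∈ (0,1/2); and let φ:ℝ→[0,1] be symmetric about 0 with φ(0)=1, φ(x)=0 for |x|>1, twice continuously differentiable on [−1,1] and φ''(0) ≠ 0. Then, with Γ(u,v) = (φ''(0)/2) Σ_{k∈ℤ} k² γ(k,u,v), one has E[σ̃_n(u,v)] − σ_C(u,v) = Γ(u,v)/ℓ_n² + r_{n,1}(u,v), where sup_{u,v∈[0,1]^d} |r_{n,1}(u,v)| = o(ℓ_n^{−2}); equivalently, ℓ_n² · sup_{u,v∈[0,1]^d} |E[σ̃_n(u,v)] − σ_C(u,v) − Γ(u,v)/ℓ_n²| → 0 as n → ∞. -/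
/-!
By stationarity and the evenness of `φ`,
`E[σ̃_n(u,v)] = Σ_k (n - |k|)⁺ / n · φ(k / ℓ_n) · γ(k,u,v)` (`integral_sigTilde`), so the error
multiplied by `ℓ_n²` is `Σ_k e_n(k) γ(k,u,v)` with
`e_n(k) = ℓ_n² ((n - |k|)⁺ / n · φ(k / ℓ_n) - 1) - (φ''(0)/2) k²` (`weightErr`).

The mixing condition gives `|γ(k,u,v)| ≤ b(k)` uniformly in `u, v`, with `b(k) = O(|k|^{-a})`
(`abs_gam_le`), so it suffices that `Σ_k |e_n(k)| b(k) → 0`. This is dominated convergence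
(`tsum_weightErr_tendsto`). For fixed `k`, `e_n(k) → 0`, because `φ` has the expansion
`1 + (φ''(0)/2) x² + o(x²)` at `0` and `ℓ_n² / n → 0`. Moreover `|e_n(k)| ≤ M k²` for large `n`,
because `|φ(x) - 1| ≤ K x²` on all of `ℝ`, and `Σ_k k² b(k) < ∞` since `a > 3`.
-/

open Set Filter MeasureTheory

namespace Stmt1

variable {Ω : Type*} [MeasurableSpace Ω]

/-- σ-field generated by `(Y i)_{i ≤ p}`. -/
def sigmaLE {β : Type*} [MeasurableSpace β] (Y : ℤ → Ω → β) (p : ℤ) :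
    MeasurableSpace Ω :=
  ⨆ i ∈ {i : ℤ | i ≤ p}, MeasurableSpace.comap (Y i) inferInstance

/-- σ-field generated by `(Y i)_{i ≥ p}`. -/
def sigmaGE {β : Type*} [MeasurableSpace β] (Y : ℤ → Ω → β) (p : ℤ) :
    MeasurableSpace Ω :=
  ⨆ i ∈ {i : ℤ | p ≤ i}, MeasurableSpace.comap (Y i) inferInstance

/-- Strong mixing coefficient `α_r` of the sequence `Y`. -/
noncomputable def alphaMix {β : Type*} [MeasurableSpace β]
    (P : Measure Ω) (Y : ℤ → Ω → β) (r : ℕ) : ℝ :=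
  sSup {x : ℝ | ∃ (p : ℤ) (A B : Set Ω),
    MeasurableSet[sigmaLE Y p] A ∧ MeasurableSet[sigmaGE Y (p + r)] B ∧
    x = |(P (A ∩ B)).toReal - (P A).toReal * (P B).toReal|}

/-- Strict stationarity of a sequence indexed by `ℤ`. -/
def Stationary {β : Type*} [MeasurableSpace β]
    (P : Measure Ω) (Y : ℤ → Ω → β) : Prop :=
  ∀ k : ℤ, Measure.map (fun ω (i : ℤ) => Y (i + k) ω) P
    = Measure.map (fun ω (i : ℤ) => Y i ω) P

variable {d : ℕ}

/-- Indicator `1(U_i ≤ u)` as a real-valued function. -/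
noncomputable def ind (U : ℤ → Ω → Fin d → ℝ) (i : ℤ) (u : Fin d → ℝ)
    (ω : Ω) : ℝ :=
  if ∀ j, U i ω j ≤ u j then 1 else 0

/-- The common c.d.f. `C` of the sequence. -/
noncomputable def cdfC (P : Measure Ω) (U : ℤ → Ω → Fin d → ℝ)
    (u : Fin d → ℝ) : ℝ :=
  (P {ω | ∀ j, U 0 ω j ≤ u j}).toReal

/-- `γ(k,u,v) = Cov(1(U_0 ≤ u), 1(U_k ≤ v))`. -/
noncomputable def gam (P : Measure Ω) (U : ℤ → Ω → Fin d → ℝ) (k : ℤ)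
    (u v : Fin d → ℝ) : ℝ :=
  (∫ ω, ind U 0 u ω * ind U k v ω ∂P)
    - (∫ ω, ind U 0 u ω ∂P) * (∫ ω, ind U k v ω ∂P)

/-- `σ_C(u,v) = Σ_{k∈ℤ} γ(k,u,v)`. -/
noncomputable def sigC (P : Measure Ω) (U : ℤ → Ω → Fin d → ℝ)
    (u v : Fin d → ℝ) : ℝ :=
  ∑' k : ℤ, gam P U k u v

/-- The multiplier-covariance estimator
`σ̃_n(u,v) = n⁻¹ Σ_{i,j=1}^n φ((i−j)/ℓ_n) {1(U_i ≤ u) − C(u)}{1(U_j ≤ v) − C(v)}`. -/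
noncomputable def sigTilde (P : Measure Ω) (U : ℤ → Ω → Fin d → ℝ)
    (φ : ℝ → ℝ) (ℓ : ℕ → ℝ) (n : ℕ) (u v : Fin d → ℝ) (ω : Ω) : ℝ :=
  (n : ℝ)⁻¹ * ∑ i ∈ Finset.Icc (1 : ℤ) (n : ℤ), ∑ j ∈ Finset.Icc (1 : ℤ) (n : ℤ),
    φ (((i : ℝ) - (j : ℝ)) / ℓ n) *
      ((ind U i u ω - cdfC P U u) * (ind U j v ω - cdfC P U v))

/-- `Γ(u,v) = (φ''(0)/2) Σ_{k∈ℤ} k² γ(k,u,v)`. -/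
noncomputable def Gam (P : Measure Ω) (U : ℤ → Ω → Fin d → ℝ)
    (φ : ℝ → ℝ) (u v : Fin d → ℝ) : ℝ :=
  (iteratedDerivWithin 2 φ (Icc (-1 : ℝ) 1) 0 / 2) *
    ∑' k : ℤ, ((k : ℝ) ^ 2 * gam P U k u v)

/-! ### Covariances: mixing bound and stationarity -/

lemma measurableSet_orthant (u : Fin d → ℝ) : MeasurableSet {x : Fin d → ℝ | ∀ j, x j ≤ u j} :=
  measurableSet_Iic (a := u)

lemma ind_eq_indicator (U : ℤ → Ω → Fin d → ℝ) (i : ℤ) (u : Fin d → ℝ) :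
    ind U i u = Set.indicator {ω | ∀ j, U i ω j ≤ u j} (fun _ => (1 : ℝ)) := by
  funext ω
  simp [ind, Set.indicator]

lemma measurableSet_event {U : ℤ → Ω → Fin d → ℝ} (hU : ∀ i, Measurable (U i)) (i : ℤ)
    (u : Fin d → ℝ) : MeasurableSet {ω | ∀ j, U i ω j ≤ u j} :=
  hU i (measurableSet_orthant u)

lemma measurable_ind {U : ℤ → Ω → Fin d → ℝ} (hU : ∀ i, Measurable (U i)) (i : ℤ)
    (u : Fin d → ℝ) : Measurable (ind U i u) := by
  rw [ind_eq_indicator]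
  exact measurable_const.indicator (measurableSet_event hU i u)

lemma integral_ind (P : Measure Ω) {U : ℤ → Ω → Fin d → ℝ} (hU : ∀ i, Measurable (U i)) (i : ℤ)
    (u : Fin d → ℝ) : ∫ ω, ind U i u ω ∂P = (P {ω | ∀ j, U i ω j ≤ u j}).toReal := by
  rw [ind_eq_indicator, integral_indicator_const _ (measurableSet_event hU i u)]
  simp [Measure.real]

lemma ind_mul_ind (U : ℤ → Ω → Fin d → ℝ) (i k : ℤ) (u v : Fin d → ℝ) (ω : Ω) :
    ind U i u ω * ind U k v ω =
      ({ω | ∀ j, U i ω j ≤ u j} ∩ {ω | ∀ j, U k ω j ≤ v j}).indicator (fun _ => (1 : ℝ)) ω := by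
  simp only [ind_eq_indicator, mul_one,
    ← Set.inter_indicator_mul (fun _ => (1 : ℝ)) (fun _ => (1 : ℝ)) ω]

lemma integral_ind_mul_ind (P : Measure Ω) {U : ℤ → Ω → Fin d → ℝ} (hU : ∀ i, Measurable (U i))
    (i k : ℤ) (u v : Fin d → ℝ) : ∫ ω, ind U i u ω * ind U k v ω ∂P =
      (P ({ω | ∀ j, U i ω j ≤ u j} ∩ {ω | ∀ j, U k ω j ≤ v j})).toReal := by
  simp_rw [ind_mul_ind]
  rw [integral_indicator_const _ ((measurableSet_event hU i u).inter (measurableSet_event hU k v))]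
  simp [Measure.real]

lemma abs_prob_sub_le_one (P : Measure Ω) [IsProbabilityMeasure P] (A B : Set Ω) :
    |(P (A ∩ B)).toReal - (P A).toReal * (P B).toReal| ≤ 1 := by
  have h0 : ∀ S : Set Ω, 0 ≤ (P S).toReal ∧ (P S).toReal ≤ 1 := fun S =>
    ⟨ENNReal.toReal_nonneg, measureReal_le_one⟩
  have h1 := h0 (A ∩ B)
  have h2 : 0 ≤ (P A).toReal * (P B).toReal := mul_nonneg (h0 A).1 (h0 B).1
  have h3 : (P A).toReal * (P B).toReal ≤ 1 := mul_le_one₀ (h0 A).2 (h0 B).1 (h0 B).2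
  rw [abs_le]
  constructor <;> linarith

lemma le_alphaMix {β : Type*} [MeasurableSpace β] (P : Measure Ω) [IsProbabilityMeasure P]
    (Y : ℤ → Ω → β) (r : ℕ) (p : ℤ) (A B : Set Ω) (hA : MeasurableSet[sigmaLE Y p] A)
    (hB : MeasurableSet[sigmaGE Y (p + r)] B) :
    |(P (A ∩ B)).toReal - (P A).toReal * (P B).toReal| ≤ alphaMix P Y r := by
  refine le_csSup ⟨1, ?_⟩ ⟨p, A, B, hA, hB, rfl⟩
  rintro x ⟨p, A, B, -, -, rfl⟩
  exact abs_prob_sub_le_one P A B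

lemma measurableSet_sigmaLE (U : ℤ → Ω → Fin d → ℝ) {i p : ℤ} (h : i ≤ p) (u : Fin d → ℝ) :
    MeasurableSet[sigmaLE U p] {ω | ∀ j, U i ω j ≤ u j} := by
  have : MeasurableSpace.comap (U i) inferInstance ≤ sigmaLE U p :=
    le_iSup₂_of_le (f := fun (i : ℤ) (_ : i ∈ {i : ℤ | i ≤ p}) =>
      MeasurableSpace.comap (U i) inferInstance) i h le_rfl
  exact this _ ⟨_, measurableSet_orthant u, rfl⟩

lemma measurableSet_sigmaGE (U : ℤ → Ω → Fin d → ℝ) {i p : ℤ} (h : p ≤ i) (u : Fin d → ℝ) :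
    MeasurableSet[sigmaGE U p] {ω | ∀ j, U i ω j ≤ u j} := by
  have : MeasurableSpace.comap (U i) inferInstance ≤ sigmaGE U p :=
    le_iSup₂_of_le (f := fun (i : ℤ) (_ : i ∈ {i : ℤ | p ≤ i}) =>
      MeasurableSpace.comap (U i) inferInstance) i h le_rfl
  exact this _ ⟨_, measurableSet_orthant u, rfl⟩

/-- The majorant of `|γ(k, u, v)|`, uniform in `u, v`, that the mixing rate provides. -/
noncomputable def gamBound (Ca a : ℝ) (k : ℤ) : ℝ :=
  if k = 0 then 1 else Ca * |(k : ℝ)| ^ (-a)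

lemma abs_gam_le (P : Measure Ω) [IsProbabilityMeasure P] {U : ℤ → Ω → Fin d → ℝ}
    (hU : ∀ i, Measurable (U i)) {a Ca : ℝ}
    (hmix : ∀ r : ℕ, 1 ≤ r → alphaMix P U r ≤ Ca * (r : ℝ) ^ (-a)) (k : ℤ) (u v : Fin d → ℝ) :
    |gam P U k u v| ≤ gamBound Ca a k := by
  have hg : gam P U k u v = (P ({ω | ∀ j, U 0 ω j ≤ u j} ∩ {ω | ∀ j, U k ω j ≤ v j})).toReal
      - (P {ω | ∀ j, U 0 ω j ≤ u j}).toReal * (P {ω | ∀ j, U k ω j ≤ v j}).toReal := by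
    rw [gam, integral_ind_mul_ind P hU, integral_ind P hU, integral_ind P hU]
  unfold gamBound
  split_ifs with hk
  · rw [hg]
    exact abs_prob_sub_le_one P _ _
  · have hr := hmix k.natAbs (by omega)
    rw [Nat.cast_natAbs, Int.cast_abs] at hr
    refine le_trans ?_ hr
    rw [hg]
    rcases le_total 0 k with h | h
    · exact le_alphaMix P U _ 0 _ _ (measurableSet_sigmaLE U le_rfl u)
        (measurableSet_sigmaGE U (by omega) v)
    -- For `k < 0` the event at time `k` is the past one and the event at time `0` the future one.
    · rw [Set.inter_comm, mul_comm]
      exact le_alphaMix P U _ k _ _ (measurableSet_sigmaLE U le_rfl v)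
        (measurableSet_sigmaGE U (by omega) u)

lemma gamBound_summable {a : ℝ} (ha : 3 < a) (Ca : ℝ) : Summable (gamBound Ca a) := by
  have h := (Real.summable_abs_int_rpow (b := a) (by linarith)).mul_left Ca
  refine h.congr_cofinite ?_
  filter_upwards [(Set.finite_singleton (0 : ℤ)).compl_mem_cofinite] with k hk
  have : k ≠ 0 := hk
  simp [gamBound, this]

lemma sq_mul_gamBound_summable {a : ℝ} (ha : 3 < a) (Ca : ℝ) :
    Summable (fun k : ℤ => (k : ℝ) ^ 2 * gamBound Ca a k) := by
  have h := (Real.summable_abs_int_rpow (b := a - 2) (by linarith)).mul_left Ca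
  refine h.congr_cofinite ?_
  filter_upwards [(Set.finite_singleton (0 : ℤ)).compl_mem_cofinite] with k hk
  have hk : k ≠ 0 := hk
  have hpos : 0 < |(k : ℝ)| := by positivity
  have : |(k : ℝ)| ^ (-(a - 2)) = |(k : ℝ)| ^ (-a) * (k : ℝ) ^ 2 := by
    rw [← sq_abs (k : ℝ), ← Real.rpow_natCast, ← Real.rpow_add hpos]
    congr 1
    push_cast
    ring
  simp only [gamBound, hk, if_false, this]
  ring

/-- Expectations of functionals of the whole path are invariant under time shifts. -/
lemma integral_shift (P : Measure Ω) {U : ℤ → Ω → Fin d → ℝ} (hU : ∀ i, Measurable (U i))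
    (hstat : Stationary P U) {F : (ℤ → Fin d → ℝ) → ℝ} (hF : Measurable F) (k : ℤ) :
    ∫ ω, F (fun i => U (i + k) ω) ∂P = ∫ ω, F (fun i => U i ω) ∂P := by
  have h1 := integral_map (μ := P) (φ := fun ω (i : ℤ) => U (i + k) ω) (f := F)
    (measurable_pi_lambda _ fun i => hU (i + k)).aemeasurable hF.aestronglyMeasurable
  have h2 := integral_map (μ := P) (φ := fun ω (i : ℤ) => U i ω) (f := F)
    (measurable_pi_lambda _ fun i => hU i).aemeasurable hF.aestronglyMeasurable
  rw [← h1, ← h2, hstat k]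

lemma integrable_of_ind (P : Measure Ω) [IsProbabilityMeasure P] {U : ℤ → Ω → Fin d → ℝ}
    (hU : ∀ i, Measurable (U i)) (i j : ℤ) (u v : Fin d → ℝ) :
    Integrable (ind U i u) P ∧ Integrable (fun ω => ind U i u ω * ind U j v ω) P := by
  constructor
  · rw [ind_eq_indicator]
    exact (integrable_const _).indicator (measurableSet_event hU i u)
  · simp_rw [ind_mul_ind]
    exact (integrable_const _).indicator
      ((measurableSet_event hU i u).inter (measurableSet_event hU j v))

lemma integrable_centered_mul (P : Measure Ω) [IsProbabilityMeasure P] {U : ℤ → Ω → Fin d → ℝ}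
    (hU : ∀ i, Measurable (U i)) (i j : ℤ) (u v : Fin d → ℝ) (b c : ℝ) :
    Integrable (fun ω => (ind U i u ω - b) * (ind U j v ω - c)) P := by
  have h1 := integrable_of_ind P hU i j u v
  have h2 := integrable_of_ind P hU j i v u
  have : (fun ω => (ind U i u ω - b) * (ind U j v ω - c)) = fun ω =>
      ind U i u ω * ind U j v ω - c * ind U i u ω - b * ind U j v ω + b * c := by
    funext ω
    ring
  rw [this]
  exact ((h1.2.sub (h1.1.const_mul c)).sub (h2.1.const_mul b)).add (integrable_const _)

lemma integral_centered_mul (P : Measure Ω) [IsProbabilityMeasure P] {U : ℤ → Ω → Fin d → ℝ}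
    (hU : ∀ i, Measurable (U i)) (hstat : Stationary P U) (i j : ℤ) (u v : Fin d → ℝ) :
    ∫ ω, (ind U i u ω - cdfC P U u) * (ind U j v ω - cdfC P U v) ∂P = gam P U (j - i) u v := by
  have hid : ∀ k : ℤ, Measurable fun x : ℤ → Fin d → ℝ => x k := fun k => measurable_pi_apply k
  -- The indicator of a coordinate of the canonical process.
  have hI : ∀ (k : ℤ) (w : Fin d → ℝ), Measurable
      fun x : ℤ → Fin d → ℝ => ind (fun i (x : ℤ → Fin d → ℝ) => x i) k w x :=
    fun k w => measurable_ind hid k w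
  have hmean : ∀ (k : ℤ) (w : Fin d → ℝ), ∫ ω, ind U k w ω ∂P = cdfC P U w := by
    intro k w
    have h := integral_shift P hU hstat (hI 0 w) k
    rw [cdfC, ← integral_ind P hU 0 w]
    simpa [ind] using h
  have hprod : ∫ ω, ind U i u ω * ind U j v ω ∂P = ∫ ω, ind U 0 u ω * ind U (j - i) v ω ∂P := by
    have h := integral_shift P hU hstat ((hI 0 u).mul (hI (j - i) v)) i
    simpa [ind] using h
  have h1 := integrable_of_ind P hU i j u v
  have h2 := integrable_of_ind P hU j i v u
  have : (fun ω => (ind U i u ω - cdfC P U u) * (ind U j v ω - cdfC P U v)) = fun ω =>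
      ind U i u ω * ind U j v ω - cdfC P U v * ind U i u ω - cdfC P U u * ind U j v ω
        + cdfC P U u * cdfC P U v := by
    funext ω
    ring
  have e1 : Integrable (fun ω => ind U i u ω * ind U j v ω - cdfC P U v * ind U i u ω) P :=
    h1.2.sub (h1.1.const_mul _)
  have e2 : Integrable (fun ω => ind U i u ω * ind U j v ω - cdfC P U v * ind U i u ω
      - cdfC P U u * ind U j v ω) P := e1.sub (h2.1.const_mul _)
  rw [this, integral_add e2 (integrable_const _), integral_sub e1 (h2.1.const_mul _),
    integral_sub h1.2 (h1.1.const_mul _), integral_const_mul, integral_const_mul, hmean, hmean,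
    hprod, gam, hmean, hmean]
  simp
  ring

/-! ### The expectation as a weighted series of covariances -/

/-- The number of pairs `(i, i + k)` with both entries in `{1, …, n}`, that is `(n - |k|)⁺`. -/
noncomputable def lagCount (n : ℕ) (k : ℤ) : ℕ :=
  ((Finset.Icc (1 : ℤ) n).filter fun i => i + k ∈ Finset.Icc (1 : ℤ) n).card

lemma lagCount_le (n : ℕ) (k : ℤ) : lagCount n k ≤ n := by
  refine (Finset.card_filter_le _ _).trans ?_
  simp

lemma sub_abs_le_lagCount (n : ℕ) (k : ℤ) : (n : ℤ) - |k| ≤ lagCount n k := by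
  have : (Finset.Icc (1 : ℤ) n).filter (fun i => i + k ∈ Finset.Icc (1 : ℤ) n)
      = Finset.Icc (max 1 (1 - k)) (min (n : ℤ) (n - k)) := by
    ext i
    simp only [Finset.mem_filter, Finset.mem_Icc]
    omega
  rw [lagCount, this, Int.card_Icc]
  rcases abs_cases k with h | h <;> omega

lemma lagCount_eq_zero {n : ℕ} {k : ℤ} (hk : k ∉ Finset.Icc (-(n : ℤ)) n) :
    lagCount n k = 0 := by
  rw [lagCount, Finset.card_eq_zero]
  ext i
  simp only [Finset.mem_filter, Finset.mem_Icc, Finset.notMem_empty, iff_false] at hk ⊢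
  omega

lemma sum_sum_eq_lagCount (n : ℕ) (h : ℤ → ℝ) :
    ∑ i ∈ Finset.Icc (1 : ℤ) n, ∑ j ∈ Finset.Icc (1 : ℤ) n, h (j - i)
      = ∑ k ∈ Finset.Icc (-(n : ℤ)) n, (lagCount n k : ℝ) * h k := by
  have h1 : ∀ i ∈ Finset.Icc (1 : ℤ) n, ∑ j ∈ Finset.Icc (1 : ℤ) n, h (j - i)
      = ∑ k ∈ Finset.Icc (-(n : ℤ)) n, if i + k ∈ Finset.Icc (1 : ℤ) n then h k else 0 := by
    intro i hi
    rw [← Finset.sum_filter]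
    refine Finset.sum_nbij' (fun j => j - i) (fun k => i + k) ?_ ?_ ?_ ?_ ?_
    all_goals
      intro j hj
      simp only [Finset.mem_filter, Finset.mem_Icc] at hi hj ⊢
    any_goals omega
  rw [Finset.sum_congr rfl h1, Finset.sum_comm]
  refine Finset.sum_congr rfl fun k _ => ?_
  rw [← Finset.sum_filter, Finset.sum_const, nsmul_eq_mul, lagCount]

lemma integral_sigTilde (P : Measure Ω) [IsProbabilityMeasure P] {U : ℤ → Ω → Fin d → ℝ}
    (hU : ∀ i, Measurable (U i)) (hstat : Stationary P U) {φ : ℝ → ℝ}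
    (hφsymm : ∀ x, φ (-x) = φ x) (ℓ : ℕ → ℝ) (n : ℕ) (u v : Fin d → ℝ) :
    ∫ ω, sigTilde P U φ ℓ n u v ω ∂P
      = ∑' k : ℤ, ((lagCount n k : ℝ) / n * φ (k / ℓ n)) * gam P U k u v := by
  unfold sigTilde
  rw [integral_const_mul, integral_finsetSum _ fun i _ => integrable_finsetSum _ fun j _ =>
    (integrable_centered_mul P hU i j u v _ _).const_mul _]
  have h1 : ∀ i ∈ Finset.Icc (1 : ℤ) n,
      ∫ ω, ∑ j ∈ Finset.Icc (1 : ℤ) n, φ (((i : ℝ) - (j : ℝ)) / ℓ n) *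
        ((ind U i u ω - cdfC P U u) * (ind U j v ω - cdfC P U v)) ∂P
      = ∑ j ∈ Finset.Icc (1 : ℤ) n,
        (fun k : ℤ => φ (k / ℓ n) * gam P U k u v) (j - i) := by
    intro i _
    rw [integral_finsetSum _ fun j _ => (integrable_centered_mul P hU i j u v _ _).const_mul _]
    refine Finset.sum_congr rfl fun j _ => ?_
    rw [integral_const_mul, integral_centered_mul P hU hstat, ← hφsymm]
    congr 2
    push_cast
    ring
  rw [Finset.sum_congr rfl h1,
    sum_sum_eq_lagCount n fun k : ℤ => φ (k / ℓ n) * gam P U k u v, tsum_eq_sum (s := Finset.Icc (-(n : ℤ)) n),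
    Finset.mul_sum]
  · refine Finset.sum_congr rfl fun k _ => ?_
    ring
  · intro k hk
    simp [lagCount_eq_zero hk]

/-! ### The kernel near the origin -/

/-- Second-order expansion at `0`; the linear term vanishes because `φ` is even. -/
lemma kernel_isLittleO {φ : ℝ → ℝ} (hφsymm : ∀ x, φ (-x) = φ x) (hφ0 : φ 0 = 1)
    (hφC2 : ContDiffOn ℝ 2 φ (Icc (-1 : ℝ) 1)) :
    (fun x => φ x - 1 - iteratedDerivWithin 2 φ (Icc (-1 : ℝ) 1) 0 / 2 * x ^ 2)
      =o[nhds 0] fun x : ℝ => x ^ 2 := by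
  have hnhds : Icc (-1 : ℝ) 1 ∈ nhds (0 : ℝ) := Icc_mem_nhds (by norm_num) (by norm_num)
  have h := taylor_isLittleO (x₀ := 0) (n := 2) (convex_Icc (-1 : ℝ) 1) (by norm_num)
    (by exact_mod_cast hφC2)
  rw [nhdsWithin_eq_nhds.2 hnhds] at h
  have hd : derivWithin φ (Icc (-1 : ℝ) 1) 0 = 0 := by
    rw [derivWithin_of_mem_nhds hnhds]
    have h2 : deriv (fun x => φ (-x)) 0 = -deriv φ (-0) := deriv_comp_neg φ 0
    simp only [hφsymm, neg_zero] at h2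
    change deriv φ 0 = -deriv φ 0 at h2
    linarith
  refine h.congr (fun x => ?_) (fun x => by simp)
  rw [taylorWithinEval_succ, taylorWithinEval_succ, taylor_within_zero_eval]
  simp [iteratedDerivWithin_one, hd, hφ0]
  ring

lemma kernel_global_bound {φ : ℝ → ℝ} (hφrange : ∀ x, φ x ∈ Icc (0 : ℝ) 1) {c : ℝ}
    (h : (fun x => φ x - 1 - c * x ^ 2) =o[nhds 0] fun x : ℝ => x ^ 2) :
    ∃ K : ℝ, 0 ≤ K ∧ ∀ x, |φ x - 1| ≤ K * x ^ 2 := by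
  obtain ⟨δ, hδ, hb⟩ := Metric.eventually_nhds_iff.1 (h.bound one_pos)
  refine ⟨max (1 + |c|) (1 / δ ^ 2), by positivity, fun x => ?_⟩
  rcases lt_or_ge |x| δ with hx | hx
  · have h1 := hb (y := x) (by simpa [Real.dist_eq] using hx)
    simp only [Real.norm_eq_abs, one_mul, abs_of_nonneg (sq_nonneg x)] at h1
    have h2 : |φ x - 1| ≤ |φ x - 1 - c * x ^ 2| + |c * x ^ 2| := by
      have h3 := abs_add_le (φ x - 1 - c * x ^ 2) (c * x ^ 2)
      rwa [sub_add_cancel] at h3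
    rw [abs_mul, abs_of_nonneg (sq_nonneg x)] at h2
    calc |φ x - 1| ≤ (1 + |c|) * x ^ 2 := by linarith
      _ ≤ _ := by gcongr; exact le_max_left _ _
  · have h1 : |φ x - 1| ≤ 1 := by
      have := hφrange x
      rw [abs_le]
      constructor <;> linarith [this.1, this.2]
    have h2 : δ ^ 2 ≤ x ^ 2 := by
      rw [← sq_abs x]
      gcongr
    calc |φ x - 1| ≤ 1 := h1
      _ ≤ 1 / δ ^ 2 * x ^ 2 := by
        rw [one_div, inv_mul_eq_div, le_div_iff₀ (by positivity)]
        linarith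
      _ ≤ _ := by gcongr; exact le_max_right _ _

lemma kernel_scaled_tendsto {φ : ℝ → ℝ} {c : ℝ}
    (h : (fun x => φ x - 1 - c * x ^ 2) =o[nhds 0] fun x : ℝ => x ^ 2)
    {ℓ : ℕ → ℝ} (hℓpos : ∀ n, 0 < ℓ n) (hℓtop : Tendsto ℓ atTop atTop) (y : ℝ) :
    Tendsto (fun n => ℓ n ^ 2 * (φ (y / ℓ n) - 1) - c * y ^ 2) atTop (nhds 0) := by
  have hlim : Tendsto (fun n => y / ℓ n) atTop (nhds 0) := hℓtop.const_div_atTop y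
  have h1 := (h.comp_tendsto hlim)
  have h2 : (fun n => ℓ n ^ 2 * (φ (y / ℓ n) - 1 - c * (y / ℓ n) ^ 2)) =o[atTop]
      fun n => ℓ n ^ 2 * (y / ℓ n) ^ 2 :=
    (Asymptotics.isBigO_refl (fun n => ℓ n ^ 2) atTop).mul_isLittleO h1
  have h3 : (fun n => ℓ n ^ 2 * (y / ℓ n) ^ 2) = fun _ => y ^ 2 := by
    funext n
    have := (hℓpos n).ne'
    field_simp
  rw [h3] at h2
  have h4 := h2.trans_isBigO (Asymptotics.isBigO_const_const (y ^ 2) (one_ne_zero (α := ℝ)) atTop)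
  rw [Asymptotics.isLittleO_one_iff] at h4
  refine h4.congr fun n => ?_
  have := (hℓpos n).ne'
  field_simp

/-! ### Dominated convergence -/

lemma sq_div_tendsto_zero {ℓ : ℕ → ℝ} (hℓpos : ∀ n, 0 < ℓ n) {ε : ℝ} (hε : 0 < ε) {Cl : ℝ}
    (hℓbd : ∀ n : ℕ, 1 ≤ n → ℓ n ≤ Cl * (n : ℝ) ^ ((1 : ℝ) / 2 - ε)) :
    Tendsto (fun n : ℕ => ℓ n ^ 2 / n) atTop (nhds 0) := by
  have h1 : Tendsto (fun n : ℕ => Cl ^ 2 * (n : ℝ) ^ (-(2 * ε))) atTop (nhds 0) := by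
    simpa using ((tendsto_rpow_neg_atTop (y := 2 * ε) (by positivity)).comp
      tendsto_natCast_atTop_atTop).const_mul (Cl ^ 2)
  refine squeeze_zero' (Eventually.of_forall fun n => by positivity) ?_ h1
  filter_upwards [eventually_ge_atTop 1] with n hn
  have hn0 : (0 : ℝ) < n := by exact_mod_cast hn
  have h2 : ℓ n ^ 2 ≤ (Cl * (n : ℝ) ^ ((1 : ℝ) / 2 - ε)) ^ 2 := by
    have := hℓbd n hn
    have := hℓpos n
    gcongr
  have h3 : (n : ℝ) ^ (-(2 * ε)) * n = ((n : ℝ) ^ ((1 : ℝ) / 2 - ε)) ^ 2 := by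
    rw [← Real.rpow_natCast, ← Real.rpow_mul hn0.le]
    nth_rewrite 2 [← Real.rpow_one (n : ℝ)]
    rw [← Real.rpow_add hn0]
    congr 1
    push_cast
    ring
  rw [div_le_iff₀ hn0, mul_assoc, h3, ← mul_pow]
  exact h2

/-- The rescaled deviation, at lag `k`, of the weight of `γ(k)` in `E[σ̃_n]` from its second-order
approximation `1 + c k² / ℓ_n²`. -/
noncomputable def weightErr (φ : ℝ → ℝ) (c : ℝ) (ℓ : ℕ → ℝ) (n : ℕ) (k : ℤ) : ℝ :=
  ℓ n ^ 2 * ((lagCount n k : ℝ) / n * φ (k / ℓ n) - 1) - c * (k : ℝ) ^ 2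

/-- Replacing the triangular weight `(n - |k|)⁺ / n` by `1` costs at most `(ℓ_n² / n) |k|`. -/
lemma abs_weightErr_le {φ : ℝ → ℝ} (hφrange : ∀ x, φ x ∈ Icc (0 : ℝ) 1) (c : ℝ) (ℓ : ℕ → ℝ)
    {n : ℕ} (hn : 1 ≤ n) (k : ℤ) :
    |weightErr φ c ℓ n k| ≤ ℓ n ^ 2 / n * |(k : ℝ)|
      + |ℓ n ^ 2 * (φ (k / ℓ n) - 1) - c * (k : ℝ) ^ 2| := by
  have hn0 : (0 : ℝ) < n := by exact_mod_cast hn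
  have h1 : (lagCount n k : ℝ) ≤ n := by exact_mod_cast lagCount_le n k
  have h2 : (n : ℝ) - |(k : ℝ)| ≤ lagCount n k := by exact_mod_cast sub_abs_le_lagCount n k
  have hφ := hφrange (k / ℓ n)
  have heq : weightErr φ c ℓ n k = ℓ n ^ 2 / n * (((lagCount n k : ℝ) - n) * φ (k / ℓ n))
      + (ℓ n ^ 2 * (φ (k / ℓ n) - 1) - c * (k : ℝ) ^ 2) := by
    unfold weightErr
    field_simp
    ring
  rw [heq]
  refine (abs_add_le _ _).trans ?_
  gcongr
  rw [abs_mul, abs_of_nonneg (by positivity : 0 ≤ ℓ n ^ 2 / n), abs_mul, abs_of_nonneg hφ.1]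
  gcongr
  calc |(lagCount n k : ℝ) - n| * φ (k / ℓ n) ≤ |(lagCount n k : ℝ) - n| * 1 := by
        gcongr
        exact hφ.2
    _ ≤ |(k : ℝ)| := by
        rw [mul_one, abs_le]
        constructor <;> linarith [abs_nonneg (k : ℝ)]

lemma tsum_weightErr_tendsto {φ : ℝ → ℝ} (hφrange : ∀ x, φ x ∈ Icc (0 : ℝ) 1) {c : ℝ}
    (h : (fun x => φ x - 1 - c * x ^ 2) =o[nhds 0] fun x : ℝ => x ^ 2)
    {ℓ : ℕ → ℝ} (hℓpos : ∀ n, 0 < ℓ n) (hℓtop : Tendsto ℓ atTop atTop)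
    (hℓn : Tendsto (fun n : ℕ => ℓ n ^ 2 / n) atTop (nhds 0))
    {b : ℤ → ℝ} (hb0 : ∀ k, 0 ≤ b k) (hb : Summable fun k : ℤ => (k : ℝ) ^ 2 * b k) :
    (∀ᶠ n in atTop, Summable fun k => |weightErr φ c ℓ n k| * b k) ∧
    Tendsto (fun n => ∑' k, |weightErr φ c ℓ n k| * b k) atTop (nhds 0) := by
  obtain ⟨K, hK0, hK⟩ := kernel_global_bound hφrange h
  have hbound : ∀ᶠ n in atTop, ∀ k,
      ‖|weightErr φ c ℓ n k| * b k‖ ≤ (1 + K + |c|) * ((k : ℝ) ^ 2 * b k) := by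
    filter_upwards [eventually_ge_atTop 1, hℓn.eventually_le_const one_pos] with n hn hn1 k
    rw [norm_mul, Real.norm_eq_abs, Real.norm_eq_abs, abs_abs, abs_of_nonneg (hb0 k), ← mul_assoc]
    refine mul_le_mul_of_nonneg_right ?_ (hb0 k)
    refine (abs_weightErr_le hφrange c ℓ hn k).trans ?_
    have h1 : |(k : ℝ)| ≤ (k : ℝ) ^ 2 := by
      have : |k| ≤ k ^ 2 := by
        rw [← sq_abs k]
        exact Int.le_self_sq _
      exact_mod_cast this
    have h2 : ℓ n ^ 2 / n * |(k : ℝ)| ≤ 1 * (k : ℝ) ^ 2 := by gcongr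
    have h3 : |ℓ n ^ 2 * (φ (k / ℓ n) - 1)| ≤ K * (k : ℝ) ^ 2 := by
      rw [abs_mul, abs_of_nonneg (sq_nonneg _)]
      calc ℓ n ^ 2 * |φ (k / ℓ n) - 1| ≤ ℓ n ^ 2 * (K * (k / ℓ n) ^ 2) := by
            gcongr
            exact hK _
        _ = K * (k : ℝ) ^ 2 := by
            have := (hℓpos n).ne'
            field_simp
    have h4 := abs_sub (ℓ n ^ 2 * (φ (k / ℓ n) - 1)) (c * (k : ℝ) ^ 2)
    rw [abs_mul c, abs_of_nonneg (sq_nonneg (k : ℝ))] at h4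
    linarith
  have hsum := hb.mul_left (1 + K + |c|)
  refine ⟨hbound.mono fun n hn => Summable.of_norm_bounded hsum hn, ?_⟩
  have := tendsto_tsum_of_dominated_convergence (g := fun _ : ℤ => (0 : ℝ)) hsum (fun k => ?_) hbound
  · simpa using this
  · have h1 : Tendsto (fun n : ℕ => ℓ n ^ 2 / n * |(k : ℝ)|
        + |ℓ n ^ 2 * (φ (k / ℓ n) - 1) - c * (k : ℝ) ^ 2|) atTop (nhds 0) := by
      simpa using (hℓn.mul_const |(k : ℝ)|).add (kernel_scaled_tendsto h hℓpos hℓtop k).abs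
    have h2 : Tendsto (fun n : ℕ => |weightErr φ c ℓ n k|) atTop (nhds 0) :=
      squeeze_zero' (Eventually.of_forall fun n => abs_nonneg _)
        ((eventually_ge_atTop 1).mono fun n hn => abs_weightErr_le hφrange c ℓ hn k) h1
    simpa using h2.mul_const (b k)

/-- `ℓ_n²` times the bias error is the series of `weightErr` against the covariances `g`, hence
bounded by the series of `|weightErr|` against any majorant `b` of `|g|` for which all series
involved converge. -/
lemma scaled_error_le {φ : ℝ → ℝ} (hφrange : ∀ x, φ x ∈ Icc (0 : ℝ) 1) (c : ℝ) {ℓ : ℕ → ℝ}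
    {n : ℕ} (hℓn : 0 < ℓ n) {g b : ℤ → ℝ} (hg : ∀ k, |g k| ≤ b k) (hb : Summable b)
    (hb2 : Summable fun k : ℤ => (k : ℝ) ^ 2 * b k)
    (hw : Summable fun k => |weightErr φ c ℓ n k| * b k) :
    |∑' k : ℤ, ((lagCount n k : ℝ) / n * φ (k / ℓ n)) * g k - ∑' k, g k
      - c * (∑' k : ℤ, (k : ℝ) ^ 2 * g k) / ℓ n ^ 2|
      ≤ (∑' k, |weightErr φ c ℓ n k| * b k) / ℓ n ^ 2 := by
  have hs1 : Summable g := Summable.of_norm_bounded hb hg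
  have hs2 : Summable fun k : ℤ => (k : ℝ) ^ 2 * g k := by
    refine Summable.of_norm_bounded hb2 fun k => ?_
    rw [Real.norm_eq_abs, abs_mul, abs_of_nonneg (sq_nonneg _)]
    gcongr
    exact hg k
  have hs0 : Summable fun k : ℤ => ((lagCount n k : ℝ) / n * φ (k / ℓ n)) * g k := by
    refine Summable.of_norm_bounded hb fun k => ?_
    have h1 : (lagCount n k : ℝ) / n ≤ 1 :=
      div_le_one_of_le₀ (by exact_mod_cast lagCount_le n k) (Nat.cast_nonneg _)
    have hφ := hφrange (k / ℓ n)
    have h2 : 0 ≤ (lagCount n k : ℝ) / n * φ (k / ℓ n) := mul_nonneg (by positivity) hφ.1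
    have h3 : (lagCount n k : ℝ) / n * φ (k / ℓ n) ≤ 1 := mul_le_one₀ h1 hφ.1 hφ.2
    rw [Real.norm_eq_abs, abs_mul, abs_of_nonneg h2]
    exact (mul_le_of_le_one_left (abs_nonneg _) h3).trans (hg k)
  have heq : ∑' k : ℤ, ((lagCount n k : ℝ) / n * φ (k / ℓ n)) * g k - ∑' k, g k
      - c * (∑' k : ℤ, (k : ℝ) ^ 2 * g k) / ℓ n ^ 2
      = (∑' k, weightErr φ c ℓ n k * g k) / ℓ n ^ 2 := by
    rw [← tsum_mul_left, ← tsum_div_const, ← tsum_div_const, ← hs0.tsum_sub hs1,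
      ← (hs0.sub hs1).tsum_sub ((hs2.mul_left c).div_const _)]
    refine tsum_congr fun k => ?_
    unfold weightErr
    have := hℓn.ne'
    field_simp
  rw [heq, abs_div, abs_of_nonneg (sq_nonneg (ℓ n))]
  gcongr
  rw [← Real.norm_eq_abs]
  refine tsum_of_norm_bounded hw.hasSum fun k => ?_
  rw [Real.norm_eq_abs, abs_mul]
  gcongr
  exact hg k

/-- Proposition: bias of `σ̃_n`. Under strong mixing with
`α_r = O(r^{−a})`, `a > 3`, `ℓ_n → ∞` with `ℓ_n = O(n^{1/2−ε})`, and a twice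
continuously differentiable multiplier covariance kernel `φ` with `φ''(0) ≠ 0`,
`E[σ̃_n(u,v)] − σ_C(u,v) = Γ(u,v)/ℓ_n² + o(ℓ_n^{−2})` uniformly in `u, v`. -/
theorem sigTilde_bias_expansion
    (P : Measure Ω) [IsProbabilityMeasure P] (hd : 1 ≤ d)
    (U : ℤ → Ω → Fin d → ℝ) (hUmeas : ∀ i, Measurable (U i))
    (hUrange : ∀ i ω j, U i ω j ∈ Icc (0 : ℝ) 1)
    (hstat : Stationary P U)
    (a : ℝ) (ha : 3 < a) (Ca : ℝ)
    (hmix : ∀ r : ℕ, 1 ≤ r → alphaMix P U r ≤ Ca * (r : ℝ) ^ (-a))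
    (ℓ : ℕ → ℝ) (hℓpos : ∀ n, 0 < ℓ n) (hℓtop : Tendsto ℓ atTop atTop)
    (ε : ℝ) (hε : ε ∈ Ioo (0 : ℝ) (1 / 2)) (Cl : ℝ)
    (hℓbd : ∀ n : ℕ, 1 ≤ n → ℓ n ≤ Cl * (n : ℝ) ^ ((1 : ℝ) / 2 - ε))
    (φ : ℝ → ℝ) (hφrange : ∀ x, φ x ∈ Icc (0 : ℝ) 1)
    (hφsymm : ∀ x, φ (-x) = φ x) (hφ0 : φ 0 = 1)
    (hφout : ∀ x : ℝ, 1 < |x| → φ x = 0)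
    (hφC2 : ContDiffOn ℝ 2 φ (Icc (-1 : ℝ) 1))
    (hφ'' : iteratedDerivWithin 2 φ (Icc (-1 : ℝ) 1) 0 ≠ 0) :
    Tendsto
      (fun n : ℕ => (ℓ n) ^ 2 *
        sSup {x : ℝ | ∃ u v : Fin d → ℝ,
          (∀ j, u j ∈ Icc (0 : ℝ) 1) ∧ (∀ j, v j ∈ Icc (0 : ℝ) 1) ∧
          x = |(∫ ω, sigTilde P U φ ℓ n u v ω ∂P) - sigC P U u v
                - Gam P U φ u v / (ℓ n) ^ 2|})
      atTop (nhds 0) := by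
  have hlo := kernel_isLittleO hφsymm hφ0 hφC2
  have hb := fun k => abs_gam_le P hUmeas hmix k
  have hb0 : ∀ k, 0 ≤ gamBound Ca a k := fun k => (abs_nonneg _).trans (hb k 0 0)
  obtain ⟨hsum, hlim⟩ := tsum_weightErr_tendsto hφrange hlo hℓpos hℓtop
    (sq_div_tendsto_zero hℓpos hε.1 hℓbd) hb0 (sq_mul_gamBound_summable ha Ca)
  refine squeeze_zero' (Eventually.of_forall fun n => ?_) ?_ hlim
  · refine mul_nonneg (sq_nonneg _) (Real.sSup_nonneg ?_)
    rintro x ⟨u, v, -, -, rfl⟩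
    exact abs_nonneg _
  · filter_upwards [hsum] with n hn
    have hℓ2 : 0 < ℓ n ^ 2 := pow_pos (hℓpos n) 2
    rw [mul_comm, ← le_div_iff₀ hℓ2]
    refine Real.sSup_le ?_ (div_nonneg (tsum_nonneg fun k => mul_nonneg (abs_nonneg _) (hb0 k))
      hℓ2.le)
    rintro x ⟨u, v, -, -, rfl⟩
    rw [integral_sigTilde P hUmeas hstat hφsymm, sigC, Gam]
    exact scaled_error_le hφrange _ (hℓpos n) (fun k => hb k u v) (gamBound_summable ha Ca)
      (sq_mul_gamBound_summable ha Ca) hn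

end Stmt1
end

section
/- Let (U_i)_{i∈ℤ} be a strictly stationary sequence of [0,1]^d-valued random vectors with common c.d.f. C whose strong mixing coefficients satisfy α_r = O(r^{−a}) for some a > 3; let ℓ_n be a sequence of positive reals with ℓ_n → ∞ and ℓ_n = o(n); and let φ:ℝ→[0,1] be symmetric about 0 with φ(0)=1, φ(x)=0 for |x|>1, and Lipschitz on ℝ: |φ(x)−φ(y)| ≤ λ|x−y| for all x,y∈ℝ and some λ > 0. Then Var(σ̃_n(u,v)) = (ℓ_n/n) Δ(u,v) + r_{n,2}(u,v), where Δ(u,v) = (∫_{−1}^{1} φ(x)² dx)·[σ_C(u,u) σ_C(v,v) + σ_C(u,v)²] and sup_{u,v∈[0,1]^d} |r_{n,2}(u,v)| = o(ℓ_n/n) as n → ∞. -/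
/-!
Write `Z_{i,u} = 1(U_i ≤ u) − C(u)`. The variance of `σ̃_n(u,v)` is
`n⁻² Σ_{i,j,k,l} φ((i−j)/ℓ) φ((k−l)/ℓ) Cov(Z_{i,u} Z_{j,v}, Z_{k,u} Z_{l,v})`, and each covariance
is a fourth cumulant plus the two Gaussian pairings
`E[Z_{i,u} Z_{k,u}] E[Z_{j,v} Z_{l,v}] + E[Z_{i,u} Z_{l,v}] E[Z_{j,v} Z_{k,u}]`.

*Cumulants.* The covariance inequality for bounded variables (`cov_le_alphaMix`) shows that a fourth
cumulant is `O((1 + D)^{-a})`, where `D` is the distance between the extreme times: one of the three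
gaps between consecutive times is at least `D / 3`, and splitting there makes every term small
(`abs_cum4_le_of_sorted`). Since `(1 + D)^{-a}` is at most the product of the factors
`(1 + |j − i|)^{-a/3}`, `(1 + |k − i|)^{-a/3}`, `(1 + |l − i|)^{-a/3}` and `a / 3 > 1`, the cumulants
sum to `O(n)` (`sum_abs_cum4_le`), so they contribute `O(1/n) = o(ℓ/n)`.

*Pairings.* By stationarity, and by evenness of `φ` for the second one, both pairings have the form
`Σ φ((i−j)/ℓ) φ((k−l)/ℓ) g(k−i) h(l−j)` with `|g|, |h|` below one summable envelope. With `p = k − i`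
and `q = l − j`, the sum divided by `n ℓ` equals `Σ_{p,q} g(p) h(q) W_n(p,q)` (`quad_eq_tsum`), where
the weights `W_n(p,q)` are bounded and tend to `∫ φ²` for fixed `p, q`: a Riemann sum, up to edge
effects of order `ℓ/n` and Lipschitz errors of order `1/ℓ`. Dominated convergence for series gives
the limit (`kerErr_tendsto`), and the error depends on `g, h` only through their envelope, which
makes it uniform in `u, v`.
-/

open Set Filter MeasureTheory

namespace Stmt2

variable {Ω : Type*} [MeasurableSpace Ω]

/-- σ-field generated by `(Y i)_{i ≤ p}`. -/
def sigmaLE {β : Type*} [MeasurableSpace β] (Y : ℤ → Ω → β) (p : ℤ) :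
    MeasurableSpace Ω :=
  ⨆ i ∈ {i : ℤ | i ≤ p}, MeasurableSpace.comap (Y i) inferInstance

/-- σ-field generated by `(Y i)_{i ≥ p}`. -/
def sigmaGE {β : Type*} [MeasurableSpace β] (Y : ℤ → Ω → β) (p : ℤ) :
    MeasurableSpace Ω :=
  ⨆ i ∈ {i : ℤ | p ≤ i}, MeasurableSpace.comap (Y i) inferInstance

/-- Strong mixing coefficient `α_r` of the sequence `Y`. -/
noncomputable def alphaMix {β : Type*} [MeasurableSpace β]
    (P : Measure Ω) (Y : ℤ → Ω → β) (r : ℕ) : ℝ :=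
  sSup {x : ℝ | ∃ (p : ℤ) (A B : Set Ω),
    MeasurableSet[sigmaLE Y p] A ∧ MeasurableSet[sigmaGE Y (p + r)] B ∧
    x = |(P (A ∩ B)).toReal - (P A).toReal * (P B).toReal|}

/-- Strict stationarity of a sequence indexed by `ℤ`. -/
def Stationary {β : Type*} [MeasurableSpace β]
    (P : Measure Ω) (Y : ℤ → Ω → β) : Prop :=
  ∀ k : ℤ, Measure.map (fun ω (i : ℤ) => Y (i + k) ω) P
    = Measure.map (fun ω (i : ℤ) => Y i ω) P

variable {d : ℕ}

/-- Indicator `1(U_i ≤ u)` as a real-valued function. -/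
noncomputable def ind (U : ℤ → Ω → Fin d → ℝ) (i : ℤ) (u : Fin d → ℝ)
    (ω : Ω) : ℝ :=
  if ∀ j, U i ω j ≤ u j then 1 else 0

/-- The common c.d.f. `C` of the sequence. -/
noncomputable def cdfC (P : Measure Ω) (U : ℤ → Ω → Fin d → ℝ)
    (u : Fin d → ℝ) : ℝ :=
  (P {ω | ∀ j, U 0 ω j ≤ u j}).toReal

/-- `γ(k,u,v) = Cov(1(U_0 ≤ u), 1(U_k ≤ v))`. -/
noncomputable def gam (P : Measure Ω) (U : ℤ → Ω → Fin d → ℝ) (k : ℤ)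
    (u v : Fin d → ℝ) : ℝ :=
  (∫ ω, ind U 0 u ω * ind U k v ω ∂P)
    - (∫ ω, ind U 0 u ω ∂P) * (∫ ω, ind U k v ω ∂P)

/-- `σ_C(u,v) = Σ_{k∈ℤ} γ(k,u,v)`. -/
noncomputable def sigC (P : Measure Ω) (U : ℤ → Ω → Fin d → ℝ)
    (u v : Fin d → ℝ) : ℝ :=
  ∑' k : ℤ, gam P U k u v

/-- The multiplier-covariance estimator
`σ̃_n(u,v) = n⁻¹ Σ_{i,j=1}^n φ((i−j)/ℓ_n) {1(U_i ≤ u) − C(u)}{1(U_j ≤ v) − C(v)}`. -/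
noncomputable def sigTilde (P : Measure Ω) (U : ℤ → Ω → Fin d → ℝ)
    (φ : ℝ → ℝ) (ℓ : ℕ → ℝ) (n : ℕ) (u v : Fin d → ℝ) (ω : Ω) : ℝ :=
  (n : ℝ)⁻¹ * ∑ i ∈ Finset.Icc (1 : ℤ) (n : ℤ), ∑ j ∈ Finset.Icc (1 : ℤ) (n : ℤ),
    φ (((i : ℝ) - (j : ℝ)) / ℓ n) *
      ((ind U i u ω - cdfC P U u) * (ind U j v ω - cdfC P U v))


/-- `Δ(u,v) = (∫_{−1}^{1} φ(x)² dx)·[σ_C(u,u)σ_C(v,v) + σ_C(u,v)²]`. -/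
noncomputable def DeltaKer (P : Measure Ω) (U : ℤ → Ω → Fin d → ℝ)
    (φ : ℝ → ℝ) (u v : Fin d → ℝ) : ℝ :=
  (∫ x in (-1 : ℝ)..1, φ x ^ 2) *
    (sigC P U u u * sigC P U v v + sigC P U u v ^ 2)

/-- Variance of `σ̃_n(u,v)` under `P`. -/
noncomputable def varSigTilde (P : Measure Ω) (U : ℤ → Ω → Fin d → ℝ)
    (φ : ℝ → ℝ) (ℓ : ℕ → ℝ) (n : ℕ) (u v : Fin d → ℝ) : ℝ :=
  (∫ ω, sigTilde P U φ ℓ n u v ω ^ 2 ∂P)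
    - (∫ ω, sigTilde P U φ ℓ n u v ω ∂P) ^ 2

/-! ### The covariance inequality under strong mixing -/

/-- If `g` is almost uncorrelated with every event of `m`, then it is almost uncorrelated with every
`m`-measurable `f` bounded by `1`: the covariance is at most `E|E[g|m] − E g|`, which is twice the
covariance of `g` with the event `{E[g|m] ≥ E g}`. -/
lemma cov_le_two_mul {Ω : Type*} {m m0 : MeasurableSpace Ω} (P : Measure Ω)
    [IsProbabilityMeasure P] (hm : m ≤ m0) {f g : Ω → ℝ} (hf : StronglyMeasurable[m] f)
    (hf1 : ∀ ω, |f ω| ≤ 1) (hg : Integrable g P) {δ : ℝ}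
    (h : ∀ A, MeasurableSet[m] A → |(∫ ω in A, g ω ∂P) - P.real A * ∫ ω, g ω ∂P| ≤ δ) :
    |(∫ ω, f ω * g ω ∂P) - (∫ ω, f ω ∂P) * ∫ ω, g ω ∂P| ≤ 2 * δ := by
  set c := ∫ ω, g ω ∂P with hc
  set e : Ω → ℝ := fun ω => (P[g|m]) ω - c with he
  have hem : StronglyMeasurable[m] e := stronglyMeasurable_condExp.sub stronglyMeasurable_const
  have hei : Integrable e P := integrable_condExp.sub (integrable_const _)
  have hfi : Integrable f P :=
    Integrable.of_bound (hf.mono hm).aestronglyMeasurable 1 (ae_of_all _ hf1)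
  have hfg : Integrable (f * g) P :=
    hg.bdd_mul (hf.mono hm).aestronglyMeasurable (ae_of_all _ hf1)
  have hfe : Integrable (fun ω => f ω * (P[g|m]) ω) P :=
    integrable_condExp.bdd_mul (hf.mono hm).aestronglyMeasurable (ae_of_all _ hf1)
  have h1 : ∫ ω, f ω * g ω ∂P = ∫ ω, f ω * (P[g|m]) ω ∂P := by
    have := condExp_mul_of_stronglyMeasurable_left hf hfg hg
    rw [← integral_condExp hm (f := fun ω => f ω * g ω)]
    exact integral_congr_ae this
  have h2 : (∫ ω, f ω * g ω ∂P) - (∫ ω, f ω ∂P) * c = ∫ ω, f ω * e ω ∂P := by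
    rw [h1, ← integral_mul_const, ← integral_sub hfe (hfi.mul_const c)]
    simp only [he, mul_sub]
  have hA : MeasurableSet[m] {ω | 0 ≤ e ω} :=
    hem.measurable measurableSet_Ici
  set A := {ω | 0 ≤ e ω} with hAdef
  have h3 : ∫ ω, |e ω| ∂P = 2 * ∫ ω in A, e ω ∂P := by
    have h0 : ∫ ω, e ω ∂P = 0 := by
      rw [integral_sub integrable_condExp (integrable_const _), integral_condExp hm]
      simp [hc]
    have h4 := integral_add_compl (hm _ hA) hei
    rw [← integral_add_compl (hm _ hA) hei.abs]
    have h5 : ∫ ω in A, |e ω| ∂P = ∫ ω in A, e ω ∂P :=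
      setIntegral_congr_fun (hm _ hA) fun ω hω => abs_of_nonneg hω
    have h6 : ∫ ω in Aᶜ, |e ω| ∂P = ∫ ω in Aᶜ, - e ω ∂P :=
      setIntegral_congr_fun (hm _ hA).compl fun ω hω => by
        have : ¬ 0 ≤ e ω := hω
        exact abs_of_neg (not_le.1 this)
    rw [h5, h6, integral_neg]
    linarith
  have h7 : ∫ ω in A, e ω ∂P = (∫ ω in A, g ω ∂P) - P.real A * c := by
    rw [integral_sub integrable_condExp.integrableOn (integrable_const _),
      setIntegral_condExp hm hg hA]
    simp
  rw [h2]
  calc |∫ ω, f ω * e ω ∂P| ≤ ∫ ω, |f ω * e ω| ∂P := abs_integral_le_integral_abs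
    _ ≤ ∫ ω, |e ω| ∂P := by
        refine integral_mono (hei.bdd_mul (hf.mono hm).aestronglyMeasurable
          (ae_of_all _ hf1)).abs hei.abs fun ω => ?_
        simp only [abs_mul]
        exact mul_le_of_le_one_left (abs_nonneg _) (hf1 ω)
    _ ≤ 2 * δ := by
        rw [h3, h7]
        have := (abs_le.1 (h A hA)).2
        linarith

lemma abs_sub_le_alphaMix (P : Measure Ω) [IsProbabilityMeasure P] {β : Type*} [MeasurableSpace β]
    (Y : ℤ → Ω → β) (r : ℕ) {p : ℤ} {A B : Set Ω} (hA : MeasurableSet[sigmaLE Y p] A)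
    (hB : MeasurableSet[sigmaGE Y (p + r)] B) :
    |P.real (A ∩ B) - P.real A * P.real B| ≤ alphaMix P Y r := by
  refine le_csSup ⟨1, ?_⟩ ⟨p, A, B, hA, hB, rfl⟩
  rintro x ⟨p, A, B, -, -, rfl⟩
  change |P.real (A ∩ B) - P.real A * P.real B| ≤ 1
  have h1 : P.real (A ∩ B) ≤ 1 := measureReal_le_one
  have h2 : P.real A ≤ 1 := measureReal_le_one
  have h3 : P.real B ≤ 1 := measureReal_le_one
  have h4 : 0 ≤ P.real (A ∩ B) := measureReal_nonneg
  have h5 : 0 ≤ P.real A := measureReal_nonneg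
  have h6 : 0 ≤ P.real B := measureReal_nonneg
  rw [abs_le]; constructor <;> nlinarith

lemma sigmaLE_le {β : Type*} [MeasurableSpace β] {Y : ℤ → Ω → β} (hY : ∀ i, Measurable (Y i))
    (p : ℤ) : sigmaLE Y p ≤ ‹MeasurableSpace Ω› :=
  iSup₂_le fun i _ => (hY i).comap_le

lemma sigmaGE_le {β : Type*} [MeasurableSpace β] {Y : ℤ → Ω → β} (hY : ∀ i, Measurable (Y i))
    (p : ℤ) : sigmaGE Y p ≤ ‹MeasurableSpace Ω› :=
  iSup₂_le fun i _ => (hY i).comap_le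

lemma measurable_sigmaLE {Ω β : Type*} [MeasurableSpace β]
    (Y : ℤ → Ω → β) {i p : ℤ} (h : i ≤ p) :
    Measurable[sigmaLE Y p] (Y i) := by
  rw [measurable_iff_comap_le]
  exact le_iSup₂_of_le i h le_rfl

lemma measurable_sigmaGE {Ω β : Type*} [MeasurableSpace β]
    (Y : ℤ → Ω → β) {i p : ℤ} (h : p ≤ i) :
    Measurable[sigmaGE Y p] (Y i) := by
  rw [measurable_iff_comap_le]
  exact le_iSup₂_of_le i h le_rfl

/-- The covariance inequality for bounded variables: `cov_le_two_mul` is applied once to replace `f`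
by an event of the past and once to replace `g` by an event of the future. -/
lemma cov_le_alphaMix (P : Measure Ω) [IsProbabilityMeasure P] {β : Type*} [MeasurableSpace β]
    {Y : ℤ → Ω → β} (hY : ∀ i, Measurable (Y i)) (p : ℤ) (r : ℕ) {f g : Ω → ℝ}
    (hf : StronglyMeasurable[sigmaLE Y p] f) (hg : StronglyMeasurable[sigmaGE Y (p + r)] g)
    (hf1 : ∀ ω, |f ω| ≤ 1) (hg1 : ∀ ω, |g ω| ≤ 1) :
    |(∫ ω, f ω * g ω ∂P) - (∫ ω, f ω ∂P) * ∫ ω, g ω ∂P| ≤ 4 * alphaMix P Y r := by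
  have hgi : Integrable g P :=
    Integrable.of_bound (hg.mono (sigmaGE_le hY _)).aestronglyMeasurable 1 (ae_of_all _ hg1)
  have key : ∀ A, MeasurableSet[sigmaLE Y p] A →
      |(∫ ω in A, g ω ∂P) - P.real A * ∫ ω, g ω ∂P| ≤ 2 * alphaMix P Y r := by
    intro A hA
    have hA' := sigmaLE_le hY _ _ hA
    have h := cov_le_two_mul P (sigmaGE_le hY (p + r)) hg hg1
      (g := A.indicator fun _ => (1 : ℝ)) ((integrable_const 1).indicator hA')
      (δ := alphaMix P Y r) (fun B hB => by
        have hB' := sigmaGE_le hY _ _ hB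
        have e1 : ∫ ω in B, A.indicator (fun _ => (1 : ℝ)) ω ∂P = P.real (A ∩ B) := by
          rw [integral_indicator hA', Measure.restrict_restrict hA']
          simp
        rw [e1, integral_indicator hA']
        simp only [integral_const, smul_eq_mul, mul_one, measureReal_restrict_apply_univ]
        rw [mul_comm (P.real B)]
        exact abs_sub_le_alphaMix P Y r hA hB)
    have e2 : ∫ ω, g ω * A.indicator (fun _ => (1 : ℝ)) ω ∂P = ∫ ω in A, g ω ∂P := by
      rw [← integral_indicator hA']
      congr 1 with ω
      by_cases hω : ω ∈ A <;> simp [hω]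
    rw [e2, integral_indicator hA'] at h
    simp only [integral_const, smul_eq_mul, mul_one, measureReal_restrict_apply_univ] at h
    rwa [mul_comm (P.real A)]
  have := cov_le_two_mul P (sigmaLE_le hY p) hf hf1 hgi key
  linarith

/-! ### Moments and cumulants of centred indicators -/

/-- The centred indicator `1(U_t ≤ w) − C(w)` attached to the pair `x = (t, w)`. -/
noncomputable def Zc (P : Measure Ω) (U : ℤ → Ω → Fin d → ℝ) (x : ℤ × (Fin d → ℝ)) (ω : Ω) : ℝ :=
  ind U x.1 x.2 ω - cdfC P U x.2

/-- Second mixed moment of the centred indicators. -/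
noncomputable def M2 (P : Measure Ω) (U : ℤ → Ω → Fin d → ℝ) (x y : ℤ × (Fin d → ℝ)) : ℝ :=
  ∫ ω, Zc P U x ω * Zc P U y ω ∂P

/-- Fourth mixed moment of the centred indicators. -/
noncomputable def M4 (P : Measure Ω) (U : ℤ → Ω → Fin d → ℝ) (x y z w : ℤ × (Fin d → ℝ)) : ℝ :=
  ∫ ω, Zc P U x ω * Zc P U y ω * Zc P U z ω * Zc P U w ω ∂P

/-- Fourth joint cumulant of the centred indicators. -/
noncomputable def cum4 (P : Measure Ω) (U : ℤ → Ω → Fin d → ℝ) (x y z w : ℤ × (Fin d → ℝ)) : ℝ :=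
  M4 P U x y z w - M2 P U x y * M2 P U z w - M2 P U x z * M2 P U y w - M2 P U x w * M2 P U y z

lemma measurable_leInd (u : Fin d → ℝ) :
    Measurable (fun y : Fin d → ℝ => if ∀ j, y j ≤ u j then (1 : ℝ) else 0) :=
  Measurable.ite measurableSet_Iic measurable_const measurable_const

lemma measurable_Zc {Ω : Type*} {m m0 : MeasurableSpace Ω} (P : Measure Ω)
    (U : ℤ → Ω → Fin d → ℝ) {x : ℤ × (Fin d → ℝ)} (h : Measurable[m] (U x.1)) : Measurable[m] (Zc P U x) :=
  ((measurable_leInd x.2).comp h).sub_const _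

lemma abs_Zc_le (P : Measure Ω) [IsProbabilityMeasure P] (U : ℤ → Ω → Fin d → ℝ)
    (x : ℤ × (Fin d → ℝ)) (ω : Ω) : |Zc P U x ω| ≤ 1 := by
  have h1 : cdfC P U x.2 ≤ 1 := measureReal_le_one
  have h0 : 0 ≤ cdfC P U x.2 := measureReal_nonneg
  unfold Zc ind
  split_ifs <;> rw [abs_le] <;> constructor <;> linarith

lemma abs_mul_le_one {a b : ℝ} (ha : |a| ≤ 1) (hb : |b| ≤ 1) : |a * b| ≤ 1 := by
  rw [abs_mul]; exact mul_le_one₀ ha (abs_nonneg _) hb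

/-- Strict stationarity, in terms of integrals of functionals of the whole path. -/
lemma integral_shift {P : Measure Ω} {U : ℤ → Ω → Fin d → ℝ}
    (hU : ∀ i, Measurable (U i)) (hst : Stationary P U) (k : ℤ) {G : (ℤ → Fin d → ℝ) → ℝ}
    (hG : Measurable G) :
    ∫ ω, G (fun i => U (i + k) ω) ∂P = ∫ ω, G (fun i => U i ω) ∂P := by
  rw [← integral_map (φ := fun ω (i : ℤ) => U (i + k) ω)
      (measurable_pi_lambda _ fun i => hU _).aemeasurable hG.aestronglyMeasurable,
    ← integral_map (φ := fun ω (i : ℤ) => U i ω)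
      (measurable_pi_lambda _ fun i => hU _).aemeasurable hG.aestronglyMeasurable, hst k]

lemma integral_ind {P : Measure Ω} [IsProbabilityMeasure P] {U : ℤ → Ω → Fin d → ℝ}
    (hU : ∀ i, Measurable (U i)) (hst : Stationary P U) (i : ℤ) (u : Fin d → ℝ) :
    ∫ ω, ind U i u ω ∂P = cdfC P U u := by
  have h := integral_shift hU hst i ((measurable_leInd u).comp (measurable_pi_apply (0 : ℤ)))
  simp only [Function.comp_apply, zero_add] at h
  unfold ind cdfC
  rw [h]
  have hm : MeasurableSet {ω | ∀ j, U 0 ω j ≤ u j} := hU 0 (measurableSet_Iic (a := u))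
  have e : (fun ω => if ∀ j, U 0 ω j ≤ u j then (1 : ℝ) else 0)
      = {ω | ∀ j, U 0 ω j ≤ u j}.indicator fun _ => (1 : ℝ) := by
    ext ω; simp [Set.indicator]
  rw [e, integral_indicator hm]
  simp [Measure.real]

lemma integrable_ind {P : Measure Ω} [IsProbabilityMeasure P] {U : ℤ → Ω → Fin d → ℝ}
    (hU : ∀ i, Measurable (U i)) (i : ℤ) (u : Fin d → ℝ) : Integrable (ind U i u) P := by
  refine Integrable.of_bound ((measurable_leInd u).comp (hU i)).aestronglyMeasurable 1
    (ae_of_all _ fun ω => ?_)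
  unfold ind
  split_ifs <;> simp

lemma integral_Zc {P : Measure Ω} [IsProbabilityMeasure P] {U : ℤ → Ω → Fin d → ℝ}
    (hU : ∀ i, Measurable (U i)) (hst : Stationary P U) (x : ℤ × (Fin d → ℝ)) :
    ∫ ω, Zc P U x ω ∂P = 0 := by
  unfold Zc
  rw [integral_sub (integrable_ind hU _ _) (integrable_const _), integral_ind hU hst]
  simp

lemma integrable_Zc {P : Measure Ω} [IsProbabilityMeasure P] {U : ℤ → Ω → Fin d → ℝ}
    (hU : ∀ i, Measurable (U i)) (x : ℤ × (Fin d → ℝ)) : Integrable (Zc P U x) P :=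
  (integrable_ind hU _ _).sub (integrable_const _)

lemma M2_comm (P : Measure Ω) (U : ℤ → Ω → Fin d → ℝ) (x y : ℤ × (Fin d → ℝ)) :
    M2 P U x y = M2 P U y x := by simp only [M2, mul_comm]

/-- Stationarity: the second moments depend on the time lag only. -/
lemma M2_eq_gam {P : Measure Ω} [IsProbabilityMeasure P] {U : ℤ → Ω → Fin d → ℝ}
    (hU : ∀ i, Measurable (U i)) (hst : Stationary P U) (i k : ℤ) (u v : Fin d → ℝ) :
    M2 P U (i, u) (k, v) = gam P U (k - i) u v := by
  have h := integral_shift hU hst i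
    (((measurable_leInd u).comp (measurable_pi_apply (0 : ℤ))).mul
      ((measurable_leInd v).comp (measurable_pi_apply (k - i))))
  simp only [Function.comp_apply, zero_add, Pi.mul_apply, sub_add_cancel] at h
  have h' : ∫ ω, ind U i u ω * ind U k v ω ∂P = ∫ ω, ind U 0 u ω * ind U (k - i) v ω ∂P := h
  unfold gam
  rw [integral_ind hU hst, integral_ind hU hst, ← h']
  have hi : Integrable (fun ω => ind U i u ω * ind U k v ω) P := by
    refine (integrable_ind hU k v).bdd_mul (c := 1)
      (integrable_ind hU i u).aestronglyMeasurable (ae_of_all _ fun ω => ?_)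
    unfold ind; split_ifs <;> simp
  have e : ∀ ω, Zc P U (i, u) ω * Zc P U (k, v) ω = ind U i u ω * ind U k v ω
      - cdfC P U u * ind U k v ω - cdfC P U v * Zc P U (i, u) ω := by
    intro ω; simp only [Zc]; ring
  unfold M2
  simp only [e]
  rw [integral_sub (f := fun ω => ind U i u ω * ind U k v ω - cdfC P U u * ind U k v ω)
      (hi.sub ((integrable_ind hU k v).const_mul _)) ((integrable_Zc hU (i, u)).const_mul _),
    integral_sub hi ((integrable_ind hU k v).const_mul _), integral_const_mul,
    integral_const_mul, integral_Zc hU hst, integral_ind hU hst]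
  ring

/-- A function of the past up to `s` and a function of the future from `t ≥ s` on, both bounded by
`1`, have covariance at most `K (1 + (t − s))^{-a}`. The shift by `1` lets the bound cover
`s = t` as well. -/
def MixBound (P : Measure Ω) (U : ℤ → Ω → Fin d → ℝ) (a K : ℝ) : Prop :=
  ∀ (s t : ℤ), s ≤ t → ∀ f g : Ω → ℝ, Measurable[sigmaLE U s] f → Measurable[sigmaGE U t] g →
    (∀ ω, |f ω| ≤ 1) → (∀ ω, |g ω| ≤ 1) →
    |(∫ ω, f ω * g ω ∂P) - (∫ ω, f ω ∂P) * ∫ ω, g ω ∂P| ≤ K * (1 + ((t : ℝ) - s)) ^ (-a)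

lemma abs_integral_le_one (P : Measure Ω) [IsProbabilityMeasure P] {f : Ω → ℝ}
    (h : ∀ ω, |f ω| ≤ 1) : |∫ ω, f ω ∂P| ≤ 1 := by
  have := norm_integral_le_of_norm_le_const (μ := P) (f := f) (C := 1) (ae_of_all _ h)
  simpa using this

lemma exists_mixBound {P : Measure Ω} [IsProbabilityMeasure P] {U : ℤ → Ω → Fin d → ℝ}
    (hU : ∀ i, Measurable (U i)) {a : ℝ} (ha : 0 < a) {Ca : ℝ}
    (hmix : ∀ r : ℕ, 1 ≤ r → alphaMix P U r ≤ Ca * (r : ℝ) ^ (-a)) :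
    ∃ K, 0 ≤ K ∧ MixBound P U a K := by
  refine ⟨2 + 4 * |Ca| * 2 ^ a, by positivity, ?_⟩
  intro s t hst f g hf hg hf1 hg1
  obtain ⟨r, rfl⟩ : ∃ r : ℕ, t = s + r := ⟨(t - s).toNat, by omega⟩
  have e : (1 + (((s + r : ℤ) : ℝ) - s)) = 1 + (r : ℝ) := by push_cast; ring
  rw [e]
  rcases Nat.eq_zero_or_pos r with rfl | hr
  · have h1 := abs_integral_le_one P (f := fun ω => f ω * g ω)
      (fun ω => abs_mul_le_one (hf1 ω) (hg1 ω))
    have h2 := abs_mul_le_one (abs_integral_le_one P hf1) (abs_integral_le_one P hg1)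
    have h3 : 0 ≤ 4 * |Ca| * 2 ^ a := by positivity
    simp only [Nat.cast_zero, add_zero, Real.one_rpow, mul_one]
    have := abs_sub (∫ ω, f ω * g ω ∂P) ((∫ ω, f ω ∂P) * ∫ ω, g ω ∂P)
    linarith
  · have h1 := cov_le_alphaMix P hU s r (Measurable.stronglyMeasurable hf)
      (Measurable.stronglyMeasurable hg) hf1 hg1
    have hr' : (1 : ℝ) ≤ r := by exact_mod_cast hr
    have h2 : (r : ℝ) ^ (-a) ≤ 2 ^ a * (1 + (r : ℝ)) ^ (-a) := by
      have : (1 + (r : ℝ)) ^ a ≤ 2 ^ a * (r : ℝ) ^ a := by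
        rw [← Real.mul_rpow (by norm_num) (by positivity)]
        exact Real.rpow_le_rpow (by positivity) (by linarith) ha.le
      rw [Real.rpow_neg (by positivity), Real.rpow_neg (by positivity), ← div_eq_mul_inv,
        le_div_iff₀ (by positivity), inv_mul_le_iff₀ (by positivity)]
      linarith
    have h3 : 0 ≤ (1 + (r : ℝ)) ^ (-a) := by positivity
    have h4 : 0 ≤ (r : ℝ) ^ (-a) := by positivity
    calc _ ≤ 4 * alphaMix P U r := h1
      _ ≤ 4 * (Ca * (r : ℝ) ^ (-a)) := by linarith [hmix r hr]
      _ ≤ 4 * (|Ca| * (r : ℝ) ^ (-a)) := by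
          have := mul_le_mul_of_nonneg_right (le_abs_self Ca) h4
          linarith
      _ ≤ 4 * (|Ca| * (2 ^ a * (1 + (r : ℝ)) ^ (-a))) := by gcongr
      _ ≤ _ := by nlinarith

lemma abs_M2_le_one (P : Measure Ω) [IsProbabilityMeasure P] (U : ℤ → Ω → Fin d → ℝ)
    (x y : ℤ × (Fin d → ℝ)) : |M2 P U x y| ≤ 1 :=
  abs_integral_le_one P fun ω => abs_mul_le_one (abs_Zc_le P U x ω) (abs_Zc_le P U y ω)

lemma abs_M2_le {P : Measure Ω} [IsProbabilityMeasure P] {U : ℤ → Ω → Fin d → ℝ}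
    (hU : ∀ i, Measurable (U i)) (hst : Stationary P U) {a K : ℝ} (hK : MixBound P U a K)
    (x y : ℤ × (Fin d → ℝ)) : |M2 P U x y| ≤ K * (1 + |(y.1 : ℝ) - x.1|) ^ (-a) := by
  wlog h : x.1 ≤ y.1 generalizing x y
  · rw [M2_comm, abs_sub_comm]
    exact this y x (le_of_not_ge h)
  have := hK x.1 y.1 h _ _ (measurable_Zc P U (measurable_sigmaLE U le_rfl))
    (measurable_Zc P U (measurable_sigmaGE U le_rfl)) (abs_Zc_le P U x) (abs_Zc_le P U y)
  rw [integral_Zc hU hst, zero_mul, sub_zero] at this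
  rwa [← abs_of_nonneg (a := (y.1 : ℝ) - x.1) (by simpa using h)] at this

/-- For ordered times, one of the three gaps is at least a third of the total spread `w.1 − x.1`.
Splitting at an outer gap makes the fourth moment and one factor of each product small; splitting at
the middle gap makes `M4 − M2 · M2` and one factor of each of the other two products small. -/
lemma abs_cum4_le_of_sorted {P : Measure Ω} [IsProbabilityMeasure P] {U : ℤ → Ω → Fin d → ℝ}
    (hU : ∀ i, Measurable (U i)) (hst : Stationary P U) {a K : ℝ} (ha : 0 < a) (hK0 : 0 ≤ K)
    (hK : MixBound P U a K) {x y z w : ℤ × (Fin d → ℝ)} (hxy : x.1 ≤ y.1) (hyz : y.1 ≤ z.1)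
    (hzw : z.1 ≤ w.1) :
    |cum4 P U x y z w| ≤ 4 * K * 3 ^ a * (1 + ((w.1 : ℝ) - x.1)) ^ (-a) := by
  have hxy' : (x.1 : ℝ) ≤ y.1 := by exact_mod_cast hxy
  have hyz' : (y.1 : ℝ) ≤ z.1 := by exact_mod_cast hyz
  have hzw' : (z.1 : ℝ) ≤ w.1 := by exact_mod_cast hzw
  set B := K * (3 ^ a * (1 + ((w.1 : ℝ) - x.1)) ^ (-a)) with hB
  have hB0 : 0 ≤ B := by
    have : 0 ≤ (1 + ((w.1 : ℝ) - x.1)) := by linarith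
    positivity
  have hmono : ∀ g : ℝ, (w.1 : ℝ) - x.1 ≤ 3 * g → K * (1 + g) ^ (-a) ≤ B := by
    intro g hg
    refine mul_le_mul_of_nonneg_left ?_ hK0
    have h0 : 0 ≤ (1 + ((w.1 : ℝ) - x.1)) := by linarith
    have h1 : (3 : ℝ) ^ a * (1 + ((w.1 : ℝ) - x.1)) ^ (-a)
        = ((1 + ((w.1 : ℝ) - x.1)) / 3) ^ (-a) := by
      rw [Real.div_rpow h0 (by norm_num), Real.rpow_neg (by norm_num : (0:ℝ) ≤ 3)]
      field_simp
    rw [h1]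
    exact Real.rpow_le_rpow_of_nonpos (by linarith) (by linarith) (by linarith)
  have hM2 : ∀ s t : ℤ × (Fin d → ℝ), (w.1 : ℝ) - x.1 ≤ 3 * ((t.1 : ℝ) - s.1) →
      |M2 P U s t| ≤ B := fun s t h => by
    refine (abs_M2_le hU hst hK s t).trans (hmono _ (h.trans ?_))
    have := le_abs_self ((t.1 : ℝ) - s.1)
    linarith
  have hprodL : ∀ p q : ℝ, |p| ≤ B → |q| ≤ 1 → |p * q| ≤ B := fun p q hp hq => by
    rw [abs_mul]
    exact (mul_le_of_le_one_right (abs_nonneg _) hq).trans hp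
  have hprodR : ∀ p q : ℝ, |p| ≤ 1 → |q| ≤ B → |p * q| ≤ B := fun p q hp hq => by
    rw [mul_comm]; exact hprodL _ _ hq hp
  have one := abs_M2_le_one P U
  have hZ := abs_Zc_le P U
  suffices h : |cum4 P U x y z w| ≤ 4 * B by
    calc _ ≤ _ := h
      _ = _ := by rw [hB]; ring
  have hle : ∀ (s : ℤ) (q : ℤ × (Fin d → ℝ)), q.1 ≤ s → Measurable[sigmaLE U s] (Zc P U q) :=
    fun s q h => measurable_Zc P U (measurable_sigmaLE U h)
  have hge : ∀ (s : ℤ) (q : ℤ × (Fin d → ℝ)), s ≤ q.1 → Measurable[sigmaGE U s] (Zc P U q) :=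
    fun s q h => measurable_Zc P U (measurable_sigmaGE U h)
  unfold cum4
  have tri : ∀ p q r s : ℝ, |p| ≤ B → |q| ≤ B → |r| ≤ B → |s| ≤ B →
      |p - q - r - s| ≤ 4 * B := by
    intro p q r s hp hq hr hs
    rw [abs_le] at *
    constructor <;> linarith
  rcases le_or_gt ((w.1 : ℝ) - x.1) (3 * ((y.1 : ℝ) - x.1)) with h1 | h1
  · have hM : |M4 P U x y z w| ≤ B := by
      have := hK x.1 y.1 hxy _ (fun ω => Zc P U y ω * Zc P U z ω * Zc P U w ω)
        (hle _ x le_rfl) (((hge y.1 y le_rfl).mul (hge y.1 z hyz)).mul (hge y.1 w (hyz.trans hzw)))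
        (hZ x) (fun ω => abs_mul_le_one (abs_mul_le_one (hZ y ω) (hZ z ω)) (hZ w ω))
      rw [integral_Zc hU hst, zero_mul, sub_zero] at this
      refine le_trans (le_of_eq ?_) (this.trans (hmono _ h1))
      unfold M4
      congr 2 with ω
      ring
    exact tri _ _ _ _ hM (hprodL _ _ (hM2 x y h1) (one _ _))
      (hprodL _ _ (hM2 x z (by linarith)) (one _ _)) (hprodL _ _ (hM2 x w (by linarith)) (one _ _))
  rcases le_or_gt ((w.1 : ℝ) - x.1) (3 * ((z.1 : ℝ) - y.1)) with h2 | h2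
  · have hM : |M4 P U x y z w - M2 P U x y * M2 P U z w| ≤ B := by
      have := hK y.1 z.1 hyz (fun ω => Zc P U x ω * Zc P U y ω)
        (fun ω => Zc P U z ω * Zc P U w ω)
        ((hle _ x hxy).mul (hle y.1 y le_rfl)) ((hge z.1 z le_rfl).mul (hge z.1 w hzw))
        (fun ω => abs_mul_le_one (hZ x ω) (hZ y ω)) (fun ω => abs_mul_le_one (hZ z ω) (hZ w ω))
      refine le_trans (le_of_eq ?_) (this.trans (hmono _ h2))
      unfold M4 M2
      simp only [mul_assoc]
    have h4 := tri _ 0 _ _ hM (by simpa using hB0)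
      (hprodL _ _ (hM2 x z (by linarith)) (one y w)) (hprodL _ _ (hM2 x w (by linarith)) (one y z))
    rwa [sub_zero] at h4
  · have h3 : (w.1 : ℝ) - x.1 ≤ 3 * ((w.1 : ℝ) - z.1) := by linarith
    have hM : |M4 P U x y z w| ≤ B := by
      have := hK z.1 w.1 hzw (fun ω => Zc P U x ω * Zc P U y ω * Zc P U z ω) _
        (((hle z.1 x (hxy.trans hyz)).mul (hle z.1 y hyz)).mul (hle z.1 z le_rfl)) (hge _ w le_rfl)
        (fun ω => abs_mul_le_one (abs_mul_le_one (hZ x ω) (hZ y ω)) (hZ z ω)) (hZ w)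
      rw [integral_Zc hU hst, mul_zero, sub_zero] at this
      exact this.trans (hmono _ h3)
    exact tri _ _ _ _ hM (hprodR _ _ (one _ _) (hM2 z w h3))
      (hprodR _ _ (one _ _) (hM2 y w (by linarith))) (hprodL _ _ (hM2 x w (by linarith)) (one _ _))

/-- A property of quadruples that is stable under adjacent transpositions holds everywhere if it
holds for quadruples sorted by the key `t`. -/
lemma of_sorted {T : Type*} (t : T → ℤ) (Q : T → T → T → T → Prop)
    (h12 : ∀ x y z w, Q x y z w → Q y x z w) (h23 : ∀ x y z w, Q x y z w → Q x z y w)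
    (h34 : ∀ x y z w, Q x y z w → Q x y w z)
    (hs : ∀ x y z w, t x ≤ t y → t y ≤ t z → t z ≤ t w → Q x y z w) (x y z w : T) :
    Q x y z w := by
  have i1 : ∀ x y z w, t y ≤ t z → t z ≤ t w → Q x y z w := by
    intro x y z w h1 h2
    rcases le_total (t x) (t y) with h | h
    · exact hs _ _ _ _ h h1 h2
    apply h12
    rcases le_total (t x) (t z) with h' | h'
    · exact hs _ _ _ _ h h' h2
    apply h23
    rcases le_total (t x) (t w) with h₃ | h₃
    · exact hs _ _ _ _ h1 h' h₃
    · exact h34 _ _ _ _ (hs _ _ _ _ h1 h2 h₃)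
  have i2 : ∀ x y z w, t z ≤ t w → Q x y z w := by
    intro x y z w h2
    rcases le_total (t y) (t z) with h | h
    · exact i1 _ _ _ _ h h2
    apply h23
    rcases le_total (t y) (t w) with h' | h'
    · exact i1 _ _ _ _ h h'
    · exact h34 _ _ _ _ (i1 _ _ _ _ h2 h')
  rcases le_total (t z) (t w) with h | h
  · exact i2 _ _ _ _ h
  · exact h34 _ _ _ _ (i2 _ _ _ _ h)

/-- The cumulant bound without ordering of the times. The bound in terms of the spread is split into
a product, so that its sum over three of the times factorises. -/
lemma abs_cum4_le {P : Measure Ω} [IsProbabilityMeasure P] {U : ℤ → Ω → Fin d → ℝ}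
    (hU : ∀ i, Measurable (U i)) (hst : Stationary P U) {a K : ℝ} (ha : 0 < a) (hK0 : 0 ≤ K)
    (hK : MixBound P U a K) (x y z w : ℤ × (Fin d → ℝ)) :
    |cum4 P U x y z w| ≤ 4 * K * 3 ^ a * ((1 + |(y.1 : ℝ) - x.1|) ^ (-(a / 3)) *
      (1 + |(z.1 : ℝ) - x.1|) ^ (-(a / 3)) * (1 + |(w.1 : ℝ) - x.1|) ^ (-(a / 3))) := by
  -- all six distances are recorded so that the claim is stable under transpositions
  have key : ∃ D : ℝ, |(y.1 : ℝ) - x.1| ≤ D ∧ |(z.1 : ℝ) - x.1| ≤ D ∧ |(w.1 : ℝ) - x.1| ≤ D ∧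
      |(y.1 : ℝ) - z.1| ≤ D ∧ |(y.1 : ℝ) - w.1| ≤ D ∧ |(z.1 : ℝ) - w.1| ≤ D ∧
      |cum4 P U x y z w| ≤ 4 * K * 3 ^ a * (1 + D) ^ (-a) := by
    refine of_sorted (fun x : ℤ × (Fin d → ℝ) => x.1) (fun x y z w => ∃ D : ℝ,
      |(y.1 : ℝ) - x.1| ≤ D ∧ |(z.1 : ℝ) - x.1| ≤ D ∧ |(w.1 : ℝ) - x.1| ≤ D ∧
      |(y.1 : ℝ) - z.1| ≤ D ∧ |(y.1 : ℝ) - w.1| ≤ D ∧ |(z.1 : ℝ) - w.1| ≤ D ∧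
      |cum4 P U x y z w| ≤ 4 * K * 3 ^ a * (1 + D) ^ (-a)) ?_ ?_ ?_ ?_ x y z w
    · rintro x y z w ⟨D, h1, h2, h3, h4, h5, h6, h7⟩
      refine ⟨D, by rwa [abs_sub_comm], by rwa [abs_sub_comm], by rwa [abs_sub_comm],
        by rwa [abs_sub_comm], by rwa [abs_sub_comm], h6, le_of_eq_of_le ?_ h7⟩
      congr 1
      unfold cum4 M4
      rw [M2_comm P U y x]
      simp only [mul_comm (Zc P U y _) (Zc P U x _)]
      ring
    · rintro x y z w ⟨D, h1, h2, h3, h4, h5, h6, h7⟩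
      refine ⟨D, h2, h1, h3, by rwa [abs_sub_comm], h6, h5, le_of_eq_of_le ?_ h7⟩
      congr 1
      unfold cum4 M4
      rw [M2_comm P U z y]
      simp only [mul_right_comm (Zc P U x _) (Zc P U z _)]
      ring
    · rintro x y z w ⟨D, h1, h2, h3, h4, h5, h6, h7⟩
      refine ⟨D, h1, h3, h2, h5, h4, by rwa [abs_sub_comm], le_of_eq_of_le ?_ h7⟩
      congr 1
      unfold cum4 M4
      rw [M2_comm P U w z]
      simp only [mul_right_comm _ (Zc P U w _) (Zc P U z _)]
      ring
    · intro x y z w hxy hyz hzw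
      have hxy' : (x.1 : ℝ) ≤ y.1 := by exact_mod_cast hxy
      have hyz' : (y.1 : ℝ) ≤ z.1 := by exact_mod_cast hyz
      have hzw' : (z.1 : ℝ) ≤ w.1 := by exact_mod_cast hzw
      refine ⟨(w.1 : ℝ) - x.1, ?_, ?_, ?_, ?_, ?_, ?_,
        abs_cum4_le_of_sorted hU hst ha hK0 hK hxy hyz hzw⟩ <;> rw [abs_le] <;>
        constructor <;> linarith
  obtain ⟨D, h1, h2, h3, -, -, -, h⟩ := key
  refine h.trans (mul_le_mul_of_nonneg_left ?_ (by positivity))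
  have hD : 0 ≤ D := (abs_nonneg _).trans h1
  have e : (1 + D) ^ (-a) = (1 + D) ^ (-(a / 3)) * (1 + D) ^ (-(a / 3)) * (1 + D) ^ (-(a / 3)) := by
    rw [← Real.rpow_add (by positivity), ← Real.rpow_add (by positivity)]
    congr 1; ring
  have m : ∀ r : ℝ, 0 ≤ r → r ≤ D → (1 + D) ^ (-(a / 3)) ≤ (1 + r) ^ (-(a / 3)) :=
    fun r h0 hr => Real.rpow_le_rpow_of_nonpos (by positivity) (by linarith) (by linarith)
  rw [e]
  exact mul_le_mul (mul_le_mul (m _ (abs_nonneg _) h1) (m _ (abs_nonneg _) h2)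
    (by positivity) (by positivity)) (m _ (abs_nonneg _) h3) (by positivity) (by positivity)

/-! ### The kernel weights -/

/-- The weight `W_n(p,q)`: the sum of `φ((i−j)/L) φ((k−l)/L)` over all `i, j, k, l ∈ {1,…,n}` with
`k − i = p` and `l − j = q`, divided by `n L`. -/
noncomputable def Wn (φ : ℝ → ℝ) (L : ℝ) (n : ℕ) (p q : ℤ) : ℝ :=
  ((n : ℝ) * L)⁻¹ * ∑ i ∈ Finset.Icc (1 : ℤ) n, ∑ j ∈ Finset.Icc (1 : ℤ) n,
    if i + p ∈ Finset.Icc (1 : ℤ) n ∧ j + q ∈ Finset.Icc (1 : ℤ) n then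
      φ (((i : ℝ) - j) / L) * φ ((((i + p : ℤ) : ℝ) - ((j + q : ℤ) : ℝ)) / L) else 0

section kernel

variable {φ : ℝ → ℝ} {lip L : ℝ}

lemma card_window {L : ℝ} (hL : 0 ≤ L) (i : ℤ) :
    ((Finset.Icc (i - ⌊L⌋) (i + ⌊L⌋)).card : ℝ) ≤ 2 * L + 1 := by
  have h0 : 0 ≤ ⌊L⌋ := Int.floor_nonneg.2 hL
  have h1 := Int.floor_le L
  have : ((Finset.Icc (i - ⌊L⌋) (i + ⌊L⌋)).card : ℤ) = 2 * ⌊L⌋ + 1 := by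
    rw [Int.card_Icc]; omega
  have h2 : ((Finset.Icc (i - ⌊L⌋) (i + ⌊L⌋)).card : ℝ) = 2 * ⌊L⌋ + 1 := by exact_mod_cast this
  linarith

lemma phi_eq_zero (hout : ∀ x : ℝ, 1 < |x| → φ x = 0) (hL : 0 < L) {i j : ℤ}
    (h : j ∉ Finset.Icc (i - ⌊L⌋) (i + ⌊L⌋)) : φ (((i : ℝ) - j) / L) = 0 := by
  apply hout
  rw [abs_div, abs_of_pos hL, lt_div_iff₀ hL, one_mul]
  by_contra! hc
  apply h
  have h' : (((|i - j| : ℤ)) : ℝ) ≤ L := by push_cast; exact hc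
  have := Int.le_floor.2 h'
  rw [abs_le] at this
  rw [Finset.mem_Icc]
  omega

/-- At most `2 L + 1` terms are nonzero, since `φ((i - j) / L) = 0` for `|i - j| > L`. -/
lemma sum_window_le (hr : ∀ x, φ x ∈ Icc (0 : ℝ) 1) (hout : ∀ x : ℝ, 1 < |x| → φ x = 0)
    (hL : 0 < L) (i : ℤ) (s : Finset ℤ) :
    ∑ j ∈ s, φ (((i : ℝ) - j) / L) ≤ 2 * L + 1 := by
  classical
  calc ∑ j ∈ s, φ (((i : ℝ) - j) / L)
      ≤ ∑ j ∈ s, if j ∈ Finset.Icc (i - ⌊L⌋) (i + ⌊L⌋) then (1 : ℝ) else 0 := by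
        refine Finset.sum_le_sum fun j _ => ?_
        split_ifs with h
        · exact (hr _).2
        · exact (phi_eq_zero hout hL h).le
    _ = ((s ∩ Finset.Icc (i - ⌊L⌋) (i + ⌊L⌋)).card : ℝ) := by
        rw [Finset.sum_ite_mem]; simp
    _ ≤ ((Finset.Icc (i - ⌊L⌋) (i + ⌊L⌋)).card : ℝ) := by
        exact_mod_cast Finset.card_le_card Finset.inter_subset_right
    _ ≤ 2 * L + 1 := card_window hL.le i

/-- The unnormalised Riemann sum `Σ_{|m| ≤ L} φ(m/L)²`; dividing by `L` approximates `∫ φ²`. -/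
noncomputable def riem (φ : ℝ → ℝ) (L : ℝ) : ℝ :=
  ∑ m ∈ Finset.Icc (-⌊L⌋) ⌊L⌋, φ ((m : ℝ) / L) ^ 2

lemma riem_eq (φ : ℝ → ℝ) (hs : ∀ x, φ (-x) = φ x) (L : ℝ) (i : ℤ) :
    riem φ L = ∑ j ∈ Finset.Icc (i - ⌊L⌋) (i + ⌊L⌋), φ (((i : ℝ) - j) / L) ^ 2 := by
  unfold riem
  refine Finset.sum_bij' (fun m _ => i + m) (fun j _ => j - i) ?_ ?_ ?_ ?_ ?_
  · intro m hm; simp only [Finset.mem_Icc] at *; omega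
  · intro m hm; simp only [Finset.mem_Icc] at *; omega
  · intro m hm; simp
  · intro m hm; simp
  · intro m hm
    rw [← hs]; congr 2; push_cast; ring

lemma riem_bounds (hr : ∀ x, φ x ∈ Icc (0 : ℝ) 1) (hL : 0 < L) :
    0 ≤ riem φ L ∧ riem φ L ≤ 2 * L + 1 := by
  refine ⟨Finset.sum_nonneg fun _ _ => sq_nonneg _, ?_⟩
  have := card_window hL.le 0
  simp only [zero_sub, zero_add] at this
  refine le_trans ?_ this
  unfold riem
  refine (Finset.sum_le_card_nsmul _ _ 1 fun m _ => ?_).trans (by simp)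
  have := hr ((m : ℝ) / L)
  exact pow_le_one₀ this.1 this.2

/-- The sum over `j` in the definition of `Wn`, for fixed `i`. -/
noncomputable def innerSum (φ : ℝ → ℝ) (L : ℝ) (n : ℕ) (p q i : ℤ) : ℝ :=
  ∑ j ∈ Finset.Icc (1 : ℤ) n,
    if i + p ∈ Finset.Icc (1 : ℤ) n ∧ j + q ∈ Finset.Icc (1 : ℤ) n then
      φ (((i : ℝ) - j) / L) * φ ((((i + p : ℤ) : ℝ) - ((j + q : ℤ) : ℝ)) / L) else 0

lemma innerSum_bounds (hr : ∀ x, φ x ∈ Icc (0 : ℝ) 1) (hout : ∀ x : ℝ, 1 < |x| → φ x = 0)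
    (hL : 0 < L) (n : ℕ) (p q i : ℤ) :
    0 ≤ innerSum φ L n p q i ∧ innerSum φ L n p q i ≤ 2 * L + 1 := by
  constructor
  · refine Finset.sum_nonneg fun j _ => ?_
    split_ifs
    · exact mul_nonneg (hr _).1 (hr _).1
    · exact le_rfl
  · refine le_trans (Finset.sum_le_sum fun j _ => ?_)
      (sum_window_le hr hout hL i (Finset.Icc (1 : ℤ) n))
    split_ifs
    · exact mul_le_of_le_one_right (hr _).1 (hr _).2
    · exact (hr _).1

lemma Wn_bounds (hr : ∀ x, φ x ∈ Icc (0 : ℝ) 1) (hout : ∀ x : ℝ, 1 < |x| → φ x = 0)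
    (hL : 1 ≤ L) (n : ℕ) (p q : ℤ) : 0 ≤ Wn φ L n p q ∧ Wn φ L n p q ≤ 3 := by
  have hL0 : 0 < L := by linarith
  have hb := innerSum_bounds hr hout hL0 n p q
  change 0 ≤ _ * ∑ i ∈ _, innerSum φ L n p q i ∧ _ * ∑ i ∈ _, innerSum φ L n p q i ≤ 3
  constructor
  · exact mul_nonneg (by positivity) (Finset.sum_nonneg fun i _ => (hb i).1)
  · rcases Nat.eq_zero_or_pos n with rfl | hn
    · simp
    have hn' : (0 : ℝ) < n := by exact_mod_cast hn
    rw [inv_mul_le_iff₀ (by positivity)]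
    refine (Finset.sum_le_card_nsmul _ _ (2 * L + 1) fun i _ => (hb i).2).trans ?_
    simp only [Int.card_Icc, add_sub_cancel_right, Int.toNat_natCast, nsmul_eq_mul]
    nlinarith

/-- For `i` at distance at least `⌊L⌋ + |p| + |q|` from the ends of `{1,…,n}` the truncation to
`{1,…,n}` is not felt and only the Lipschitz error remains; near the ends the trivial bound is
used. -/
lemma innerSum_sub_riem (hr : ∀ x, φ x ∈ Icc (0 : ℝ) 1) (hs : ∀ x, φ (-x) = φ x)
    (hout : ∀ x : ℝ, 1 < |x| → φ x = 0) (hlip0 : 0 < lip)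
    (hlip : ∀ x y : ℝ, |φ x - φ y| ≤ lip * |x - y|) (hL : 0 < L) (n : ℕ) (p q i : ℤ) :
    |innerSum φ L n p q i - riem φ L| ≤ (2 * L + 1) * (lip * (|(p : ℝ)| + |(q : ℝ)|) / L) +
      if i ∈ Finset.Icc (1 + (⌊L⌋ + |p| + |q|)) (n - (⌊L⌋ + |p| + |q|)) then 0
        else 2 * L + 1 := by
  split_ifs with hi
  · rw [Finset.mem_Icc] at hi
    have hM : 0 ≤ ⌊L⌋ := Int.floor_nonneg.2 hL.le
    have hp := abs_le.1 (le_refl |p|)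
    have hq := abs_le.1 (le_refl |q|)
    have e : innerSum φ L n p q i = ∑ j ∈ Finset.Icc (i - ⌊L⌋) (i + ⌊L⌋),
        φ (((i : ℝ) - j) / L) * φ ((((i + p : ℤ) : ℝ) - ((j + q : ℤ) : ℝ)) / L) := by
      unfold innerSum
      rw [← Finset.sum_subset (s₁ := Finset.Icc (i - ⌊L⌋) (i + ⌊L⌋))]
      · refine Finset.sum_congr rfl fun j hj => if_pos ?_
        simp only [Finset.mem_Icc] at *
        omega
      · intro j hj
        simp only [Finset.mem_Icc] at *
        omega
      · intro j _ hj
        rw [phi_eq_zero hout hL hj]; simp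
    rw [e, riem_eq φ hs L i, ← Finset.sum_sub_distrib, add_zero]
    refine (Finset.abs_sum_le_sum_abs _ _).trans ?_
    refine (Finset.sum_le_card_nsmul _ _ (lip * (|(p : ℝ)| + |(q : ℝ)|) / L)
      fun j _ => ?_).trans ?_
    · have e2 : φ (((i : ℝ) - j) / L) * φ ((((i + p : ℤ) : ℝ) - ((j + q : ℤ) : ℝ)) / L)
          - φ (((i : ℝ) - j) / L) ^ 2 = φ (((i : ℝ) - j) / L) *
          (φ ((((i + p : ℤ) : ℝ) - ((j + q : ℤ) : ℝ)) / L) - φ (((i : ℝ) - j) / L)) := by ring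
      rw [e2, abs_mul]
      have h1 : |φ (((i : ℝ) - j) / L)| ≤ 1 := by rw [abs_of_nonneg (hr _).1]; exact (hr _).2
      refine (mul_le_of_le_one_left (abs_nonneg _) h1).trans ((hlip _ _).trans ?_)
      have e3 : (((i + p : ℤ) : ℝ) - ((j + q : ℤ) : ℝ)) / L - ((i : ℝ) - j) / L
          = ((p : ℝ) - q) / L := by push_cast; ring
      rw [e3, abs_div, abs_of_pos hL, ← mul_div_assoc]
      gcongr
      exact abs_sub _ _
    · rw [nsmul_eq_mul]
      exact mul_le_mul_of_nonneg_right (card_window hL.le i) (by positivity)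
  · have h1 := innerSum_bounds hr hout hL n p q i
    have h2 := riem_bounds hr hL
    have h3 : 0 ≤ (2 * L + 1) * (lip * (|(p : ℝ)| + |(q : ℝ)|) / L) := by positivity
    rw [abs_le]
    constructor <;> linarith

lemma card_edge (n : ℕ) (H : ℤ) (hH : 0 ≤ H) :
    ((Finset.Icc (1 : ℤ) n \ Finset.Icc (1 + H) (n - H)).card : ℝ) ≤ 2 * H := by
  have hsub : Finset.Icc (1 : ℤ) n \ Finset.Icc (1 + H) (n - H) ⊆
      Finset.Icc 1 H ∪ Finset.Icc (n - H + 1) n := by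
    intro i hi
    simp only [Finset.mem_sdiff, Finset.mem_union, Finset.mem_Icc] at *
    omega
  have h1 := (Finset.card_le_card hsub).trans (Finset.card_union_le _ _)
  rw [Int.card_Icc, Int.card_Icc] at h1
  have h2 : ((Finset.Icc (1 : ℤ) n \ Finset.Icc (1 + H) (n - H)).card : ℤ) ≤ 2 * H := by omega
  exact_mod_cast h2

lemma Wn_sub_riem (hr : ∀ x, φ x ∈ Icc (0 : ℝ) 1) (hs : ∀ x, φ (-x) = φ x)
    (hout : ∀ x : ℝ, 1 < |x| → φ x = 0) (hlip0 : 0 < lip)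
    (hlip : ∀ x y : ℝ, |φ x - φ y| ≤ lip * |x - y|) (hL : 1 ≤ L) {n : ℕ} (hn : 0 < n) (p q : ℤ) :
    |Wn φ L n p q - riem φ L / L| ≤ 3 * (lip * (|(p : ℝ)| + |(q : ℝ)|) / L) +
      6 * (L + |(p : ℝ)| + |(q : ℝ)|) / n := by
  have hL0 : 0 < L := by linarith
  have hn' : (0 : ℝ) < n := by exact_mod_cast hn
  set c := lip * (|(p : ℝ)| + |(q : ℝ)|) / L with hc
  have hc0 : 0 ≤ c := by positivity
  set H : ℤ := ⌊L⌋ + |p| + |q| with hH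
  have hM : 0 ≤ ⌊L⌋ := Int.floor_nonneg.2 hL0.le
  have hH0 : 0 ≤ H := by positivity
  have hHL : (H : ℝ) ≤ L + |(p : ℝ)| + |(q : ℝ)| := by
    rw [hH]; push_cast; linarith [Int.floor_le L]
  have e : Wn φ L n p q - riem φ L / L
      = ((n : ℝ) * L)⁻¹ * ∑ i ∈ Finset.Icc (1 : ℤ) n, (innerSum φ L n p q i - riem φ L) := by
    rw [Finset.sum_sub_distrib, mul_sub]
    congr 1
    simp only [Finset.sum_const, Int.card_Icc, add_sub_cancel_right, Int.toNat_natCast,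
      nsmul_eq_mul]
    field_simp
  rw [e, abs_mul, abs_of_pos (by positivity), inv_mul_le_iff₀ (by positivity)]
  calc |∑ i ∈ Finset.Icc (1 : ℤ) n, (innerSum φ L n p q i - riem φ L)|
      ≤ ∑ i ∈ Finset.Icc (1 : ℤ) n, |innerSum φ L n p q i - riem φ L| :=
        Finset.abs_sum_le_sum_abs _ _
    _ ≤ ∑ i ∈ Finset.Icc (1 : ℤ) n, ((2 * L + 1) * c +
          if i ∈ Finset.Icc (1 + H) (n - H) then 0 else 2 * L + 1) :=
        Finset.sum_le_sum fun i _ => innerSum_sub_riem hr hs hout hlip0 hlip hL0 n p q i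
    _ = n * ((2 * L + 1) * c) +
          ((Finset.Icc (1 : ℤ) n \ Finset.Icc (1 + H) (n - H)).card : ℝ) * (2 * L + 1) := by
        rw [Finset.sum_add_distrib, ← Finset.filter_notMem_eq_sdiff, Finset.sum_ite,
          Finset.sum_const_zero, zero_add, Finset.sum_const, Finset.sum_const, nsmul_eq_mul,
          nsmul_eq_mul, Int.card_Icc]
        simp only [add_sub_cancel_right, Int.toNat_natCast]
    _ ≤ n * ((2 * L + 1) * c) + (2 * (L + |(p : ℝ)| + |(q : ℝ)|)) * (2 * L + 1) := by
        have := card_edge n H hH0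
        gcongr
        linarith
    _ ≤ n * (3 * L * c) + (2 * (L + |(p : ℝ)| + |(q : ℝ)|)) * (3 * L) := by
        gcongr <;> linarith
    _ = _ := by field_simp; ring

lemma abs_riem_div_sub_le (hr : ∀ x, φ x ∈ Icc (0 : ℝ) 1)
    (hout : ∀ x : ℝ, 1 < |x| → φ x = 0) (hlip0 : 0 < lip)
    (hlip : ∀ x y : ℝ, |φ x - φ y| ≤ lip * |x - y|) (hL : 1 ≤ L) :
    |riem φ L / L - ∫ x in (-1 : ℝ)..1, φ x ^ 2| ≤ 8 * lip / L := by
  have hL0 : 0 < L := by linarith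
  have hcont : Continuous φ :=
    (LipschitzWith.of_dist_le_mul (K := ⟨lip, hlip0.le⟩) fun x y => hlip x y).continuous
  have hcont2 : Continuous fun x => φ x ^ 2 := hcont.pow 2
  have hM : 0 ≤ ⌊L⌋ := Int.floor_nonneg.2 hL0.le
  -- partition points run from `-N / L` to `N / L`, with `N = ⌊L⌋ + 1`
  obtain ⟨N, hN⟩ : ∃ N : ℕ, ⌊L⌋ + 1 = (N : ℤ) := ⟨(⌊L⌋ + 1).toNat, by omega⟩
  have hNr : ((N : ℕ) : ℝ) = ⌊L⌋ + 1 := by exact_mod_cast hN.symm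
  have hNL : L < N := by rw [hNr]; exact Int.lt_floor_add_one L
  have hNL2 : (N : ℝ) ≤ 2 * L := by rw [hNr]; linarith [Int.floor_le L]
  set t : ℕ → ℝ := fun k => ((k : ℝ) - N) / L with ht
  have hint : ∑ k ∈ Finset.range (2 * N), ∫ x in t k..t (k + 1), φ x ^ 2
      = ∫ x in t 0..t (2 * N), φ x ^ 2 :=
    intervalIntegral.sum_integral_adjacent_intervals fun k _ => hcont2.intervalIntegrable _ _
  have hzero : ∀ x : ℝ, 1 < |x| → φ x ^ 2 = 0 := fun x hx => by rw [hout x hx]; simp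
  have t0 : t 0 ≤ -1 := by
    simp only [ht]; rw [div_le_iff₀ hL0]; push_cast; linarith
  have t1 : 1 ≤ t (2 * N) := by
    simp only [ht]; rw [le_div_iff₀ hL0]; push_cast; linarith
  have hI : ∫ x in t 0..t (2 * N), φ x ^ 2 = ∫ x in (-1 : ℝ)..1, φ x ^ 2 := by
    rw [← intervalIntegral.integral_add_adjacent_intervals (b := -1)
      (hcont2.intervalIntegrable _ _) (hcont2.intervalIntegrable _ _),
      ← intervalIntegral.integral_add_adjacent_intervals (a := -1) (b := 1)
      (hcont2.intervalIntegrable _ _) (hcont2.intervalIntegrable _ _)]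
    have z1 : ∫ x in t 0..-1, φ x ^ 2 = 0 := by
      rw [intervalIntegral.integral_of_le t0, integral_Ioc_eq_integral_Ioo]
      refine setIntegral_eq_zero_of_forall_eq_zero fun x hx => hzero x ?_
      rw [lt_abs]; right; linarith [hx.2]
    have z2 : ∫ x in 1..t (2 * N), φ x ^ 2 = 0 := by
      rw [intervalIntegral.integral_of_le t1]
      refine setIntegral_eq_zero_of_forall_eq_zero fun x hx => hzero x ?_
      rw [lt_abs]; left; exact hx.1
    rw [z1, z2]; ring
  have hR : riem φ L = ∑ k ∈ Finset.range (2 * N), φ (t k) ^ 2 := by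
    have e1 : ∑ k ∈ Finset.range (2 * N), φ (t k) ^ 2
        = ∑ m ∈ Finset.Icc (-(N : ℤ)) (N - 1), φ ((m : ℝ) / L) ^ 2 := by
      refine Finset.sum_bij' (fun k _ => (k : ℤ) - N) (fun m _ => (m + N).toNat) ?_ ?_ ?_ ?_ ?_
      · intro k hk; simp only [Finset.mem_range, Finset.mem_Icc] at *; omega
      · intro k hk; simp only [Finset.mem_range, Finset.mem_Icc] at *; omega
      · intro k hk; simp
      · intro k hk; simp only [Finset.mem_Icc] at *; omega
      · intro k hk; simp [ht]
    rw [e1]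
    unfold riem
    refine Finset.sum_subset ?_ ?_
    · intro m hm; simp only [Finset.mem_Icc] at *; omega
    · intro m hm hm'
      apply hzero
      rw [abs_div, abs_of_pos hL0, lt_div_iff₀ hL0, one_mul]
      by_contra! hc
      have h' : (((|m| : ℤ)) : ℝ) ≤ L := by push_cast; exact hc
      have := abs_le.1 (Int.le_floor.2 h')
      simp only [Finset.mem_Icc] at *; omega
  have hstep : ∀ k : ℕ, |φ (t k) ^ 2 / L - ∫ x in t k..t (k + 1), φ x ^ 2| ≤
      2 * lip / L * (1 / L) := by
    intro k
    have hd : t (k + 1) - t k = 1 / L := by simp only [ht]; push_cast; ring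
    have e : φ (t k) ^ 2 / L = ∫ x in t k..t (k + 1), φ (t k) ^ 2 := by
      rw [intervalIntegral.integral_const, hd, smul_eq_mul]; ring
    rw [e, ← intervalIntegral.integral_sub (by simp) (hcont2.intervalIntegrable _ _)]
    have hle : t k ≤ t (k + 1) := by
      have : 0 < 1 / L := by positivity
      linarith
    have hb := intervalIntegral.norm_integral_le_of_norm_le_const (a := t k) (b := t (k + 1))
      (f := fun x => φ (t k) ^ 2 - φ x ^ 2) (C := 2 * lip / L) (fun x hx => by
        rw [uIoc_of_le hle] at hx
        have e4 : φ (t k) ^ 2 - φ x ^ 2 = (φ (t k) + φ x) * (φ (t k) - φ x) := by ring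
        rw [e4, Real.norm_eq_abs, abs_mul]
        have a1 : |φ (t k) + φ x| ≤ 2 := by
          rw [abs_of_nonneg (add_nonneg (hr _).1 (hr _).1)]
          linarith [(hr (t k)).2, (hr x).2]
        have a2 : |φ (t k) - φ x| ≤ lip * (1 / L) := by
          refine (hlip _ _).trans (mul_le_mul_of_nonneg_left ?_ hlip0.le)
          rw [abs_sub_comm, abs_of_nonneg (by linarith [hx.1])]
          linarith [hx.2]
        calc |φ (t k) + φ x| * |φ (t k) - φ x| ≤ 2 * (lip * (1 / L)) :=
              mul_le_mul a1 a2 (abs_nonneg _) (by norm_num)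
          _ = 2 * lip / L := by ring)
    rw [hd, abs_of_pos (by positivity : 0 < 1 / L)] at hb
    exact hb
  rw [← hI, ← hint, hR, Finset.sum_div, ← Finset.sum_sub_distrib]
  refine (Finset.abs_sum_le_sum_abs _ _).trans
    ((Finset.sum_le_card_nsmul _ _ _ fun k _ => hstep k).trans ?_)
  rw [Finset.card_range, nsmul_eq_mul]
  push_cast
  calc 2 * (N : ℝ) * (2 * lip / L * (1 / L)) ≤ 2 * (2 * L) * (2 * lip / L * (1 / L)) := by gcongr
    _ = 8 * lip / L := by field_simp; ring

end kernel

/-! ### Convergence of the weighted sums -/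

lemma summable_decay {s : ℝ} (hs : 1 < s) : Summable fun k : ℤ => (1 + |(k : ℝ)|) ^ (-s) := by
  have h : Summable fun k : ℕ => (1 + (k : ℝ)) ^ (-s) := by
    have := (summable_nat_add_iff 1).2 (Real.summable_nat_rpow.2 (by linarith : -s < -1))
    refine this.congr fun k => ?_
    push_cast; rw [add_comm]
  refine Summable.of_nat_of_neg ?_ ?_
  · simpa using h
  · simpa using h

/-- The error of replacing all weights `W_n(p,q)` by `∫ φ²` in `Σ_{p,q} g(p) h(q) W_n(p,q)`,
uniformly over `g, h` with `|g k|, |h k| ≤ K (1 + |k|)^{-a}`. -/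
noncomputable def kerErr (φ : ℝ → ℝ) (a K L : ℝ) (n : ℕ) : ℝ :=
  ∑' x : ℤ × ℤ, (K * (1 + |(x.1 : ℝ)|) ^ (-a)) * (K * (1 + |(x.2 : ℝ)|) ^ (-a)) *
    |Wn φ L n x.1 x.2 - ∫ t in (-1 : ℝ)..1, φ t ^ 2|

lemma summable_decay_prod {a K : ℝ} (ha : 1 < a) (hK : 0 ≤ K) : Summable fun x : ℤ × ℤ =>
    (K * (1 + |(x.1 : ℝ)|) ^ (-a)) * (K * (1 + |(x.2 : ℝ)|) ^ (-a)) :=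
  ((summable_decay ha).mul_left K).mul_of_nonneg ((summable_decay ha).mul_left K)
    (fun k => by positivity) (fun k => by positivity)

section kernel

variable {φ : ℝ → ℝ} {lip : ℝ}

lemma abs_Wn_sub_le (hr : ∀ x, φ x ∈ Icc (0 : ℝ) 1) (hout : ∀ x : ℝ, 1 < |x| → φ x = 0)
    {L : ℝ} (hL : 1 ≤ L) (n : ℕ) (p q : ℤ) (I : ℝ) : |Wn φ L n p q - I| ≤ 3 + |I| := by
  have h := Wn_bounds hr hout hL n p q
  refine (abs_sub _ _).trans ?_
  rw [abs_of_nonneg h.1]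
  linarith [h.2]

lemma kerErr_tendsto (hr : ∀ x, φ x ∈ Icc (0 : ℝ) 1) (hs : ∀ x, φ (-x) = φ x)
    (hout : ∀ x : ℝ, 1 < |x| → φ x = 0) (hlip0 : 0 < lip)
    (hlip : ∀ x y : ℝ, |φ x - φ y| ≤ lip * |x - y|) {a K : ℝ} (ha : 1 < a) (hK : 0 ≤ K)
    {ℓ : ℕ → ℝ} (hℓtop : Tendsto ℓ atTop atTop)
    (hℓo : Tendsto (fun n : ℕ => ℓ n / (n : ℝ)) atTop (nhds 0)) :
    Tendsto (fun n => kerErr φ a K (ℓ n) n) atTop (nhds 0) := by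
  set I := ∫ t in (-1 : ℝ)..1, φ t ^ 2 with hI
  have key : ∀ p q : ℤ, Tendsto (fun n => |Wn φ (ℓ n) n p q - I|) atTop (nhds 0) := by
    intro p q
    have hinv : Tendsto (fun n => (ℓ n)⁻¹) atTop (nhds 0) := tendsto_inv_atTop_zero.comp hℓtop
    have hninv : Tendsto (fun n : ℕ => (n : ℝ)⁻¹) atTop (nhds 0) :=
      tendsto_inv_atTop_zero.comp tendsto_natCast_atTop_atTop
    have hbd : Tendsto (fun n : ℕ => (3 * (lip * (|(p : ℝ)| + |(q : ℝ)|)) + 8 * lip) * (ℓ n)⁻¹ +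
        6 * (ℓ n / n) + 6 * (|(p : ℝ)| + |(q : ℝ)|) * (n : ℝ)⁻¹) atTop (nhds 0) := by
      have := ((hinv.const_mul (3 * (lip * (|(p : ℝ)| + |(q : ℝ)|)) + 8 * lip)).add
        (hℓo.const_mul 6)).add (hninv.const_mul (6 * (|(p : ℝ)| + |(q : ℝ)|)))
      simpa using this
    refine squeeze_zero' (Eventually.of_forall fun _ => abs_nonneg _) ?_ hbd
    filter_upwards [hℓtop.eventually_ge_atTop 1, eventually_gt_atTop 0] with n hL hn
    have h1 := Wn_sub_riem hr hs hout hlip0 hlip hL hn p q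
    have h2 := abs_riem_div_sub_le hr hout hlip0 hlip hL
    refine (abs_sub_le _ (riem φ (ℓ n) / ℓ n) _).trans ((add_le_add h1 h2).trans (le_of_eq ?_))
    ring
  have h := tendsto_tsum_of_dominated_convergence (𝓕 := atTop)
    (f := fun n (x : ℤ × ℤ) => (K * (1 + |(x.1 : ℝ)|) ^ (-a)) * (K * (1 + |(x.2 : ℝ)|) ^ (-a)) *
      |Wn φ (ℓ n) n x.1 x.2 - I|) (g := fun _ => 0)
    (bound := fun x : ℤ × ℤ => (K * (1 + |(x.1 : ℝ)|) ^ (-a)) * (K * (1 + |(x.2 : ℝ)|) ^ (-a)) *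
      (3 + |I|)) ((summable_decay_prod ha hK).mul_right _)
    (fun x => by simpa using (key x.1 x.2).const_mul _)
    (by
      filter_upwards [hℓtop.eventually_ge_atTop 1] with n hL x
      rw [Real.norm_of_nonneg (by positivity)]
      exact mul_le_mul_of_nonneg_left (abs_Wn_sub_le hr hout hL n _ _ I) (by positivity))
  rw [tsum_zero] at h
  exact h

lemma sum_shift (n : ℕ) {i : ℤ} (hi : i ∈ Finset.Icc (1 : ℤ) n) (F : ℤ → ℝ) :
    ∑ k ∈ Finset.Icc (1 : ℤ) n, F k = ∑ p ∈ Finset.Icc (-(n : ℤ)) n,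
      if i + p ∈ Finset.Icc (1 : ℤ) n then F (i + p) else 0 := by
  rw [← Finset.sum_filter]
  refine Finset.sum_bij' (fun k _ => k - i) (fun p _ => i + p) ?_ ?_ ?_ ?_ ?_
  · intro k hk; simp only [Finset.mem_filter, Finset.mem_Icc] at *; omega
  · intro k hk; simp only [Finset.mem_filter, Finset.mem_Icc] at *; omega
  · intro k hk; simp
  · intro k hk; simp
  · intro k hk; simp

/-- Change of variables `p = k - i`, `q = l - j` in the quadruple sum. -/
lemma quad_eq_tsum (φ : ℝ → ℝ) (L : ℝ) (n : ℕ) (g h : ℤ → ℝ) :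
    ((n : ℝ) * L)⁻¹ * ∑ i ∈ Finset.Icc (1 : ℤ) n, ∑ j ∈ Finset.Icc (1 : ℤ) n,
      ∑ k ∈ Finset.Icc (1 : ℤ) n, ∑ l ∈ Finset.Icc (1 : ℤ) n,
        φ (((i : ℝ) - j) / L) * φ (((k : ℝ) - l) / L) * (g (k - i) * h (l - j))
    = ∑' x : ℤ × ℤ, g x.1 * h x.2 * Wn φ L n x.1 x.2 := by
  have hout : ∀ x : ℤ × ℤ, x ∉ Finset.Icc (-(n : ℤ)) n ×ˢ Finset.Icc (-(n : ℤ)) n →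
      g x.1 * h x.2 * Wn φ L n x.1 x.2 = 0 := by
    intro x hx
    have : Wn φ L n x.1 x.2 = 0 := by
      unfold Wn
      rw [Finset.sum_eq_zero, mul_zero]
      intro i hi
      refine Finset.sum_eq_zero fun j hj => if_neg ?_
      simp only [Finset.mem_product, Finset.mem_Icc] at *
      omega
    rw [this, mul_zero]
  rw [tsum_eq_sum fun x hx => hout x hx, Finset.sum_product]
  simp only [Wn, Finset.mul_sum]
  have swap : ∀ (F : ℤ → ℤ → ℤ → ℤ → ℝ) (s t : Finset ℤ),
      ∑ p ∈ t, ∑ q ∈ t, ∑ i ∈ s, ∑ j ∈ s, F p q i j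
        = ∑ i ∈ s, ∑ j ∈ s, ∑ p ∈ t, ∑ q ∈ t, F p q i j := by
    intro F s t
    calc _ = ∑ p ∈ t, ∑ i ∈ s, ∑ q ∈ t, ∑ j ∈ s, F p q i j :=
          Finset.sum_congr rfl fun p _ => Finset.sum_comm
      _ = ∑ i ∈ s, ∑ p ∈ t, ∑ q ∈ t, ∑ j ∈ s, F p q i j := Finset.sum_comm
      _ = ∑ i ∈ s, ∑ p ∈ t, ∑ j ∈ s, ∑ q ∈ t, F p q i j :=
          Finset.sum_congr rfl fun i _ => Finset.sum_congr rfl fun p _ => Finset.sum_comm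
      _ = _ := Finset.sum_congr rfl fun i _ => Finset.sum_comm
  rw [swap _ (Finset.Icc (1 : ℤ) n) (Finset.Icc (-(n : ℤ)) n)]
  refine Finset.sum_congr rfl fun i hi => Finset.sum_congr rfl fun j hj => ?_
  rw [sum_shift n hi]
  refine Finset.sum_congr rfl fun p _ => ?_
  rw [sum_shift n hj]
  split_ifs with hp
  · refine Finset.sum_congr rfl fun q _ => ?_
    by_cases hq : j + q ∈ Finset.Icc (1 : ℤ) n
    · rw [if_pos hq, if_pos ⟨hp, hq⟩, add_sub_cancel_left, add_sub_cancel_left]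
      ring
    · rw [if_neg hq, if_neg fun h => hq h.2]
      ring
  · symm
    refine Finset.sum_eq_zero fun q _ => ?_
    rw [if_neg fun h => hp h.1]
    ring

/-- The contribution of one Gaussian pairing, with an error uniform over the envelope. -/
lemma quad_sub_le (hr : ∀ x, φ x ∈ Icc (0 : ℝ) 1)
    (hout : ∀ x : ℝ, 1 < |x| → φ x = 0) {a K L : ℝ} (ha : 1 < a) (hK : 0 ≤ K) (hL : 1 ≤ L) (n : ℕ)
    {g h : ℤ → ℝ} (hg : ∀ k, |g k| ≤ K * (1 + |(k : ℝ)|) ^ (-a))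
    (hh : ∀ k, |h k| ≤ K * (1 + |(k : ℝ)|) ^ (-a)) :
    |((n : ℝ) * L)⁻¹ * ∑ i ∈ Finset.Icc (1 : ℤ) n, ∑ j ∈ Finset.Icc (1 : ℤ) n,
      ∑ k ∈ Finset.Icc (1 : ℤ) n, ∑ l ∈ Finset.Icc (1 : ℤ) n,
        φ (((i : ℝ) - j) / L) * φ (((k : ℝ) - l) / L) * (g (k - i) * h (l - j))
      - (∫ t in (-1 : ℝ)..1, φ t ^ 2) * ((∑' k, g k) * ∑' k, h k)| ≤ kerErr φ a K L n := by
  set I := ∫ t in (-1 : ℝ)..1, φ t ^ 2 with hI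
  have hd := (summable_decay ha).mul_left K
  have hgs : Summable g := Summable.of_norm_bounded hd hg
  have hhs : Summable h := Summable.of_norm_bounded hd hh
  have hprod := summable_decay_prod ha hK
  have hghb : ∀ x : ℤ × ℤ, |g x.1 * h x.2| ≤
      (K * (1 + |(x.1 : ℝ)|) ^ (-a)) * (K * (1 + |(x.2 : ℝ)|) ^ (-a)) := fun x => by
    rw [abs_mul]
    exact mul_le_mul (hg _) (hh _) (abs_nonneg _) (by positivity)
  have hgh : Summable fun x : ℤ × ℤ => g x.1 * h x.2 := Summable.of_norm_bounded hprod hghb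
  have hW : Summable fun x : ℤ × ℤ => g x.1 * h x.2 * Wn φ L n x.1 x.2 := by
    refine Summable.of_norm_bounded (hprod.mul_right 3) fun x => ?_
    have := Wn_bounds hr hout hL n x.1 x.2
    rw [norm_mul, Real.norm_of_nonneg this.1]
    exact mul_le_mul (hghb x) this.2 this.1 (by positivity)
  have herr : Summable fun x : ℤ × ℤ => (K * (1 + |(x.1 : ℝ)|) ^ (-a)) *
      (K * (1 + |(x.2 : ℝ)|) ^ (-a)) * |Wn φ L n x.1 x.2 - I| := by
    refine Summable.of_nonneg_of_le (fun x => by positivity) (fun x => ?_)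
      (hprod.mul_right (3 + |I|))
    exact mul_le_mul_of_nonneg_left (abs_Wn_sub_le hr hout hL n _ _ I) (by positivity)
  rw [quad_eq_tsum, hgs.tsum_mul_tsum hhs hgh, ← tsum_mul_left,
    ← hW.tsum_sub (hgh.mul_left I)]
  rw [← Real.norm_eq_abs]
  refine tsum_of_norm_bounded herr.hasSum fun x => ?_
  have e : g x.1 * h x.2 * Wn φ L n x.1 x.2 - I * (g x.1 * h x.2)
      = g x.1 * h x.2 * (Wn φ L n x.1 x.2 - I) := by ring
  rw [e, norm_mul]
  exact mul_le_mul_of_nonneg_right (hghb x) (abs_nonneg _)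

end kernel

/-! ### The variance -/

lemma sum_decay_le {s : ℝ} (hs : 1 < s) (t : Finset ℤ) (i : ℤ) :
    ∑ j ∈ t, (1 + |(j : ℝ) - i|) ^ (-s) ≤ ∑' k : ℤ, (1 + |(k : ℝ)|) ^ (-s) := by
  have h := ((Equiv.subRight i).summable_iff (f := fun k : ℤ => (1 + |(k : ℝ)|) ^ (-s))).2
    (summable_decay hs)
  rw [← (Equiv.subRight i).tsum_eq (fun k : ℤ => (1 + |(k : ℝ)|) ^ (-s))]
  refine le_trans (le_of_eq ?_) (h.sum_le_tsum t fun k _ => ?_)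
  · refine Finset.sum_congr rfl fun j _ => ?_
    simp
  · positivity

lemma sum_abs_cum4_le {P : Measure Ω} [IsProbabilityMeasure P] {U : ℤ → Ω → Fin d → ℝ}
    (hU : ∀ i, Measurable (U i)) (hst : Stationary P U) {a K : ℝ} (ha : 3 < a) (hK0 : 0 ≤ K)
    (hK : MixBound P U a K) (n : ℕ) (u v : Fin d → ℝ) :
    ∑ i ∈ Finset.Icc (1 : ℤ) n, ∑ j ∈ Finset.Icc (1 : ℤ) n, ∑ k ∈ Finset.Icc (1 : ℤ) n,
      ∑ l ∈ Finset.Icc (1 : ℤ) n, |cum4 P U (i, u) (j, v) (k, u) (l, v)|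
    ≤ n * (4 * K * 3 ^ a * (∑' k : ℤ, (1 + |(k : ℝ)|) ^ (-(a / 3))) ^ 3) := by
  set S := ∑' k : ℤ, (1 + |(k : ℝ)|) ^ (-(a / 3)) with hS
  have h3 : 1 < a / 3 := by linarith
  have hrow : ∀ i ∈ Finset.Icc (1 : ℤ) n, ∑ j ∈ Finset.Icc (1 : ℤ) n,
      ∑ k ∈ Finset.Icc (1 : ℤ) n, ∑ l ∈ Finset.Icc (1 : ℤ) n,
        |cum4 P U (i, u) (j, v) (k, u) (l, v)| ≤ 4 * K * 3 ^ a * S ^ 3 := by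
    intro i _
    generalize Finset.Icc (1 : ℤ) n = s
    have hfS := sum_decay_le h3 s i
    rw [← hS] at hfS
    have hle : ∀ j k l : ℤ, |cum4 P U (i, u) (j, v) (k, u) (l, v)| ≤ 4 * K * 3 ^ a *
        ((1 + |(j : ℝ) - i|) ^ (-(a / 3)) * (1 + |(k : ℝ) - i|) ^ (-(a / 3)) *
          (1 + |(l : ℝ) - i|) ^ (-(a / 3))) := fun j k l =>
      abs_cum4_le hU hst (by linarith) hK0 hK (i, u) (j, v) (k, u) (l, v)
    have hf0 : ∀ j : ℤ, 0 ≤ (1 + |(j : ℝ) - i|) ^ (-(a / 3)) := fun j => by positivity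
    obtain ⟨f, hf⟩ : ∃ f : ℤ → ℝ, ∀ j : ℤ, (1 + |(j : ℝ) - i|) ^ (-(a / 3)) = f j :=
      ⟨_, fun _ => rfl⟩
    simp only [hf] at hfS hle hf0
    have hprod : ∑ j ∈ s, ∑ k ∈ s, ∑ l ∈ s, 4 * K * 3 ^ a * (f j * f k * f l)
        = 4 * K * 3 ^ a * (∑ j ∈ s, f j) ^ 3 := by
      simp only [← Finset.mul_sum, ← Finset.sum_mul]
      ring
    refine (Finset.sum_le_sum fun j _ => Finset.sum_le_sum fun k _ =>
      Finset.sum_le_sum fun l _ => hle j k l).trans (hprod.le.trans ?_)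
    have hsum0 : 0 ≤ ∑ j ∈ s, f j := Finset.sum_nonneg fun j _ => hf0 j
    exact mul_le_mul_of_nonneg_left (pow_le_pow_left₀ hsum0 hfS 3) (by positivity)
  refine (Finset.sum_le_card_nsmul _ _ _ hrow).trans (le_of_eq ?_)
  rw [nsmul_eq_mul, Int.card_Icc, add_sub_cancel_right, Int.toNat_natCast]

lemma integrable_prod4 {P : Measure Ω} [IsProbabilityMeasure P] {U : ℤ → Ω → Fin d → ℝ}
    (hU : ∀ i, Measurable (U i)) (x y z w : ℤ × (Fin d → ℝ)) :
    Integrable (fun ω => Zc P U x ω * Zc P U y ω * Zc P U z ω * Zc P U w ω) P := by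
  have hm : ∀ x, Measurable (Zc P U x) := fun x => measurable_Zc P U (hU x.1)
  have hZ := abs_Zc_le P U
  exact Integrable.of_bound ((((hm x).mul (hm y)).mul (hm z)).mul (hm w)).aestronglyMeasurable 1
    (ae_of_all _ fun ω => abs_mul_le_one
      (abs_mul_le_one (abs_mul_le_one (hZ x ω) (hZ y ω)) (hZ z ω)) (hZ w ω))

lemma integrable_prod2 {P : Measure Ω} [IsProbabilityMeasure P] {U : ℤ → Ω → Fin d → ℝ}
    (hU : ∀ i, Measurable (U i)) (x y : ℤ × (Fin d → ℝ)) :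
    Integrable (fun ω => Zc P U x ω * Zc P U y ω) P := by
  have hm : ∀ x, Measurable (Zc P U x) := fun x => measurable_Zc P U (hU x.1)
  have hZ := abs_Zc_le P U
  exact Integrable.of_bound ((hm x).mul (hm y)).aestronglyMeasurable 1
    (ae_of_all _ fun ω => abs_mul_le_one (hZ x ω) (hZ y ω))

lemma varSigTilde_eq {P : Measure Ω} [IsProbabilityMeasure P] {U : ℤ → Ω → Fin d → ℝ}
    (hU : ∀ i, Measurable (U i)) (φ : ℝ → ℝ) (ℓ : ℕ → ℝ) (n : ℕ) (u v : Fin d → ℝ) :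
    varSigTilde P U φ ℓ n u v = ((n : ℝ)⁻¹) ^ 2 * ∑ i ∈ Finset.Icc (1 : ℤ) n,
      ∑ j ∈ Finset.Icc (1 : ℤ) n, ∑ k ∈ Finset.Icc (1 : ℤ) n, ∑ l ∈ Finset.Icc (1 : ℤ) n,
        φ (((i : ℝ) - j) / ℓ n) * φ (((k : ℝ) - l) / ℓ n) *
          (M4 P U (i, u) (j, v) (k, u) (l, v) - M2 P U (i, u) (j, v) * M2 P U (k, u) (l, v)) := by
  set s := Finset.Icc (1 : ℤ) n ×ˢ Finset.Icc (1 : ℤ) n with hs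
  set c : ℤ × ℤ → ℝ := fun e => φ (((e.1 : ℝ) - e.2) / ℓ n) with hc
  have e0 : ∀ ω, sigTilde P U φ ℓ n u v ω
      = (n : ℝ)⁻¹ * ∑ e ∈ s, c e * (Zc P U (e.1, u) ω * Zc P U (e.2, v) ω) := by
    intro ω
    rw [hs, Finset.sum_product]
    rfl
  have e1 : ∫ ω, sigTilde P U φ ℓ n u v ω ∂P
      = (n : ℝ)⁻¹ * ∑ e ∈ s, c e * M2 P U (e.1, u) (e.2, v) := by
    simp only [e0]
    rw [integral_const_mul, integral_finsetSum _ fun e _ => (integrable_prod2 hU _ _).const_mul _]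
    simp only [integral_const_mul]
    rfl
  have e2 : ∫ ω, sigTilde P U φ ℓ n u v ω ^ 2 ∂P = ((n : ℝ)⁻¹) ^ 2 * ∑ e ∈ s, ∑ f ∈ s,
      c e * c f * M4 P U (e.1, u) (e.2, v) (f.1, u) (f.2, v) := by
    have : ∀ ω, sigTilde P U φ ℓ n u v ω ^ 2 = ((n : ℝ)⁻¹) ^ 2 * ∑ e ∈ s, ∑ f ∈ s,
        c e * c f * (Zc P U (e.1, u) ω * Zc P U (e.2, v) ω * Zc P U (f.1, u) ω *
          Zc P U (f.2, v) ω) := by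
      intro ω
      rw [e0, mul_pow, sq (∑ e ∈ s, _), Finset.sum_mul_sum]
      congr 1
      refine Finset.sum_congr rfl fun e _ => Finset.sum_congr rfl fun f _ => ?_
      ring
    simp only [this]
    rw [integral_const_mul, integral_finsetSum _ fun e _ => integrable_finsetSum _ fun f _ =>
      (integrable_prod4 hU _ _ _ _).const_mul _]
    congr 1
    refine Finset.sum_congr rfl fun e _ => ?_
    rw [integral_finsetSum _ fun f _ => (integrable_prod4 hU _ _ _ _).const_mul _]
    simp only [integral_const_mul]
    rfl
  unfold varSigTilde
  rw [e1, e2, mul_pow, ← mul_sub, sq (∑ e ∈ s, _), Finset.sum_mul_sum, ← Finset.sum_sub_distrib]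
  congr 1
  rw [hs, Finset.sum_product]
  refine Finset.sum_congr rfl fun i _ => Finset.sum_congr rfl fun j _ => ?_
  rw [← Finset.sum_sub_distrib, Finset.sum_product]
  refine Finset.sum_congr rfl fun k _ => Finset.sum_congr rfl fun l _ => ?_
  simp only [hc]
  ring

/-- The expansion of the variance with an explicit remainder that does not depend on `u, v`. -/
lemma var_bound {P : Measure Ω} [IsProbabilityMeasure P] {U : ℤ → Ω → Fin d → ℝ}
    (hU : ∀ i, Measurable (U i)) (hst : Stationary P U) {a K : ℝ} (ha : 3 < a) (hK0 : 0 ≤ K)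
    (hK : MixBound P U a K) {φ : ℝ → ℝ} (hr : ∀ x, φ x ∈ Icc (0 : ℝ) 1)
    (hs : ∀ x, φ (-x) = φ x) (hout : ∀ x : ℝ, 1 < |x| → φ x = 0) {ℓ : ℕ → ℝ} {n : ℕ} (hn : 0 < n)
    (hL : 1 ≤ ℓ n) (u v : Fin d → ℝ) :
    |varSigTilde P U φ ℓ n u v - (ℓ n / (n : ℝ)) * DeltaKer P U φ u v| ≤ (ℓ n / n) *
      (4 * K * 3 ^ a * (∑' k : ℤ, (1 + |(k : ℝ)|) ^ (-(a / 3))) ^ 3 * (ℓ n)⁻¹ +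
        2 * kerErr φ a K (ℓ n) n) := by
  have hn' : (0 : ℝ) < n := by exact_mod_cast hn
  set L := ℓ n with hLdef
  have hL0 : 0 < L := by linarith
  set s := Finset.Icc (1 : ℤ) n with hsdef
  set I := ∫ t in (-1 : ℝ)..1, φ t ^ 2 with hI
  set C := 4 * K * 3 ^ a * (∑' k : ℤ, (1 + |(k : ℝ)|) ^ (-(a / 3))) ^ 3 with hC
  have ha1 : 1 < a := by linarith
  have hgam : ∀ (x y : Fin d → ℝ) (k : ℤ), |gam P U k x y| ≤ K * (1 + |(k : ℝ)|) ^ (-a) := by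
    intro x y k
    have := abs_M2_le hU hst hK (0, x) (k, y)
    rw [M2_eq_gam hU hst] at this
    simpa using this
  have hA := quad_sub_le hr hout ha1 hK0 hL n (hgam u u) (hgam v v)
  have hB := quad_sub_le hr hout ha1 hK0 hL n (hgam u v) (h := fun k => gam P U (-k) u v)
    (fun k => by simpa using hgam u v (-k))
  have htneg : ∑' k : ℤ, gam P U (-k) u v = sigC P U u v :=
    (Equiv.neg ℤ).tsum_eq fun k => gam P U k u v
  rw [htneg] at hB
  change |_ - I * (sigC P U u u * sigC P U v v)| ≤ _ at hA
  change |_ - I * (sigC P U u v * sigC P U u v)| ≤ _ at hB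
  set QA := ∑ i ∈ s, ∑ j ∈ s, ∑ k ∈ s, ∑ l ∈ s,
    φ (((i : ℝ) - j) / L) * φ (((k : ℝ) - l) / L) *
      (gam P U (k - i) u u * gam P U (l - j) v v) with hQA
  set QB := ∑ i ∈ s, ∑ j ∈ s, ∑ k ∈ s, ∑ l ∈ s,
    φ (((i : ℝ) - j) / L) * φ (((k : ℝ) - l) / L) *
      (gam P U (k - i) u v * gam P U (-(l - j)) u v) with hQB
  set QC := ∑ i ∈ s, ∑ j ∈ s, ∑ k ∈ s, ∑ l ∈ s,
    φ (((i : ℝ) - j) / L) * φ (((k : ℝ) - l) / L) *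
      cum4 P U (i, u) (j, v) (k, u) (l, v) with hQC
  have hQCb : |QC| ≤ n * C := by
    refine le_trans ?_ (sum_abs_cum4_le hU hst ha hK0 hK n u v)
    refine (Finset.abs_sum_le_sum_abs _ _).trans (Finset.sum_le_sum fun i _ => ?_)
    refine (Finset.abs_sum_le_sum_abs _ _).trans (Finset.sum_le_sum fun j _ => ?_)
    refine (Finset.abs_sum_le_sum_abs _ _).trans (Finset.sum_le_sum fun k _ => ?_)
    refine (Finset.abs_sum_le_sum_abs _ _).trans (Finset.sum_le_sum fun l _ => ?_)
    rw [abs_mul, abs_of_nonneg (mul_nonneg (hr _).1 (hr _).1)]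
    exact mul_le_of_le_one_left (abs_nonneg _) (mul_le_one₀ (hr _).2 (hr _).1 (hr _).2)
  -- exchanging the roles of `k` and `l`, with `φ` even, identifies the second Gaussian pairing
  have hQB' : QB = ∑ i ∈ s, ∑ j ∈ s, ∑ k ∈ s, ∑ l ∈ s,
      φ (((i : ℝ) - j) / L) * φ (((k : ℝ) - l) / L) *
        (M2 P U (i, u) (l, v) * M2 P U (j, v) (k, u)) := by
    refine Finset.sum_congr rfl fun i _ => Finset.sum_congr rfl fun j _ => ?_
    rw [Finset.sum_comm]
    refine Finset.sum_congr rfl fun k _ => Finset.sum_congr rfl fun l _ => ?_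
    rw [M2_comm P U (j, v), M2_eq_gam hU hst, M2_eq_gam hU hst, neg_sub, ← hs (((l : ℝ) - k) / L),
      ← neg_div, neg_sub]
  have hvar : varSigTilde P U φ ℓ n u v = ((n : ℝ)⁻¹) ^ 2 * (QC + QA + QB) := by
    rw [varSigTilde_eq hU, hQB', hQC, hQA]
    simp only [← Finset.sum_add_distrib]
    congr 1
    refine Finset.sum_congr rfl fun i _ => Finset.sum_congr rfl fun j _ =>
      Finset.sum_congr rfl fun k _ => Finset.sum_congr rfl fun l _ => ?_
    rw [← M2_eq_gam hU hst i k, ← M2_eq_gam hU hst j l]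
    unfold cum4
    ring
  have e : varSigTilde P U φ ℓ n u v - (L / (n : ℝ)) * DeltaKer P U φ u v = (L / n) *
      (((n : ℝ) * L)⁻¹ * QC + (((n : ℝ) * L)⁻¹ * QA - I * (sigC P U u u * sigC P U v v)) +
        (((n : ℝ) * L)⁻¹ * QB - I * (sigC P U u v * sigC P U u v))) := by
    rw [hvar, DeltaKer]
    field_simp
    ring
  rw [e, abs_mul, abs_of_pos (by positivity : 0 < L / n)]
  refine mul_le_mul_of_nonneg_left ?_ (by positivity)
  have hC' : |((n : ℝ) * L)⁻¹ * QC| ≤ C * L⁻¹ := by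
    rw [abs_mul, abs_of_pos (by positivity), inv_mul_le_iff₀ (by positivity)]
    refine hQCb.trans (le_of_eq ?_)
    field_simp
  refine (abs_add_le _ _).trans ?_
  have := abs_add_le (((n : ℝ) * L)⁻¹ * QC)
    (((n : ℝ) * L)⁻¹ * QA - I * (sigC P U u u * sigC P U v v))
  linarith

/-- Proposition: variance of `σ̃_n`. Under strong mixing with
`α_r = O(r^{−a})`, `a > 3`, `ℓ_n → ∞` with `ℓ_n = o(n)`, and a Lipschitz multiplier
covariance kernel `φ`, `Var(σ̃_n(u,v)) = (ℓ_n/n) Δ(u,v) + o(ℓ_n/n)` uniformly in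
`u, v ∈ [0,1]^d`. -/
theorem sigTilde_variance_expansion
    (P : Measure Ω) [IsProbabilityMeasure P] (hd : 1 ≤ d)
    (U : ℤ → Ω → Fin d → ℝ) (hUmeas : ∀ i, Measurable (U i))
    (hUrange : ∀ i ω j, U i ω j ∈ Icc (0 : ℝ) 1)
    (hstat : Stationary P U)
    (a : ℝ) (ha : 3 < a) (Ca : ℝ)
    (hmix : ∀ r : ℕ, 1 ≤ r → alphaMix P U r ≤ Ca * (r : ℝ) ^ (-a))
    (ℓ : ℕ → ℝ) (hℓpos : ∀ n, 0 < ℓ n) (hℓtop : Tendsto ℓ atTop atTop)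
    (hℓo : Tendsto (fun n : ℕ => ℓ n / (n : ℝ)) atTop (nhds 0))
    (φ : ℝ → ℝ) (hφrange : ∀ x, φ x ∈ Icc (0 : ℝ) 1)
    (hφsymm : ∀ x, φ (-x) = φ x) (hφ0 : φ 0 = 1)
    (hφout : ∀ x : ℝ, 1 < |x| → φ x = 0)
    (lip : ℝ) (hlippos : 0 < lip)
    (hφlip : ∀ x y : ℝ, |φ x - φ y| ≤ lip * |x - y|) :
    Tendsto
      (fun n : ℕ => ((n : ℝ) / ℓ n) *
        sSup {x : ℝ | ∃ u v : Fin d → ℝ,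
          (∀ j, u j ∈ Icc (0 : ℝ) 1) ∧ (∀ j, v j ∈ Icc (0 : ℝ) 1) ∧
          x = |varSigTilde P U φ ℓ n u v
                - (ℓ n / (n : ℝ)) * DeltaKer P U φ u v|})
      atTop (nhds 0) := by
  obtain ⟨K, hK0, hK⟩ := exists_mixBound hUmeas (by linarith : 0 < a) hmix
  set C := 4 * K * 3 ^ a * (∑' k : ℤ, (1 + |(k : ℝ)|) ^ (-(a / 3))) ^ 3 with hC
  have hlim : Tendsto (fun n => C * (ℓ n)⁻¹ + 2 * kerErr φ a K (ℓ n) n) atTop (nhds 0) := by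
    have := ((tendsto_inv_atTop_zero.comp hℓtop).const_mul C).add
      ((kerErr_tendsto hφrange hφsymm hφout hlippos hφlip (by linarith : 1 < a) hK0
        hℓtop hℓo).const_mul 2)
    simpa using this
  refine squeeze_zero' (Eventually.of_forall fun n => ?_) ?_ hlim
  · refine mul_nonneg (div_nonneg (Nat.cast_nonneg _) (hℓpos n).le) (Real.sSup_nonneg ?_)
    rintro x ⟨u, v, -, -, rfl⟩
    exact abs_nonneg _
  · filter_upwards [hℓtop.eventually_ge_atTop 1, eventually_gt_atTop 0] with n hL hn
    have hn' : (0 : ℝ) < n := by exact_mod_cast hn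
    have hb := var_bound hUmeas hstat ha hK0 hK hφrange hφsymm hφout hn hL
    have hpos := hℓpos n
    have hsup : sSup {x : ℝ | ∃ u v : Fin d → ℝ,
          (∀ j, u j ∈ Icc (0 : ℝ) 1) ∧ (∀ j, v j ∈ Icc (0 : ℝ) 1) ∧
          x = |varSigTilde P U φ ℓ n u v
                - (ℓ n / (n : ℝ)) * DeltaKer P U φ u v|}
        ≤ (ℓ n / n) * (C * (ℓ n)⁻¹ + 2 * kerErr φ a K (ℓ n) n) := by
      refine Real.sSup_le ?_ ((abs_nonneg _).trans (hb 0 0))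
      rintro x ⟨u, v, -, -, rfl⟩
      exact hb u v
    refine (mul_le_mul_of_nonneg_left hsup (by positivity)).trans (le_of_eq ?_)
    field_simp

end Stmt2
end

section
/- Let (U_i)_{i∈ℤ} be a strictly stationary sequence of [0,1]^d-valued random vectors whose strong mixing coefficients satisfy α_r = O(r^{−a}) for some a > 6, and let (ξ_{i,n})_{i∈ℤ} satisfy (M1). Fix q ∈ (2a/(a−3), 4). Then there exists a constant κ > 0 such that for all n ≥ 1, all 0 ≤ s ≤ t ≤ 1 and every half-open hyperrectangle A = (u_1,v_1]×⋯×(u_d,v_d] ⊆ [0,1]^d, E[(B̃_n^ξ((s,t] × A))⁴] ≤ κ·[λ_n(s,t)² ν(A)^{4/q} + n^{−1} λ_n(s,t) ν(A)^{2/q}], where B̃_n^ξ((s,t] × A) = n^{−1/2} Σ_{i=⌊ns⌋+1}^{⌊nt⌋} ξ_{i,n} {1(U_i ∈ A) − ν(A)} and ν(A) = P(U_1 ∈ A). -/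
/-!
Write `Z i = 1(U i ∈ A) - ν(A)`. Expanding the fourth power of the block sum and separating the
multipliers from the data by independence leaves the mixed moments `E[Z i Z j Z k Z l]`, with
multiplier factors bounded by the common bound for the fourth moments of `ξ`
(`integral_multiplier_sum_pow_four_le`).

Put `θ = 2 / q`. A covariance of products of the variables `Z i` across a gap `r` is at most a constant times
both `(1 + r)^(-a)`, by strong mixing, and `ν`, trivially; geometric interpolation bounds it by a
constant times `ν^θ (1 + r)^(-a (1 - θ))` (`MixingEvents.abs_cov_le`), and the condition on `q` says
precisely that `a (1 - θ) > 3`. An ordered quadruple is split at its largest gap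
(`MixingEvents.abs_integral_four_le_of_sorted`). The covariance across that gap is bounded by `ν^θ`
times a product of three kernels `(1 + |·|)^(-a (1 - θ) / 3)`, each of them summable; a split in the
middle adds a product of two pair covariances, of order `ν^(2θ)`. Summation over a block of `N`
indices gives `N ν^θ + N² ν^(2θ)` up to constants (`sum_majorant_le`), and `N = n λ_n(s, t)`.

The moments of the multipliers are Bochner integrals, which vanish for nonintegrable functions, so
the integrability of `ξ⁴` has to be proved. If the fourth power of the block sum is not integrable,
the left-hand side is `0`. If it is integrable and `0 < ν < 1`, mixing prevents the last event of
the block from being determined by the preceding ones (`MixingEvents.not_determined`). Hence two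
indicator patterns that differ only at the last index both have positive probability; by
independence the corresponding combinations of multipliers lie in `L⁴`, and so does their
difference, the last multiplier (`MixingEvents.integrable_multiplier`). Stationarity carries this
over to every index.
-/

open Set Filter MeasureTheory ProbabilityTheory

namespace Stmt3

variable {Ω : Type*} [MeasurableSpace Ω]

/-- σ-field generated by `(Y i)_{i ≤ p}`. -/
def sigmaLE {β : Type*} [MeasurableSpace β] (Y : ℤ → Ω → β) (p : ℤ) :
    MeasurableSpace Ω :=
  ⨆ i ∈ {i : ℤ | i ≤ p}, MeasurableSpace.comap (Y i) inferInstance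

/-- σ-field generated by `(Y i)_{i ≥ p}`. -/
def sigmaGE {β : Type*} [MeasurableSpace β] (Y : ℤ → Ω → β) (p : ℤ) :
    MeasurableSpace Ω :=
  ⨆ i ∈ {i : ℤ | p ≤ i}, MeasurableSpace.comap (Y i) inferInstance

/-- Strong mixing coefficient `α_r` of the sequence `Y`. -/
noncomputable def alphaMix {β : Type*} [MeasurableSpace β]
    (P : Measure Ω) (Y : ℤ → Ω → β) (r : ℕ) : ℝ :=
  sSup {x : ℝ | ∃ (p : ℤ) (A B : Set Ω),
    MeasurableSet[sigmaLE Y p] A ∧ MeasurableSet[sigmaGE Y (p + r)] B ∧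
    x = |(P (A ∩ B)).toReal - (P A).toReal * (P B).toReal|}

/-- Strict stationarity of a sequence indexed by `ℤ`. -/
def Stationary {β : Type*} [MeasurableSpace β]
    (P : Measure Ω) (Y : ℤ → Ω → β) : Prop :=
  ∀ k : ℤ, Measure.map (fun ω (i : ℤ) => Y (i + k) ω) P
    = Measure.map (fun ω (i : ℤ) => Y i ω) P

variable {d : ℕ}

/-- `λ_n(s,t) = (⌊nt⌋ − ⌊ns⌋)/n`. -/
noncomputable def lam (n : ℕ) (s t : ℝ) : ℝ :=
  ((⌊(n : ℝ) * t⌋ : ℝ) - (⌊(n : ℝ) * s⌋ : ℝ)) / (n : ℝ)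

/-- Indicator `1(U_i ∈ A)` of the half-open box `A = (u,v]`. -/
noncomputable def indBox (U : ℤ → Ω → Fin d → ℝ) (i : ℤ) (u v : Fin d → ℝ)
    (ω : Ω) : ℝ :=
  if ∀ j, u j < U i ω j ∧ U i ω j ≤ v j then 1 else 0

/-- `ν(A) = P(U_1 ∈ A)` for the half-open box `A = (u,v]`. -/
noncomputable def nuBox (P : Measure Ω) (U : ℤ → Ω → Fin d → ℝ)
    (u v : Fin d → ℝ) : ℝ :=
  (P {ω | ∀ j, u j < U 1 ω j ∧ U 1 ω j ≤ v j}).toReal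

/-- The multiplier block sum
`B̃_n^ξ((s,t] × A) = n^{−1/2} Σ_{i=⌊ns⌋+1}^{⌊nt⌋} ξ_{i,n} {1(U_i ∈ A) − ν(A)}`. -/
noncomputable def blockSum (P : Measure Ω) (U : ℤ → Ω → Fin d → ℝ)
    (ξ : ℤ → ℕ → Ω → ℝ) (n : ℕ) (s t : ℝ) (u v : Fin d → ℝ) (ω : Ω) : ℝ :=
  (Real.sqrt n)⁻¹ * ∑ i ∈ Finset.Icc (⌊(n : ℝ) * s⌋ + 1) ⌊(n : ℝ) * t⌋,
    ξ i n ω * (indBox U i u v ω - nuBox P U u v)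

/-! ### The decay kernel and summation over index tuples -/

/-- The kernel `(1 + |k|)^{-c}` on `ℤ`, which is summable when `c > 1`. -/
noncomputable def decay (c : ℝ) (k : ℤ) : ℝ := (1 + |(k : ℝ)|) ^ (-c)

lemma decay_pos (c : ℝ) (k : ℤ) : 0 < decay c k := by
  unfold decay; positivity

lemma decay_le_one {c : ℝ} (hc : 0 ≤ c) (k : ℤ) : decay c k ≤ 1 := by
  unfold decay
  exact Real.rpow_le_one_of_one_le_of_nonpos (by linarith [abs_nonneg (k : ℝ)]) (by linarith)

lemma decay_neg (c : ℝ) (k : ℤ) : decay c (-k) = decay c k := by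
  simp [decay]

lemma decay_comm (c : ℝ) (i j : ℤ) : decay c (i - j) = decay c (j - i) := by
  rw [← decay_neg, neg_sub]

/-- A gap at least a third of `|m|` has kernel value at most `3^c` times that of `m`. -/
lemma decay_le_of_le_three_mul {c : ℝ} (hc : 0 ≤ c) {g m : ℤ} (h : |m| ≤ 3 * |g|) :
    decay c g ≤ 3 ^ c * decay c m := by
  have h' : |(m : ℝ)| ≤ 3 * |(g : ℝ)| := by exact_mod_cast h
  have h0 := abs_nonneg (m : ℝ)
  have h1 := abs_nonneg (g : ℝ)
  unfold decay
  calc (1 + |(g : ℝ)|) ^ (-c) ≤ ((1 + |(m : ℝ)|) / 3) ^ (-c) :=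
        Real.rpow_le_rpow_of_nonpos (by positivity) (by linarith) (by linarith)
    _ = 3 ^ c * (1 + |(m : ℝ)|) ^ (-c) := by
        rw [Real.div_rpow (by positivity) (by norm_num), Real.rpow_neg (by norm_num : (0:ℝ) ≤ 3)]
        field_simp

lemma summable_decay {c : ℝ} (hc : 1 < c) : Summable (decay c) := by
  have h : Summable fun n : ℕ => ((n : ℝ) + 1) ^ (-c) := by
    have := (summable_nat_add_iff 1).2 (Real.summable_nat_rpow.2 (by linarith : -c < -1))
    simpa using this
  apply Summable.of_nat_of_neg
  · simpa [decay, add_comm] using h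
  · simpa [decay, add_comm] using h

lemma sum_decay_le {c : ℝ} (hc : 1 < c) (I : Finset ℤ) (i : ℤ) :
    ∑ j ∈ I, decay c (i - j) ≤ ∑' k, decay c k := by
  have hs : Summable fun j : ℤ => decay c (i - j) :=
    (Equiv.subLeft i).summable_iff.2 (summable_decay hc)
  calc ∑ j ∈ I, decay c (i - j) ≤ ∑' j : ℤ, decay c (i - j) :=
        hs.sum_le_tsum I fun j _ => (decay_pos c _).le
    _ = ∑' k, decay c k := (Equiv.subLeft i).tsum_eq (decay c)

/-- Product of the kernel over the three edges joining the centre `i` to `j`, `k`, `l`. -/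
noncomputable def star (c : ℝ) (i j k l : ℤ) : ℝ :=
  decay c (i - j) * decay c (i - k) * decay c (i - l)

/-- Product of the kernel over the two edges of the pairing `{i, j}`, `{k, l}`. -/
noncomputable def pairing (c : ℝ) (i j k l : ℤ) : ℝ :=
  decay c (i - j) * decay c (k - l)

/-- Symmetric majorant for fourth order mixed moments: `x` weighs the stars around each of the
four indices, `y` weighs the three pairings. -/
noncomputable def majorant (c x y : ℝ) (i j k l : ℤ) : ℝ :=
  x * (star c i j k l + star c j i k l + star c k i j l + star c l i j k)
    + y * (pairing c i j k l + pairing c i k j l + pairing c i l j k)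

lemma star_pos (c : ℝ) (i j k l : ℤ) : 0 < star c i j k l :=
  mul_pos (mul_pos (decay_pos _ _) (decay_pos _ _)) (decay_pos _ _)

lemma pairing_pos (c : ℝ) (i j k l : ℤ) : 0 < pairing c i j k l :=
  mul_pos (decay_pos _ _) (decay_pos _ _)

lemma decay_cube_le_star {c : ℝ} (hc : 0 ≤ c) {g i j k l : ℤ} (hj : |i - j| ≤ 3 * |g|)
    (hk : |i - k| ≤ 3 * |g|) (hl : |i - l| ≤ 3 * |g|) :
    decay c g ^ 3 ≤ (3 ^ c) ^ 3 * star c i j k l := by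
  have d0 := (decay_pos c g).le
  have d1 := decay_le_of_le_three_mul hc hj
  have d2 := decay_le_of_le_three_mul hc hk
  have d3 := decay_le_of_le_three_mul hc hl
  have p1 := (decay_pos c (i - j)).le
  have p2 := (decay_pos c (i - k)).le
  have p3 := (decay_pos c (i - l)).le
  calc decay c g ^ 3 = decay c g * decay c g * decay c g := by ring
    _ ≤ (3 ^ c * decay c (i - j)) * (3 ^ c * decay c (i - k)) * (3 ^ c * decay c (i - l)) := by
        gcongr
    _ = _ := by unfold star; ring

lemma majorant_swap12 (c x y : ℝ) (i j k l : ℤ) :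
    majorant c x y i j k l = majorant c x y j i k l := by
  unfold majorant star pairing
  rw [decay_comm c j i, decay_comm c k i, decay_comm c k j, decay_comm c l i, decay_comm c l j]
  ring

lemma majorant_swap23 (c x y : ℝ) (i j k l : ℤ) :
    majorant c x y i j k l = majorant c x y i k j l := by
  unfold majorant star pairing
  rw [decay_comm c k j]
  ring

lemma majorant_swap34 (c x y : ℝ) (i j k l : ℤ) :
    majorant c x y i j k l = majorant c x y i j l k := by
  unfold majorant star pairing
  rw [decay_comm c l k]
  ring

/-- A property of four integers that is invariant under adjacent transpositions may be checked on
nondecreasing quadruples. The proof runs a sorting network. -/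
lemma of_sorted {p : ℤ → ℤ → ℤ → ℤ → Prop}
    (h12 : ∀ i j k l, p i j k l → p j i k l) (h23 : ∀ i j k l, p i j k l → p i k j l)
    (h34 : ∀ i j k l, p i j k l → p i j l k)
    (hp : ∀ i j k l, i ≤ j → j ≤ k → k ≤ l → p i j k l) (i j k l : ℤ) : p i j k l := by
  have c12 : ∀ i j k l, p (min i j) (max i j) k l → p i j k l := by
    intro i j k l h
    rcases le_total i j with hij | hij
    · simpa [hij] using h
    · exact h12 _ _ _ _ (by simpa [hij] using h)
  have c23 : ∀ i j k l, p i (min j k) (max j k) l → p i j k l := by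
    intro i j k l h
    rcases le_total j k with hij | hij
    · simpa [hij] using h
    · exact h23 _ _ _ _ (by simpa [hij] using h)
  have c34 : ∀ i j k l, p i j (min k l) (max k l) → p i j k l := by
    intro i j k l h
    rcases le_total k l with hij | hij
    · simpa [hij] using h
    · exact h34 _ _ _ _ (by simpa [hij] using h)
  apply c12; apply c23; apply c34
  apply c12; apply c23; apply c12
  apply hp <;> omega

lemma sum_star_le {c : ℝ} (hc : 1 < c) (I : Finset ℤ) :
    ∑ i ∈ I, ∑ j ∈ I, ∑ k ∈ I, ∑ l ∈ I, star c i j k l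
      ≤ I.card * (∑' k, decay c k) ^ 3 := by
  have hS : 0 ≤ ∑' k, decay c k := tsum_nonneg fun k => (decay_pos c k).le
  have h : ∀ i ∈ I, ∑ j ∈ I, ∑ k ∈ I, ∑ l ∈ I, star c i j k l ≤ (∑' k, decay c k) ^ 3 := by
    intro i _
    have h0 : 0 ≤ ∑ j ∈ I, decay c (i - j) := Finset.sum_nonneg fun j _ => (decay_pos c _).le
    calc ∑ j ∈ I, ∑ k ∈ I, ∑ l ∈ I, star c i j k l = (∑ j ∈ I, decay c (i - j)) ^ 3 := by
          simp only [star, pow_succ, pow_zero, one_mul, ← Finset.mul_sum, ← Finset.sum_mul]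
      _ ≤ _ := pow_le_pow_left₀ h0 (sum_decay_le hc I i) 3
  calc _ ≤ ∑ i ∈ I, (∑' k, decay c k) ^ 3 := Finset.sum_le_sum h
    _ = _ := by simp

lemma sum_pairing_le {c : ℝ} (hc : 1 < c) (I : Finset ℤ) :
    ∑ i ∈ I, ∑ j ∈ I, ∑ k ∈ I, ∑ l ∈ I, pairing c i j k l
      ≤ (I.card * ∑' k, decay c k) ^ 2 := by
  have h0 : 0 ≤ ∑ i ∈ I, ∑ j ∈ I, decay c (i - j) :=
    Finset.sum_nonneg fun i _ => Finset.sum_nonneg fun j _ => (decay_pos c _).le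
  have h1 : ∑ i ∈ I, ∑ j ∈ I, decay c (i - j) ≤ I.card * ∑' k, decay c k := by
    calc _ ≤ ∑ i ∈ I, ∑' k, decay c k := Finset.sum_le_sum fun i _ => sum_decay_le hc I i
      _ = _ := by simp
  calc ∑ i ∈ I, ∑ j ∈ I, ∑ k ∈ I, ∑ l ∈ I, pairing c i j k l
      = (∑ i ∈ I, ∑ j ∈ I, decay c (i - j)) ^ 2 := by
        simp only [pairing, pow_two, ← Finset.mul_sum, ← Finset.sum_mul]
    _ ≤ _ := pow_le_pow_left₀ h0 h1 2

lemma sum_majorant_le {c : ℝ} (hc : 1 < c) {x y : ℝ} (hx : 0 ≤ x) (hy : 0 ≤ y) (I : Finset ℤ) :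
    ∑ i ∈ I, ∑ j ∈ I, ∑ k ∈ I, ∑ l ∈ I, majorant c x y i j k l
      ≤ 4 * x * (I.card * (∑' k, decay c k) ^ 3)
        + 3 * y * (I.card * ∑' k, decay c k) ^ 2 := by
  have s1 := sum_star_le hc I
  have s2 : ∑ i ∈ I, ∑ j ∈ I, ∑ k ∈ I, ∑ l ∈ I, star c j i k l
      ≤ I.card * (∑' k, decay c k) ^ 3 := by
    rw [Finset.sum_comm]; exact s1
  have s3 : ∑ i ∈ I, ∑ j ∈ I, ∑ k ∈ I, ∑ l ∈ I, star c k i j l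
      ≤ I.card * (∑' k, decay c k) ^ 3 := by
    refine le_of_eq_of_le ?_ s2
    exact Finset.sum_congr rfl fun i _ => Finset.sum_comm
  have s4 : ∑ i ∈ I, ∑ j ∈ I, ∑ k ∈ I, ∑ l ∈ I, star c l i j k
      ≤ I.card * (∑' k, decay c k) ^ 3 := by
    refine le_of_eq_of_le ?_ s3
    exact Finset.sum_congr rfl fun i _ => Finset.sum_congr rfl fun j _ => Finset.sum_comm
  have p1 := sum_pairing_le hc I
  have p2 : ∑ i ∈ I, ∑ j ∈ I, ∑ k ∈ I, ∑ l ∈ I, pairing c i k j l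
      ≤ (I.card * ∑' k, decay c k) ^ 2 := by
    refine le_of_eq_of_le ?_ p1
    exact Finset.sum_congr rfl fun i _ => Finset.sum_comm
  have p3 : ∑ i ∈ I, ∑ j ∈ I, ∑ k ∈ I, ∑ l ∈ I, pairing c i l j k
      ≤ (I.card * ∑' k, decay c k) ^ 2 := by
    refine le_of_eq_of_le ?_ p2
    exact Finset.sum_congr rfl fun i _ => Finset.sum_congr rfl fun j _ => Finset.sum_comm
  simp only [majorant, mul_add, Finset.sum_add_distrib, ← Finset.mul_sum]
  have := mul_le_mul_of_nonneg_left s1 hx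
  have := mul_le_mul_of_nonneg_left s2 hx
  have := mul_le_mul_of_nonneg_left s3 hx
  have := mul_le_mul_of_nonneg_left s4 hx
  have := mul_le_mul_of_nonneg_left p1 hy
  have := mul_le_mul_of_nonneg_left p2 hy
  have := mul_le_mul_of_nonneg_left p3 hy
  linarith


/-! ### Covariances under strong mixing -/

/-- `f` is a finite linear combination of indicators of `m`-measurable sets whose coefficients
have absolute values summing to at most `K`. -/
def Elementary {S : Type*} (m : MeasurableSpace S) (K : ℝ) (f : S → ℝ) : Prop :=
  ∃ (ι : Type) (_ : Fintype ι) (c : ι → ℝ) (A : ι → Set S), (∀ i, MeasurableSet[m] (A i)) ∧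
    ∑ i, |c i| ≤ K ∧ ∀ ω, f ω = ∑ i, c i * (A i).indicator 1 ω

lemma Elementary.mul {S : Type*} {m : MeasurableSpace S} {K L : ℝ} {f g : S → ℝ}
    (hf : Elementary m K f) (hg : Elementary m L g) :
    Elementary m (K * L) (fun ω => f ω * g ω) := by
  obtain ⟨ι, _, c, A, hA, hc, hf⟩ := hf
  obtain ⟨κ, _, e, B, hB, he, hg⟩ := hg
  refine ⟨ι × κ, inferInstance, fun p => c p.1 * e p.2, fun p => A p.1 ∩ B p.2,
    fun p => (hA _).inter (hB _), ?_, fun ω => ?_⟩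
  · rw [Fintype.sum_prod_type]
    simp only [abs_mul, ← Fintype.sum_mul_sum]
    exact mul_le_mul hc he (Finset.sum_nonneg fun _ _ => abs_nonneg _)
      ((Finset.sum_nonneg fun _ _ => abs_nonneg _).trans hc)
  · simp only [hf, hg]
    rw [Fintype.sum_mul_sum, Fintype.sum_prod_type]
    refine Finset.sum_congr rfl fun i _ => Finset.sum_congr rfl fun j _ => ?_
    rw [Set.inter_indicator_one, Pi.mul_apply]
    ring

lemma elementary_indicator_sub {S : Type*} {m : MeasurableSpace S} {E : Set S} (hE : MeasurableSet[m] E)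
    {x : ℝ} (h0 : 0 ≤ x) (h1 : x ≤ 1) :
    Elementary m 2 (fun ω => E.indicator 1 ω - x) := by
  refine ⟨Bool, inferInstance, fun b => if b then 1 else -x, fun b => if b then E else univ,
    ?_, ?_, ?_⟩
  · intro b
    cases b
    · simp
    · simpa using hE
  · simp [abs_of_nonneg h0]; linarith
  · intro ω; simp; ring

/-- Mixing inequality for elementary functions, by bilinearity of the covariance. -/
lemma Elementary.abs_cov_le {S : Type*} {m₁ m₂ m₀ : MeasurableSpace S} {P : Measure S}
    [IsProbabilityMeasure P] (h₁ : m₁ ≤ m₀) (h₂ : m₂ ≤ m₀)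
    {x : ℝ} (hmix : ∀ A B, MeasurableSet[m₁] A → MeasurableSet[m₂] B →
      |P.real (A ∩ B) - P.real A * P.real B| ≤ x)
    {K L : ℝ} {f g : S → ℝ} (hf : Elementary m₁ K f) (hg : Elementary m₂ L g) :
    |∫ ω, f ω * g ω ∂P - (∫ ω, f ω ∂P) * ∫ ω, g ω ∂P| ≤ K * L * x := by
  obtain ⟨ι, _, c, A, hA, hc, hf⟩ := hf
  obtain ⟨κ, _, e, B, hB, he, hg⟩ := hg
  have hx : 0 ≤ x := (abs_nonneg _).trans (hmix univ univ MeasurableSet.univ MeasurableSet.univ)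
  have hind : ∀ T : Set S, MeasurableSet T → Integrable (T.indicator (1 : S → ℝ)) P :=
    fun T hT => (integrable_const (1 : ℝ)).indicator hT
  have e1 : ∫ ω, f ω ∂P = ∑ i, c i * P.real (A i) := by
    simp_rw [hf]
    rw [integral_finsetSum _ fun i _ => (hind _ (h₁ _ (hA i))).const_mul _]
    simp_rw [integral_const_mul, integral_indicator_one (h₁ _ (hA _))]
  have e2 : ∫ ω, g ω ∂P = ∑ i, e i * P.real (B i) := by
    simp_rw [hg]
    rw [integral_finsetSum _ fun i _ => (hind _ (h₂ _ (hB i))).const_mul _]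
    simp_rw [integral_const_mul, integral_indicator_one (h₂ _ (hB _))]
  have e3 : ∫ ω, f ω * g ω ∂P = ∑ i, ∑ j, c i * e j * P.real (A i ∩ B j) := by
    have : ∀ ω, f ω * g ω = ∑ i, ∑ j, c i * e j * (A i ∩ B j).indicator 1 ω := by
      intro ω
      rw [hf, hg, Fintype.sum_mul_sum]
      refine Finset.sum_congr rfl fun i _ => Finset.sum_congr rfl fun j _ => ?_
      rw [Set.inter_indicator_one, Pi.mul_apply]
      ring
    have hm : ∀ i j, MeasurableSet (A i ∩ B j) := fun i j => (h₁ _ (hA i)).inter (h₂ _ (hB j))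
    simp_rw [this]
    rw [integral_finsetSum _ fun i _ => integrable_finsetSum _ fun j _ =>
      (hind _ (hm i j)).const_mul _]
    refine Finset.sum_congr rfl fun i _ => ?_
    rw [integral_finsetSum _ fun j _ => (hind _ (hm i j)).const_mul _]
    simp_rw [integral_const_mul, integral_indicator_one (hm _ _)]
  rw [e1, e2, e3, Fintype.sum_mul_sum, ← Finset.sum_sub_distrib]
  simp_rw [← Finset.sum_sub_distrib]
  calc |∑ i, ∑ j, (c i * e j * P.real (A i ∩ B j) - c i * P.real (A i) * (e j * P.real (B j)))|
      ≤ ∑ i, ∑ j, |c i| * |e j| * x := by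
        refine (Finset.abs_sum_le_sum_abs _ _).trans (Finset.sum_le_sum fun i _ => ?_)
        refine (Finset.abs_sum_le_sum_abs _ _).trans (Finset.sum_le_sum fun j _ => ?_)
        rw [show c i * e j * P.real (A i ∩ B j) - c i * P.real (A i) * (e j * P.real (B j))
          = c i * e j * (P.real (A i ∩ B j) - P.real (A i) * P.real (B j)) by ring,
          abs_mul, abs_mul]
        exact mul_le_mul_of_nonneg_left (hmix _ _ (hA i) (hB j)) (by positivity)
    _ = (∑ i, |c i|) * (∑ j, |e j|) * x := by
        rw [Fintype.sum_mul_sum, Finset.sum_mul]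
        simp_rw [Finset.sum_mul]
    _ ≤ K * L * x := by
        refine mul_le_mul_of_nonneg_right ?_ hx
        exact mul_le_mul hc he (Finset.sum_nonneg fun _ _ => abs_nonneg _)
          ((Finset.sum_nonneg fun _ _ => abs_nonneg _).trans hc)

/-- Geometric interpolation between two upper bounds. -/
lemma le_rpow_mul_rpow {x A B θ : ℝ} (hx : 0 ≤ x) (hA : x ≤ A) (hB : x ≤ B)
    (h0 : 0 ≤ θ) (h1 : θ ≤ 1) : x ≤ A ^ (1 - θ) * B ^ θ := by
  rcases hx.eq_or_lt with rfl | hx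
  · positivity
  calc x = x ^ (1 - θ) * x ^ θ := by rw [← Real.rpow_add hx]; simp
    _ ≤ A ^ (1 - θ) * B ^ θ := by
      have hA0 := Real.rpow_nonneg (hx.le.trans hA) (1 - θ)
      gcongr

/-! ### Fourth order mixed moments of centred indicators -/

/-- Events `E i` of common probability `ν`, adapted to a past filtration `mL` and a future
filtration `mG` whose dependence across a gap `r` is at most `C (1 + r)^{-a}`. -/
structure MixingEvents (P : Measure Ω) (E : ℤ → Set Ω) (mL mG : ℤ → MeasurableSpace Ω)
    (ν C a : ℝ) : Prop where
  le_left : ∀ p, mL p ≤ ‹MeasurableSpace Ω›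
  le_right : ∀ p, mG p ≤ ‹MeasurableSpace Ω›
  meas_left : ∀ i p, i ≤ p → MeasurableSet[mL p] (E i)
  meas_right : ∀ i p, p ≤ i → MeasurableSet[mG p] (E i)
  prob : ∀ i, P.real (E i) = ν
  one_le : 1 ≤ C
  mix : ∀ p r : ℤ, p ≤ r → ∀ A B, MeasurableSet[mL p] A → MeasurableSet[mG r] B →
    |P.real (A ∩ B) - P.real A * P.real B| ≤ C * (1 + |((r - p : ℤ) : ℝ)|) ^ (-a)

/-- The centred indicator of an event, `1_E - x`. -/
noncomputable def centred {S : Type*} (E : ℤ → Set S) (x : ℝ) (i : ℤ) (ω : S) : ℝ :=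
  (E i).indicator 1 ω - x

lemma abs_centred_le {S : Type*} {E : ℤ → Set S} {x : ℝ} (h0 : 0 ≤ x) (h1 : x ≤ 1)
    (i : ℤ) (ω : S) :
    |centred E x i ω| ≤ 1 := by
  unfold centred
  by_cases h : ω ∈ E i
  · simp [h, abs_le]; constructor <;> linarith
  · simp [h, abs_of_nonneg h0, h1]

namespace MixingEvents

variable {P : Measure Ω} {E : ℤ → Set Ω}
  {mL mG : ℤ → MeasurableSpace Ω} {ν C a : ℝ}

lemma nu_nonneg (h : MixingEvents P E mL mG ν C a) : 0 ≤ ν := by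
  rw [← h.prob 0]; exact measureReal_nonneg

lemma meas (h : MixingEvents P E mL mG ν C a) (i : ℤ) : MeasurableSet (E i) :=
  h.le_left i _ (h.meas_left i i le_rfl)

lemma measurable_centred (h : MixingEvents P E mL mG ν C a) (i : ℤ) :
    Measurable (centred E ν i) :=
  (measurable_one.indicator (h.meas i)).sub_const ν

variable [IsProbabilityMeasure P]

lemma nu_le_one (h : MixingEvents P E mL mG ν C a) : ν ≤ 1 := by
  rw [← h.prob 0]; exact measureReal_le_one

lemma integrable_indicator (h : MixingEvents P E mL mG ν C a) (i : ℤ) :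
    Integrable ((E i).indicator (1 : Ω → ℝ)) P :=
  (integrable_const (1 : ℝ)).indicator (h.meas i)

lemma integrable_centred (h : MixingEvents P E mL mG ν C a) (i : ℤ) :
    Integrable (centred E ν i) P :=
  (h.integrable_indicator i).sub (integrable_const ν)

lemma integral_centred (h : MixingEvents P E mL mG ν C a) (i : ℤ) :
    ∫ ω, centred E ν i ω ∂P = 0 := by
  unfold centred
  rw [integral_sub (h.integrable_indicator i) (integrable_const ν),
    integral_indicator_one (h.meas i), h.prob]
  simp

lemma integral_abs_centred_le (h : MixingEvents P E mL mG ν C a) (i : ℤ) :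
    ∫ ω, |centred E ν i ω| ∂P ≤ 2 * ν := by
  calc ∫ ω, |centred E ν i ω| ∂P ≤ ∫ ω, ((E i).indicator 1 ω + ν) ∂P := by
        refine integral_mono (h.integrable_centred i).abs
          ((h.integrable_indicator i).add (integrable_const ν))
          fun ω => ?_
        refine (abs_sub _ _).trans (add_le_add (le_of_eq ?_) (abs_of_nonneg h.nu_nonneg).le)
        exact abs_of_nonneg (indicator_nonneg (fun _ _ => zero_le_one) _)
    _ = 2 * ν := by
        rw [integral_add (h.integrable_indicator i) (integrable_const ν),
          integral_indicator_one (h.meas i), h.prob]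
        simp; ring

/-- A moment with a factor `1_{E i} - ν` is of order `ν` when the other factor is bounded. -/
lemma abs_integral_centred_mul_le (h : MixingEvents P E mL mG ν C a) (i : ℤ) {g : Ω → ℝ}
    (hg : ∀ ω, |g ω| ≤ 1) : |∫ ω, centred E ν i ω * g ω ∂P| ≤ 2 * ν := by
  refine (abs_integral_le_integral_abs).trans (le_trans ?_ (h.integral_abs_centred_le i))
  refine integral_mono_of_nonneg (ae_of_all _ fun ω => abs_nonneg _) (h.integrable_centred i).abs
    (ae_of_all _ fun ω => ?_)
  simp only [abs_mul]
  exact mul_le_of_le_one_right (abs_nonneg _) (hg ω)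

lemma elementary_left (h : MixingEvents P E mL mG ν C a) {i p : ℤ} (hip : i ≤ p) :
    Elementary (mL p) 2 (centred E ν i) :=
  elementary_indicator_sub (h.meas_left i p hip) h.nu_nonneg h.nu_le_one

lemma elementary_right (h : MixingEvents P E mL mG ν C a) {i p : ℤ} (hip : p ≤ i) :
    Elementary (mG p) 2 (centred E ν i) :=
  elementary_indicator_sub (h.meas_right i p hip) h.nu_nonneg h.nu_le_one

/-- Covariance inequality: interpolation between the mixing bound and the trivial bound of
order `ν`. -/
lemma abs_cov_le (h : MixingEvents P E mL mG ν C a) {θ : ℝ} (h0 : 0 ≤ θ) (h1 : θ ≤ 1)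
    {p r : ℤ} (hpr : p ≤ r) {K L : ℝ} {f g : Ω → ℝ} (hf : Elementary (mL p) K f)
    (hg : Elementary (mG r) L g) (hKL : K * L ≤ 16)
    (hν : |∫ ω, f ω * g ω ∂P - (∫ ω, f ω ∂P) * ∫ ω, g ω ∂P| ≤ 16 * ν) :
    |∫ ω, f ω * g ω ∂P - (∫ ω, f ω ∂P) * ∫ ω, g ω ∂P|
      ≤ 16 * C * ν ^ θ * decay (a * (1 - θ) / 3) (r - p) ^ 3 := by
  have hC := h.one_le
  have hn := h.nu_nonneg
  set D : ℝ := 1 + |((r - p : ℤ) : ℝ)| with hD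
  have hDpos : 0 < D := by positivity
  have b1 := hf.abs_cov_le (h.le_left p) (h.le_right r) (h.mix p r hpr) hg
  rw [← hD] at b1
  have b2 : K * L * (C * D ^ (-a)) ≤ 16 * C * D ^ (-a) := by
    rw [mul_assoc 16]; exact mul_le_mul_of_nonneg_right hKL (by positivity)
  have b3 : 16 * ν ≤ 16 * C * ν := by nlinarith
  refine (le_rpow_mul_rpow (abs_nonneg _) (b1.trans b2) (hν.trans b3) h0 h1).trans (le_of_eq ?_)
  rw [Real.mul_rpow (by positivity) (by positivity), Real.mul_rpow (by positivity) hn]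
  have e1 : (16 * C) ^ (1 - θ) * (16 * C) ^ θ = 16 * C := by
    rw [← Real.rpow_add (by positivity)]; simp
  have e2 : (D ^ (-a)) ^ (1 - θ) = decay (a * (1 - θ) / 3) (r - p) ^ 3 := by
    unfold decay
    rw [← hD, ← Real.rpow_mul hDpos.le, ← Real.rpow_natCast, ← Real.rpow_mul hDpos.le]
    congr 1
    push_cast
    ring
  rw [e2]
  linear_combination (ν ^ θ * decay (a * (1 - θ) / 3) (r - p) ^ 3) * e1

lemma abs_integral_pair_le (h : MixingEvents P E mL mG ν C a) {θ : ℝ} (h0 : 0 ≤ θ) (h1 : θ ≤ 1)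
    {i j : ℤ} (hij : i ≤ j) :
    |∫ ω, centred E ν i ω * centred E ν j ω ∂P|
      ≤ 16 * C * ν ^ θ * decay (a * (1 - θ) / 3) (j - i) ^ 3 := by
  have hn := h.nu_nonneg
  have := h.abs_cov_le h0 h1 hij (h.elementary_left le_rfl) (h.elementary_right le_rfl)
    (by norm_num) (by
      rw [h.integral_centred, zero_mul, sub_zero]
      refine (h.abs_integral_centred_mul_le i
        (abs_centred_le h.nu_nonneg h.nu_le_one j)).trans (by linarith))
  rwa [h.integral_centred, zero_mul, sub_zero] at this

/-- Ordered quadruples: split at the largest of the three gaps. At an outer gap one factor is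
centred, so the moment is a covariance; at the middle gap the product of the two pair moments
remains. -/
lemma abs_integral_four_le_of_sorted (h : MixingEvents P E mL mG ν C a) (ha : 0 ≤ a) {θ : ℝ}
    (h0 : 0 ≤ θ) (h1 : θ ≤ 1) {i j k l : ℤ} (hij : i ≤ j) (hjk : j ≤ k) (hkl : k ≤ l) :
    |∫ ω, centred E ν i ω * centred E ν j ω * centred E ν k ω * centred E ν l ω ∂P|
      ≤ 16 * C * ν ^ θ * (3 ^ (a * (1 - θ) / 3)) ^ 3 * star (a * (1 - θ) / 3) i j k l
        + (16 * C * ν ^ θ) ^ 2 * pairing (a * (1 - θ) / 3) i j k l := by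
  have hn := h.nu_nonneg
  have hC := h.one_le
  set c : ℝ := a * (1 - θ) / 3 with hc
  have hc0 : 0 ≤ c := by
    have : 0 ≤ 1 - θ := by linarith
    positivity
  set M : ℝ := 16 * C * ν ^ θ with hM
  have hM0 : 0 ≤ M := by positivity
  have hZ : ∀ i ω, |centred E ν i ω| ≤ 1 := abs_centred_le h.nu_nonneg h.nu_le_one
  have hZZ : ∀ i j ω, |centred E ν i ω * centred E ν j ω| ≤ 1 := fun i j ω => by
    rw [abs_mul]; exact mul_le_one₀ (hZ i ω) (abs_nonneg _) (hZ j ω)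
  have hZZZ : ∀ i j k ω, |centred E ν i ω * centred E ν j ω * centred E ν k ω| ≤ 1 :=
    fun i j k ω => by
      rw [abs_mul]; exact mul_le_one₀ (hZZ i j ω) (abs_nonneg _) (hZ k ω)
  have hstar := (star_pos c i j k l).le
  have hpair := (pairing_pos c i j k l).le
  have key : ∀ g : ℤ, 0 ≤ g → l - i ≤ 3 * g →
      M * decay c g ^ 3 ≤ M * (3 ^ c) ^ 3 * star c i j k l := fun g a1 a2 => by
    have hle : ∀ m, i ≤ m → m ≤ l → |i - m| ≤ 3 * |g| := fun m m1 m2 => by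
      rw [abs_of_nonneg a1]
      exact abs_le.2 ⟨by linarith, by linarith⟩
    rw [mul_assoc M]
    exact mul_le_mul_of_nonneg_left (decay_cube_le_star hc0 (hle j hij (hjk.trans hkl))
      (hle k (hij.trans hjk) hkl) (hle l (by linarith) le_rfl)) hM0
  have hM2 : 0 ≤ M ^ 2 * pairing c i j k l := by positivity
  have hcase : (k - j ≤ j - i ∧ l - k ≤ j - i) ∨ (j - i ≤ l - k ∧ k - j ≤ l - k) ∨
      (j - i ≤ k - j ∧ l - k ≤ k - j) := by omega
  rcases hcase with hg | hg | hg
  · have c1 := h.abs_cov_le h0 h1 hij (h.elementary_left le_rfl)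
      (((h.elementary_right (le_refl j)).mul (h.elementary_right hjk)).mul
        (h.elementary_right (hjk.trans hkl))) (by norm_num) (by
          rw [h.integral_centred, zero_mul, sub_zero]
          exact (h.abs_integral_centred_mul_le i (hZZZ j k l)).trans (by linarith))
    rw [h.integral_centred, zero_mul, sub_zero] at c1
    have e : ∀ ω, centred E ν i ω * centred E ν j ω * centred E ν k ω * centred E ν l ω
        = centred E ν i ω * (centred E ν j ω * centred E ν k ω * centred E ν l ω) := by
      intro ω; ring
    simp_rw [e]
    have := key (j - i) (by omega) (by omega)
    linarith
  · have c1 := h.abs_cov_le h0 h1 hkl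
      (((h.elementary_left (hij.trans hjk)).mul (h.elementary_left hjk)).mul
        (h.elementary_left (le_refl k))) (h.elementary_right (le_refl l)) (by norm_num) (by
          rw [h.integral_centred, mul_zero, sub_zero]
          simp_rw [mul_comm _ (centred E ν l _)]
          exact (h.abs_integral_centred_mul_le l (fun ω => hZZZ i j k ω)).trans (by linarith))
    rw [h.integral_centred, mul_zero, sub_zero] at c1
    have := key (l - k) (by omega) (by omega)
    linarith
  · have e : ∀ ω, centred E ν i ω * centred E ν j ω * centred E ν k ω * centred E ν l ω
        = centred E ν i ω * centred E ν j ω * (centred E ν k ω * centred E ν l ω) := by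
      intro ω; ring
    have a1 : |∫ ω, centred E ν i ω * centred E ν j ω * (centred E ν k ω * centred E ν l ω) ∂P|
        ≤ 2 * ν := by
      simp_rw [← e, mul_assoc]
      simp_rw [← mul_assoc (centred E ν j _)]
      exact h.abs_integral_centred_mul_le i (hZZZ j k l)
    have a2 := h.abs_integral_centred_mul_le i (hZ j)
    have a3 : |∫ ω, centred E ν k ω * centred E ν l ω ∂P| ≤ 2 * ν :=
      h.abs_integral_centred_mul_le k (hZ l)
    have a4 : |(∫ ω, centred E ν i ω * centred E ν j ω ∂P)
        * ∫ ω, centred E ν k ω * centred E ν l ω ∂P| ≤ 4 * ν := by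
      rw [abs_mul]
      have := mul_le_mul a2 a3 (abs_nonneg _) (by positivity)
      nlinarith [h.nu_le_one]
    have c1 := h.abs_cov_le h0 h1 hjk ((h.elementary_left hij).mul (h.elementary_left (le_refl j)))
      ((h.elementary_right (le_refl k)).mul (h.elementary_right hkl)) (by norm_num)
      ((abs_sub _ _).trans (by linarith))
    have q1 := h.abs_integral_pair_le h0 h1 hij
    have q2 := h.abs_integral_pair_le h0 h1 hkl
    rw [← hc, ← hM] at q1 q2 c1
    have cube : ∀ m, decay c m ^ 3 ≤ decay c m := fun m =>
      pow_le_of_le_one (decay_pos c m).le (decay_le_one hc0 m) (by norm_num)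
    have q3 : |(∫ ω, centred E ν i ω * centred E ν j ω ∂P)
        * ∫ ω, centred E ν k ω * centred E ν l ω ∂P| ≤ M ^ 2 * pairing c i j k l := by
      rw [abs_mul]
      calc _ ≤ (M * decay c (j - i)) * (M * decay c (l - k)) :=
            mul_le_mul (q1.trans (mul_le_mul_of_nonneg_left (cube _) hM0))
              (q2.trans (mul_le_mul_of_nonneg_left (cube _) hM0)) (abs_nonneg _)
              (mul_nonneg hM0 (decay_pos _ _).le)
        _ = _ := by unfold pairing; rw [decay_comm c i j, decay_comm c k l]; ring
    simp_rw [e]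
    have k1 := key (k - j) (by omega) (by omega)
    have tri := abs_sub_abs_le_abs_sub
      (∫ ω, centred E ν i ω * centred E ν j ω * (centred E ν k ω * centred E ν l ω) ∂P)
      ((∫ ω, centred E ν i ω * centred E ν j ω ∂P)
        * ∫ ω, centred E ν k ω * centred E ν l ω ∂P)
    linarith

lemma abs_integral_four_le (h : MixingEvents P E mL mG ν C a) (ha : 0 ≤ a) {θ : ℝ}
    (h0 : 0 ≤ θ) (h1 : θ ≤ 1) (i j k l : ℤ) :
    |∫ ω, centred E ν i ω * centred E ν j ω * centred E ν k ω * centred E ν l ω ∂P|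
      ≤ majorant (a * (1 - θ) / 3) (16 * C * ν ^ θ * (3 ^ (a * (1 - θ) / 3)) ^ 3)
          ((16 * C * ν ^ θ) ^ 2) i j k l := by
  have hn := h.nu_nonneg
  have hC := h.one_le
  refine of_sorted (p := fun i j k l =>
    |∫ ω, centred E ν i ω * centred E ν j ω * centred E ν k ω * centred E ν l ω ∂P|
      ≤ majorant (a * (1 - θ) / 3) (16 * C * ν ^ θ * (3 ^ (a * (1 - θ) / 3)) ^ 3)
          ((16 * C * ν ^ θ) ^ 2) i j k l) ?_ ?_ ?_ ?_ i j k l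
  · intro i j k l hp
    rw [← majorant_swap12]
    simpa only [mul_comm (centred E ν j _) (centred E ν i _)] using hp
  · intro i j k l hp
    rw [← majorant_swap23]
    simpa only [mul_right_comm _ (centred E ν k _) (centred E ν j _)] using hp
  · intro i j k l hp
    rw [← majorant_swap34]
    simpa only [mul_right_comm _ (centred E ν l _) (centred E ν k _)] using hp
  · intro i j k l hij hjk hkl
    refine (h.abs_integral_four_le_of_sorted ha h0 h1 hij hjk hkl).trans ?_
    unfold majorant
    refine add_le_add (mul_le_mul_of_nonneg_left ?_ (by positivity))
      (mul_le_mul_of_nonneg_left ?_ (by positivity))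
    · linarith [star_pos (a * (1 - θ) / 3) j i k l, star_pos (a * (1 - θ) / 3) k i j l,
        star_pos (a * (1 - θ) / 3) l i j k]
    · linarith [pairing_pos (a * (1 - θ) / 3) i k j l, pairing_pos (a * (1 - θ) / 3) i l j k]

end MixingEvents


/-! ### Multiplier sums with fourth moments -/

lemma abs_four_mul_le (x y z w : ℝ) : |x * y * z * w| ≤ (x ^ 4 + y ^ 4 + z ^ 4 + w ^ 4) / 4 := by
  have h1 : |x * y * z * w| = |x * y| * |z * w| := by rw [← abs_mul]; congr 1; ring
  have h2 : |x * y| * |z * w| ≤ (|x * y| ^ 2 + |z * w| ^ 2) / 2 := by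
    nlinarith [sq_nonneg (|x * y| - |z * w|)]
  rw [sq_abs, sq_abs] at h2
  rw [h1]
  nlinarith [sq_nonneg (x ^ 2 - y ^ 2), sq_nonneg (z ^ 2 - w ^ 2)]

/-- Expanding the fourth power and separating the multipliers by independence reduces the
fourth moment of a multiplier sum to mixed moments of the second factor. -/
lemma integral_multiplier_sum_pow_four_le {P : Measure Ω} [IsProbabilityMeasure P]
    {X Z : ℤ → Ω → ℝ} (hX : ∀ i, Measurable (X i)) (hZ : ∀ i, Measurable (Z i))
    (hZ1 : ∀ i ω, |Z i ω| ≤ 1)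
    (hind : ∀ i j k l, IndepFun (fun ω => X i ω * X j ω * X k ω * X l ω)
      (fun ω => Z i ω * Z j ω * Z k ω * Z l ω) P)
    (hX4 : ∀ i, Integrable (fun ω => X i ω ^ 4) P) {B : ℝ} (hB : ∀ i, ∫ ω, X i ω ^ 4 ∂P ≤ B)
    {G : ℤ → ℤ → ℤ → ℤ → ℝ}
    (hG : ∀ i j k l, |∫ ω, Z i ω * Z j ω * Z k ω * Z l ω ∂P| ≤ G i j k l) (I : Finset ℤ) :
    ∫ ω, (∑ i ∈ I, X i ω * Z i ω) ^ 4 ∂P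
      ≤ B * ∑ i ∈ I, ∑ j ∈ I, ∑ k ∈ I, ∑ l ∈ I, G i j k l := by
  have hB0 : 0 ≤ B := (integral_nonneg fun ω => by positivity).trans (hB 0)
  have expand : ∀ ω, (∑ i ∈ I, X i ω * Z i ω) ^ 4 = ∑ i ∈ I, ∑ j ∈ I, ∑ k ∈ I, ∑ l ∈ I,
      (X i ω * X j ω * X k ω * X l ω) * (Z i ω * Z j ω * Z k ω * Z l ω) := by
    intro ω
    rw [pow_succ, pow_succ, pow_two]
    simp only [Finset.sum_mul, Finset.mul_sum]
    refine (Finset.sum_congr rfl fun i _ => ?_)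
    refine (Finset.sum_congr rfl fun j _ => ?_)
    refine (Finset.sum_congr rfl fun k _ => ?_)
    refine (Finset.sum_congr rfl fun l _ => ?_)
    ring
  have hdom : ∀ i j k l, Integrable
      (fun ω => (X i ω ^ 4 + X j ω ^ 4 + X k ω ^ 4 + X l ω ^ 4) / 4) P := fun i j k l =>
    ((((hX4 i).add (hX4 j)).add (hX4 k)).add (hX4 l)).div_const 4
  have hXm : ∀ i j k l, Measurable (fun ω => X i ω * X j ω * X k ω * X l ω) := fun i j k l =>
    (((hX i).mul (hX j)).mul (hX k)).mul (hX l)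
  have hZm : ∀ i j k l, Measurable (fun ω => Z i ω * Z j ω * Z k ω * Z l ω) := fun i j k l =>
    (((hZ i).mul (hZ j)).mul (hZ k)).mul (hZ l)
  have hZ4 : ∀ i j k l ω, |Z i ω * Z j ω * Z k ω * Z l ω| ≤ 1 := fun i j k l ω => by
    simp only [abs_mul]
    exact mul_le_one₀ (mul_le_one₀ (mul_le_one₀ (hZ1 i ω) (abs_nonneg _) (hZ1 j ω))
      (abs_nonneg _) (hZ1 k ω)) (abs_nonneg _) (hZ1 l ω)
  have hprod_int : ∀ i j k l, Integrable
      (fun ω => (X i ω * X j ω * X k ω * X l ω) * (Z i ω * Z j ω * Z k ω * Z l ω)) P := by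
    intro i j k l
    refine (hdom i j k l).mono' ((hXm i j k l).mul (hZm i j k l)).aestronglyMeasurable
      (ae_of_all _ fun ω => ?_)
    rw [Real.norm_eq_abs, abs_mul]
    exact (mul_le_of_le_one_right (abs_nonneg _) (hZ4 i j k l ω)).trans (abs_four_mul_le _ _ _ _)
  have hXb : ∀ i j k l, |∫ ω, X i ω * X j ω * X k ω * X l ω ∂P| ≤ B := by
    intro i j k l
    calc |∫ ω, X i ω * X j ω * X k ω * X l ω ∂P|
        ≤ ∫ ω, |X i ω * X j ω * X k ω * X l ω| ∂P := abs_integral_le_integral_abs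
      _ ≤ ∫ ω, (X i ω ^ 4 + X j ω ^ 4 + X k ω ^ 4 + X l ω ^ 4) / 4 ∂P :=
          integral_mono_of_nonneg (ae_of_all _ fun ω => abs_nonneg _) (hdom i j k l)
            (ae_of_all _ fun ω => abs_four_mul_le _ _ _ _)
      _ = (∫ ω, X i ω ^ 4 ∂P + ∫ ω, X j ω ^ 4 ∂P + ∫ ω, X k ω ^ 4 ∂P
            + ∫ ω, X l ω ^ 4 ∂P) / 4 := by
          have e1 := integral_add (hX4 i) (hX4 j)
          have e2 := integral_add ((hX4 i).add (hX4 j)) (hX4 k)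
          have e3 := integral_add (((hX4 i).add (hX4 j)).add (hX4 k)) (hX4 l)
          simp only [Pi.add_apply] at e2 e3
          rw [integral_div, e3, e2, e1]
      _ ≤ B := by linarith [hB i, hB j, hB k, hB l]
  simp_rw [expand]
  rw [integral_finsetSum _ fun i _ => integrable_finsetSum _ fun j _ =>
    integrable_finsetSum _ fun k _ => integrable_finsetSum _ fun l _ => hprod_int i j k l,
    Finset.mul_sum]
  refine Finset.sum_le_sum fun i _ => ?_
  rw [integral_finsetSum _ fun j _ =>
    integrable_finsetSum _ fun k _ => integrable_finsetSum _ fun l _ => hprod_int i j k l,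
    Finset.mul_sum]
  refine Finset.sum_le_sum fun j _ => ?_
  rw [integral_finsetSum _ fun k _ => integrable_finsetSum _ fun l _ => hprod_int i j k l,
    Finset.mul_sum]
  refine Finset.sum_le_sum fun k _ => ?_
  rw [integral_finsetSum _ fun l _ => hprod_int i j k l, Finset.mul_sum]
  refine Finset.sum_le_sum fun l _ => ?_
  have hfac := (hind i j k l).integral_mul_eq_mul_integral
    (hXm i j k l).aestronglyMeasurable (hZm i j k l).aestronglyMeasurable
  simp only [Pi.mul_apply] at hfac
  rw [hfac]
  refine (le_abs_self _).trans ?_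
  rw [abs_mul]
  exact mul_le_mul (hXb i j k l) (hG i j k l) (abs_nonneg _) hB0

/-! ### Integrability of the multipliers -/

/-- If `W⁴` is integrable and `W` agrees with `Y` on a nonnull event independent of `Y`, then
`Y⁴` is integrable. -/
lemma integrable_pow_four_of_eqOn {S : Type*} {m₁ m₂ m₀ : MeasurableSpace S} {P : Measure S}
    [IsProbabilityMeasure P] (h₁ : m₁ ≤ m₀) (h₂ : m₂ ≤ m₀) (hind : Indep m₁ m₂ P)
    {W Y : S → ℝ} (hY : Measurable[m₁] Y) {A : Set S} (hA : MeasurableSet[m₂] A) (hPA : P A ≠ 0)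
    (hW : Integrable (fun ω => W ω ^ 4) P) (hWY : ∀ ω ∈ A, W ω = Y ω) :
    Integrable (fun ω => Y ω ^ 4) P := by
  have hY0 : Measurable Y := hY.mono h₁ le_rfl
  have hm : Measurable[m₁] fun ω => ENNReal.ofReal (Y ω ^ 4) :=
    ENNReal.measurable_ofReal.comp (hY.pow_const 4)
  have hm' : Measurable[m₂] (A.indicator (1 : S → ENNReal)) :=
    Measurable.indicator (m := m₂) measurable_const hA
  have hfac := lintegral_mul_eq_lintegral_mul_lintegral_of_independent_measurableSpace
    h₁ h₂ hind hm hm'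
  rw [lintegral_indicator_one (h₂ _ hA)] at hfac
  have hle : ∫⁻ ω, ENNReal.ofReal (Y ω ^ 4) * A.indicator 1 ω ∂P
      ≤ ∫⁻ ω, ENNReal.ofReal (W ω ^ 4) ∂P := by
    refine lintegral_mono fun ω => ?_
    by_cases h : ω ∈ A
    · simp [h, hWY ω h]
    · simp [h]
  have hWfin : ∫⁻ ω, ENNReal.ofReal (W ω ^ 4) ∂P < ⊤ :=
    hW.lintegral_lt_top
  have hfin : (∫⁻ ω, ENNReal.ofReal (Y ω ^ 4) ∂P) * P A < ⊤ := hfac ▸ hle.trans_lt hWfin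
  have : ∫⁻ ω, ENNReal.ofReal (Y ω ^ 4) ∂P ≠ ⊤ := by
    intro htop
    rw [htop, ENNReal.top_mul hPA] at hfin
    exact lt_irrefl _ hfin
  exact (lintegral_ofReal_ne_top_iff_integrable (hY0.pow_const 4).aestronglyMeasurable
    (ae_of_all _ fun ω => by positivity)).1 this

/-- Under mixing, an event with probability strictly between `0` and `1` cannot be determined by
finitely many of its predecessors: stationarity would propagate the dependence, so that events
arbitrarily far in the future would be determined by a fixed past. -/
lemma MixingEvents.not_determined {P : Measure Ω} [IsProbabilityMeasure P] {E : ℤ → Set Ω}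
    {mL mG : ℤ → MeasurableSpace Ω} {ν C a : ℝ} (h : MixingEvents P E mL mG ν C a) (ha : 0 < a)
    (hν0 : 0 < ν) (hν1 : ν < 1)
    (hstat : ∀ Q : (ℤ → Prop) → Prop, Measurable Q → (∀ᵐ ω ∂P, Q fun i => ω ∈ E i) →
      ∀ k, ∀ᵐ ω ∂P, Q fun i => ω ∈ E (i + k))
    (m N : ℤ) (f : (Finset.Ico m N → Prop) → Prop)
    (hf : ∀ᵐ ω ∂P, (ω ∈ E N ↔ f fun i => ω ∈ E i)) : False := by
  have hshift : ∀ k, ∀ᵐ ω ∂P, (ω ∈ E (N + k) ↔ f fun i => ω ∈ E (i + k)) := by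
    refine hstat (fun b => (b N ↔ f fun i => b i)) ?_ hf
    refine (measurable_pi_apply N).iff ?_
    exact (measurable_of_finite f).comp (measurable_pi_lambda _ fun i => measurable_pi_apply _)
  have hdet : ∀ n : ℕ, ∀ M : ℤ, M < N + n →
      ∃ g : Ω → Prop, Measurable[mL (N - 1)] g ∧ ∀ᵐ ω ∂P, (ω ∈ E M ↔ g ω) := by
    intro n
    induction n with
    | zero =>
      intro M hM
      refine ⟨fun ω => ω ∈ E M, ?_, ae_of_all _ fun ω => Iff.rfl⟩
      exact (@measurableSet_setOfPred _ (mL (N - 1)) _).1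
        (h.meas_left M (N - 1) (by push_cast at hM; omega))
    | succ n ih =>
      intro M hM
      by_cases hM' : M < N + n
      · exact ih M hM'
      obtain rfl : M = N + n := by push_cast at hM; omega
      have hi : ∀ i : Finset.Ico m N, (i : ℤ) + n < N + n := fun i => by
        have := Finset.mem_Ico.1 i.2
        omega
      choose g hg hgE using fun i : Finset.Ico m N => ih ((i : ℤ) + n) (hi i)
      refine ⟨fun ω => f fun i => g i ω, ?_, ?_⟩
      · exact (measurable_of_finite f).comp (@measurable_pi_lambda _ _ _ (mL (N - 1)) _ _ hg)
      · filter_upwards [hshift n, ae_all_iff.2 hgE] with ω h1 h2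
        rw [h1]
        have : (fun i : Finset.Ico m N => ω ∈ E ((i : ℤ) + n)) = fun i => g i ω :=
          funext fun i => propext (h2 i)
        rw [this]
  have hbound : ∀ n : ℕ, ν - ν * ν ≤ C * ((n : ℝ) + 1) ^ (-a) := by
    intro n
    obtain ⟨g, hg, hgE⟩ := hdet (n + 1) (N + n - 1 + 1) (by push_cast; omega)
    have hgm : MeasurableSet[mL (N - 1)] {ω | g ω} := (@measurableSet_setOfPred _ (mL (N - 1)) _).2 hg
    have e1 : ({ω | g ω} : Set Ω) =ᵐ[P] E (N + n - 1 + 1) := by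
      filter_upwards [hgE] with ω hω
      exact propext hω.symm
    have e2 : P.real ({ω | g ω} ∩ E (N + n - 1 + 1)) = ν := by
      rw [← h.prob (N + n - 1 + 1)]
      refine measureReal_congr ?_
      filter_upwards [hgE] with ω hω
      exact propext ⟨fun x => x.2, fun x => ⟨hω.1 x, x⟩⟩
    have := h.mix (N - 1) (N + n - 1) (by omega) _ _ hgm
      (h.meas_right (N + n - 1 + 1) (N + n - 1) (by omega))
    rw [e2, measureReal_congr e1, h.prob] at this
    refine (le_abs_self _).trans (this.trans (le_of_eq ?_))
    have e3 : N + (n : ℤ) - 1 - (N - 1) = n := by ring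
    rw [e3]
    simp [add_comm]
  have hlim : Tendsto (fun n : ℕ => C * ((n : ℝ) + 1) ^ (-a)) atTop (nhds (C * 0)) :=
    ((tendsto_rpow_neg_atTop ha).comp
      (tendsto_atTop_add_const_right _ 1 tendsto_natCast_atTop_atTop)).const_mul C
  have := ge_of_tendsto' hlim hbound
  nlinarith

/-- If a multiplier sum over a nonempty block has an integrable fourth power and the events are
nontrivial, then its last multiplier already has a fourth moment. Since the last event is not
determined by the preceding ones, two patterns of positive probability differ only at the last
index; on them the sums differ by the last multiplier. -/
lemma MixingEvents.integrable_multiplier {S : Type*} {mX mU m₀ : MeasurableSpace S}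
    {P : Measure S} [IsProbabilityMeasure P]
    {E : ℤ → Set S} {mL mG : ℤ → MeasurableSpace S} {ν C a : ℝ}
    (h : MixingEvents P E mL mG ν C a) (ha : 0 < a) (hν0 : 0 < ν) (hν1 : ν < 1)
    (hstat : ∀ Q : (ℤ → Prop) → Prop, Measurable Q → (∀ᵐ ω ∂P, Q fun i => ω ∈ E i) →
      ∀ k, ∀ᵐ ω ∂P, Q fun i => ω ∈ E (i + k))
    {X : ℤ → S → ℝ} (hmX : mX ≤ m₀) (hmU : mU ≤ m₀)
    (hind : Indep mX mU P) (hX : ∀ i, Measurable[mX] (X i))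
    (hE : ∀ i, MeasurableSet[mU] (E i)) {m N : ℤ} (hmN : m ≤ N)
    (hW : Integrable (fun ω => (∑ i ∈ Finset.Icc m N, X i ω * centred E ν i ω) ^ 4) P) :
    Integrable (fun ω => X N ω ^ 4) P := by
  classical
  set pat : S → (Finset.Ico m N → Prop) := fun ω i => ω ∈ E i with hpat
  have hpatm : ∀ e, MeasurableSet[mU] {ω | pat ω = e} := by
    intro e
    have : {ω | pat ω = e} = ⋂ i : Finset.Ico m N, {ω | ω ∈ E (i : ℤ) ↔ e i} := by
      ext ω
      simp only [mem_ofPred_eq, mem_iInter, funext_iff, hpat, eq_iff_iff]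
    rw [this]
    refine @MeasurableSet.iInter _ _ mU _ _ fun i => ?_
    by_cases hi : e i
    · simp only [hi, iff_true]
      exact hE i
    · simp only [hi, iff_false]
      exact (hE i).compl
  by_cases hex : ∃ e, P ({ω | pat ω = e} ∩ E N) ≠ 0 ∧ P ({ω | pat ω = e} ∩ (E N)ᶜ) ≠ 0
  · obtain ⟨e, h1, h2⟩ := hex
    let R : S → ℝ := fun ω => ∑ i ∈ (Finset.Ico m N).attach, X i ω * ((if e i then 1 else 0) - ν)
    have hR : Measurable[mX] R :=
      @Finset.measurable_sum _ _ _ _ _ _ mX _ _ fun i _ => (hX i).mul_const _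
    have hsum : ∀ ω, pat ω = e → ∑ i ∈ Finset.Icc m N, X i ω * centred E ν i ω
        = X N ω * centred E ν N ω + R ω := by
      intro ω hω
      rw [← Finset.Ico_insert_right hmN, Finset.sum_insert (by simp), ← Finset.sum_attach]
      congr 1
      refine Finset.sum_congr rfl fun i _ => ?_
      have : ω ∈ E i ↔ e i := by rw [← hω]
      simp [centred, Set.indicator_apply, this]
    have i1 := integrable_pow_four_of_eqOn hmX hmU hind
      (Y := fun ω => X N ω * (1 - ν) + R ω) (((hX N).mul_const _).add hR)
      ((hpatm e).inter (hE N)) h1 hW (fun ω hω => by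
        rw [hsum ω hω.1]; simp [centred, hω.2])
    have i2 := integrable_pow_four_of_eqOn hmX hmU hind
      (Y := fun ω => X N ω * (0 - ν) + R ω) (((hX N).mul_const _).add hR)
      ((hpatm e).inter (hE N).compl) h2 hW (fun ω hω => by
        have : ω ∉ E N := hω.2
        rw [hsum ω hω.1]; simp [centred, this])
    refine ((i1.add i2).const_mul 8).mono'
      (((hX N).mono hmX le_rfl).pow_const 4).aestronglyMeasurable (ae_of_all _ fun ω => ?_)
    rw [Real.norm_eq_abs, abs_of_nonneg (by positivity)]
    -- `X N` is the difference `p - r` of the two sums, and `(p - r)⁴ ≤ 8 (p⁴ + r⁴)`.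
    have hpr : ∀ p r : ℝ, (p - r) ^ 4 ≤ 8 * (p ^ 4 + r ^ 4) := fun p r => by
      nlinarith [sq_nonneg (p ^ 2 - r ^ 2), sq_nonneg (p + r), sq_nonneg (p - r),
        sq_nonneg ((p + r) * (p - r)), sq_nonneg ((p + r) ^ 2), sq_nonneg (p * r),
        mul_nonneg (sq_nonneg (p + r)) (sq_nonneg (p - r)),
        mul_nonneg (sq_nonneg (p + r)) (add_nonneg (sq_nonneg p) (sq_nonneg r))]
    calc X N ω ^ 4 = ((X N ω * (1 - ν) + R ω) - (X N ω * (0 - ν) + R ω)) ^ 4 := by ring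
      _ ≤ _ := hpr _ _
  · exfalso
    push Not at hex
    refine h.not_determined ha hν0 hν1 hstat m N (fun e => P ({ω | pat ω = e} ∩ E N) ≠ 0) ?_
    have hnull : ∀ e, ∀ᵐ ω ∂P, pat ω = e → (ω ∈ E N ↔ P ({ω | pat ω = e} ∩ E N) ≠ 0) := by
      intro e
      by_cases he : P ({ω | pat ω = e} ∩ E N) = 0
      · filter_upwards [measure_eq_zero_iff_ae_notMem.1 he] with ω hω hp
        simp only [he, ne_eq, not_true_eq_false, iff_false]
        exact fun hN => hω ⟨hp, hN⟩
      · filter_upwards [measure_eq_zero_iff_ae_notMem.1 (hex e he)] with ω hω hp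
        simp only [ne_eq, he, not_false_eq_true, iff_true]
        by_contra hN
        exact hω ⟨hp, hN⟩
    filter_upwards [ae_all_iff.2 hnull] with ω hω
    exact hω _ rfl


/-! ### Application to box indicators of a mixing sequence -/

/-- The half-open box `(u, v]`. -/
def box (u v : Fin d → ℝ) : Set (Fin d → ℝ) := {x | ∀ j, u j < x j ∧ x j ≤ v j}

lemma measurableSet_box (u v : Fin d → ℝ) : MeasurableSet (box u v) := by
  have : box u v = Set.univ.pi fun j => Ioc (u j) (v j) := by
    ext x; simp [box, Set.mem_pi]
  rw [this]
  exact MeasurableSet.univ_pi fun j => measurableSet_Ioc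

/-- Almost sure properties of the indicator pattern of a stationary sequence are shift
invariant. -/
lemma Stationary.ae_shift {β : Type*} [MeasurableSpace β] {P : Measure Ω} {Y : ℤ → Ω → β}
    (hY : Stationary P Y) (hm : ∀ i, Measurable (Y i)) {D : Set β} (hD : MeasurableSet D)
    (Q : (ℤ → Prop) → Prop) (hQ : Measurable Q) (h : ∀ᵐ ω ∂P, Q fun i => ω ∈ Y i ⁻¹' D) (k : ℤ) :
    ∀ᵐ ω ∂P, Q fun i => ω ∈ Y (i + k) ⁻¹' D := by
  have hmeas : MeasurableSet {x : ℤ → β | Q fun i => x i ∈ D} := by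
    refine measurableSet_setOfPred.2 (hQ.comp (measurable_pi_lambda _ fun i => ?_))
    exact (measurableSet_setOfPred.1 hD).comp (measurable_pi_apply i)
  have h1 : ∀ᵐ x ∂(Measure.map (fun ω (i : ℤ) => Y i ω) P), Q fun i => x i ∈ D :=
    (ae_map_iff (measurable_pi_lambda _ fun i => hm i).aemeasurable hmeas).2 h
  rw [← hY k] at h1
  exact (ae_map_iff (measurable_pi_lambda _ fun i => hm (i + k)).aemeasurable hmeas).1 h1

lemma Stationary.identDistrib {β : Type*} [MeasurableSpace β] {P : Measure Ω} {Y : ℤ → Ω → β}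
    (hY : Stationary P Y) (hm : ∀ i, Measurable (Y i)) (i j : ℤ) :
    IdentDistrib (Y i) (Y j) P P := by
  refine ⟨(hm i).aemeasurable, (hm j).aemeasurable, ?_⟩
  have e1 : (fun x : ℤ → β => x j) ∘ (fun ω (l : ℤ) => Y (l + (i - j)) ω) = Y i := by
    ext ω; simp
  have e2 : (fun x : ℤ → β => x j) ∘ (fun ω (l : ℤ) => Y l ω) = Y j := rfl
  rw [← e1, ← e2, ← Measure.map_map (measurable_pi_apply j)
      (measurable_pi_lambda _ fun l => hm (l + (i - j))),
    ← Measure.map_map (measurable_pi_apply j) (measurable_pi_lambda _ fun l => hm l), hY]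

lemma abs_measureReal_inter_sub_le_one {P : Measure Ω} [IsProbabilityMeasure P] (A B : Set Ω) :
    |P.real (A ∩ B) - P.real A * P.real B| ≤ 1 := by
  have h1 : P.real (A ∩ B) ≤ 1 := measureReal_le_one
  have h2 : P.real A ≤ 1 := measureReal_le_one
  have h3 : P.real B ≤ 1 := measureReal_le_one
  have h4 : 0 ≤ P.real (A ∩ B) := measureReal_nonneg
  have h5 : 0 ≤ P.real A := measureReal_nonneg
  have h6 : 0 ≤ P.real B := measureReal_nonneg
  rw [abs_le]
  constructor <;> nlinarith

lemma abs_measureReal_inter_sub_le_alphaMix {β : Type*} [MeasurableSpace β] {P : Measure Ω}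
    [IsProbabilityMeasure P] {Y : ℤ → Ω → β} {p : ℤ} {r : ℕ} {A B : Set Ω}
    (hA : MeasurableSet[sigmaLE Y p] A) (hB : MeasurableSet[sigmaGE Y (p + r)] B) :
    |P.real (A ∩ B) - P.real A * P.real B| ≤ alphaMix P Y r := by
  refine le_csSup ⟨1, ?_⟩ ⟨p, A, B, hA, hB, rfl⟩
  rintro x ⟨p, A, B, -, -, rfl⟩
  exact abs_measureReal_inter_sub_le_one A B

/-- The events `U i ∈ (u, v]`; the constant does not depend on the box. The factor `2 ^ a`
trades `r` for `1 + r` when `r ≥ 1`, and the summand `1` covers the gap `r = 0`. -/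
lemma mixingEvents_box {P : Measure Ω} [IsProbabilityMeasure P]
    {U : ℤ → Ω → Fin d → ℝ} (hU : ∀ i, Measurable (U i)) (hstat : Stationary P U)
    {a Ca : ℝ} (ha : 0 < a)
    (hmix : ∀ r : ℕ, 1 ≤ r → alphaMix P U r ≤ Ca * (r : ℝ) ^ (-a)) (u v : Fin d → ℝ) :
    MixingEvents P (fun i => U i ⁻¹' box u v) (sigmaLE U) (sigmaGE U) (nuBox P U u v)
      (|Ca| * 2 ^ a + 1) a where
  le_left p := iSup₂_le fun i _ => (hU i).comap_le
  le_right p := iSup₂_le fun i _ => (hU i).comap_le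
  meas_left i p hip := by
    have : MeasurableSpace.comap (U i) inferInstance ≤ sigmaLE U p :=
      le_iSup₂_of_le (f := fun (i : ℤ) (_ : i ∈ {i : ℤ | i ≤ p}) =>
        MeasurableSpace.comap (U i) inferInstance) i hip le_rfl
    exact this _ ⟨_, measurableSet_box u v, rfl⟩
  meas_right i p hip := by
    have : MeasurableSpace.comap (U i) inferInstance ≤ sigmaGE U p :=
      le_iSup₂_of_le (f := fun (i : ℤ) (_ : i ∈ {i : ℤ | p ≤ i}) =>
        MeasurableSpace.comap (U i) inferInstance) i hip le_rfl
    exact this _ ⟨_, measurableSet_box u v, rfl⟩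
  prob i := congrArg ENNReal.toReal
    ((hstat.identDistrib hU i 1).measure_mem_eq (measurableSet_box u v))
  one_le := by
    have : 0 ≤ |Ca| * 2 ^ a := by positivity
    linarith
  mix p r hpr A B hA hB := by
    obtain ⟨n, rfl⟩ : ∃ n : ℕ, r = p + n := ⟨(r - p).toNat, by omega⟩
    have e : ((p + n - p : ℤ) : ℝ) = n := by push_cast; ring
    rw [e, Nat.abs_cast]
    rcases Nat.eq_zero_or_pos n with rfl | hn
    · refine (abs_measureReal_inter_sub_le_one A B).trans ?_
      have : 0 ≤ |Ca| * 2 ^ a := by positivity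
      simp [this]
    · have hn1 : (1 : ℝ) ≤ n := by exact_mod_cast hn
      have h1 : (n : ℝ) ^ (-a) ≤ 2 ^ a * (1 + n) ^ (-a) := by
        calc (n : ℝ) ^ (-a) ≤ ((1 + n) / 2 : ℝ) ^ (-a) :=
              Real.rpow_le_rpow_of_nonpos (by positivity) (by linarith) (by linarith)
          _ = 2 ^ a * (1 + n) ^ (-a) := by
              rw [Real.div_rpow (by positivity) (by norm_num),
                Real.rpow_neg (by norm_num : (0 : ℝ) ≤ 2)]
              field_simp
      have h2 : (0 : ℝ) ≤ (1 + n) ^ (-a) := by positivity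
      calc _ ≤ alphaMix P U n := abs_measureReal_inter_sub_le_alphaMix hA hB
        _ ≤ Ca * (n : ℝ) ^ (-a) := hmix n hn
        _ ≤ |Ca| * (n : ℝ) ^ (-a) := mul_le_mul_of_nonneg_right (le_abs_self _) (by positivity)
        _ ≤ |Ca| * (2 ^ a * (1 + n) ^ (-a)) := mul_le_mul_of_nonneg_left h1 (abs_nonneg _)
        _ ≤ _ := by linarith

lemma indBox_sub_eq_centred {S : Type*} (U : ℤ → S → Fin d → ℝ) (u v : Fin d → ℝ) (x : ℝ) (i : ℤ)
    (ω : S) : indBox U i u v ω - x = centred (fun i => U i ⁻¹' box u v) x i ω := by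
  classical
  simp [indBox, centred, Set.indicator_apply, box]

/-- For events of probability `0` or `1` the centred indicators vanish almost surely. -/
lemma MixingEvents.centred_ae_eq_zero {P : Measure Ω} [IsProbabilityMeasure P] {E : ℤ → Set Ω}
    {mL mG : ℤ → MeasurableSpace Ω} {ν C a : ℝ} (h : MixingEvents P E mL mG ν C a)
    (hν : ν = 0 ∨ ν = 1) (i : ℤ) : ∀ᵐ ω ∂P, centred E ν i ω = 0 := by
  rcases hν with rfl | rfl
  · have h0 : P (E i) = 0 := (measureReal_eq_zero_iff).1 (h.prob i)
    filter_upwards [measure_eq_zero_iff_ae_notMem.1 h0] with ω hω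
    simp [centred, hω]
  · have h1 : P (E i) = 1 := by
      have := h.prob i
      rwa [measureReal_def, ENNReal.toReal_eq_one_iff] at this
    have : ∀ᵐ ω ∂P, ω ∈ E i := (mem_ae_iff_prob_eq_one (h.meas i)).2 h1
    filter_upwards [this] with ω hω
    simp [centred, hω]


set_option maxHeartbeats 800000 in
/-- Moment inequality. Under strong mixing with `α_r = O(r^{−a})`,
`a > 6`, and multipliers satisfying (M1), for every `q ∈ (2a/(a−3), 4)` there is a
constant `κ > 0` such that
`E[(B̃_n^ξ((s,t] × A))⁴] ≤ κ [λ_n(s,t)² ν(A)^{4/q} + n⁻¹ λ_n(s,t) ν(A)^{2/q}]`. -/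
theorem multiplier_block_fourth_moment_bound
    (P : Measure Ω) [IsProbabilityMeasure P] (hd : 1 ≤ d)
    (U : ℤ → Ω → Fin d → ℝ) (hUmeas : ∀ i, Measurable (U i))
    (hUrange : ∀ i ω j, U i ω j ∈ Icc (0 : ℝ) 1)
    (hUstat : Stationary P U)
    (a : ℝ) (ha : 6 < a) (Ca : ℝ)
    (hmix : ∀ r : ℕ, 1 ≤ r → alphaMix P U r ≤ Ca * (r : ℝ) ^ (-a))
    -- (M1) for the multipliers
    (ξ : ℤ → ℕ → Ω → ℝ) (hξmeas : ∀ i n, Measurable (ξ i n))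
    (hξstat : ∀ n : ℕ, Stationary P fun i => ξ i n)
    (hξindep : Indep
      (⨆ p : ℤ × ℕ, MeasurableSpace.comap (fun ω => ξ p.1 p.2 ω) inferInstance)
      (⨆ i : ℤ, MeasurableSpace.comap (U i) inferInstance) P)
    (hξmean : ∀ n : ℕ, ∫ ω, ξ 0 n ω ∂P = 0)
    (hξvar : ∀ n : ℕ, 0 < ∫ ω, (ξ 0 n ω) ^ 2 ∂P)
    (hξmom : ∀ p : ℝ, 1 ≤ p → ∃ B : ℝ, ∀ n : ℕ, ∫ ω, |ξ 0 n ω| ^ p ∂P ≤ B)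
    (q : ℝ) (hq1 : 2 * a / (a - 3) < q) (hq2 : q < 4) :
    ∃ κ : ℝ, 0 < κ ∧ ∀ n : ℕ, 1 ≤ n → ∀ s t : ℝ, 0 ≤ s → s ≤ t → t ≤ 1 →
      ∀ u v : Fin d → ℝ, (∀ j, 0 ≤ u j) → (∀ j, u j ≤ v j) → (∀ j, v j ≤ 1) →
      (∫ ω, blockSum P U ξ n s t u v ω ^ 4 ∂P)
        ≤ κ * (lam n s t ^ 2 * nuBox P U u v ^ (4 / q)
            + (n : ℝ)⁻¹ * lam n s t * nuBox P U u v ^ (2 / q)) := by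
  have hq0 : 0 < q := lt_trans (div_pos (by linarith) (by linarith)) hq1
  set θ : ℝ := 2 / q with hθ
  have hθ0 : 0 < θ := by positivity
  have hθa : 3 < a * (1 - θ) := by
    rw [div_lt_iff₀ (by linarith)] at hq1
    have e : a * (1 - θ) = (a * q - 2 * a) / q := by rw [hθ]; field_simp
    rw [e, lt_div_iff₀ hq0]
    linarith
  have hθ1 : θ ≤ 1 := by
    by_contra hcon
    nlinarith
  have hc : 1 < a * (1 - θ) / 3 := by linarith
  have ha0 : 0 < a := by linarith
  obtain ⟨B₀, hB₀⟩ := hξmom 4 (by norm_num)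
  set B : ℝ := max B₀ 0 with hB
  have hBnn : 0 ≤ B := le_max_right _ _
  set c : ℝ := a * (1 - θ) / 3 with hcdef
  set C : ℝ := |Ca| * 2 ^ a + 1 with hC
  have hC0 : 0 < C := by positivity
  set S : ℝ := ∑' k, decay c k with hS
  have hS0 : 0 ≤ S := tsum_nonneg fun k => (decay_pos c k).le
  set κ₁ : ℝ := B * (4 * (16 * C * (3 ^ c) ^ 3) * S ^ 3) with hκ₁
  set κ₂ : ℝ := B * (3 * (16 * C) ^ 2 * S ^ 2) with hκ₂
  have hκ₁0 : 0 ≤ κ₁ := by positivity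
  have hκ₂0 : 0 ≤ κ₂ := by positivity
  refine ⟨κ₁ + κ₂ + 1, by positivity, ?_⟩
  intro n hn s t hs hst ht u v hu huv hv
  have hmixE := mixingEvents_box hUmeas hUstat ha0 hmix u v
  rw [← hC] at hmixE
  set E : ℤ → Set Ω := fun i => U i ⁻¹' box u v with hE
  set ν : ℝ := nuBox P U u v with hν
  have hν0 := hmixE.nu_nonneg
  have hν1 := hmixE.nu_le_one
  have hn0 : (0 : ℝ) < n := by exact_mod_cast hn
  have hfloor : ⌊(n : ℝ) * s⌋ ≤ ⌊(n : ℝ) * t⌋ :=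
    Int.floor_mono (mul_le_mul_of_nonneg_left hst hn0.le)
  set m : ℤ := ⌊(n : ℝ) * s⌋ + 1 with hm
  set N : ℤ := ⌊(n : ℝ) * t⌋ with hN
  have hcard : ((Finset.Icc m N).card : ℝ) = n * lam n s t := by
    rw [Int.card_Icc, lam, ← hN]
    have : (((N + 1 - m).toNat : ℤ) : ℝ) = ((N + 1 - m : ℤ) : ℝ) := by
      rw [Int.toNat_of_nonneg (by omega)]
    rw [Int.cast_natCast] at this
    rw [this, hm]
    push_cast
    field_simp
    ring
  have hlam : 0 ≤ lam n s t :=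
    div_nonneg (sub_nonneg.2 (by exact_mod_cast hfloor)) hn0.le
  have hpow : ν ^ (4 / q) = (ν ^ θ) ^ 2 := by
    rw [← Real.rpow_natCast, ← Real.rpow_mul hν0, hθ]
    congr 1
    push_cast
    ring
  rw [hpow]
  have hRHS : 0 ≤ (κ₁ + κ₂ + 1) * (lam n s t ^ 2 * (ν ^ θ) ^ 2 + (n : ℝ)⁻¹ * lam n s t * ν ^ θ) := by
    positivity
  have hblock : ∀ ω, blockSum P U ξ n s t u v ω ^ 4
      = ((n : ℝ)⁻¹) ^ 2 * (∑ i ∈ Finset.Icc m N, ξ i n ω * centred E ν i ω) ^ 4 := by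
    intro ω
    unfold blockSum
    rw [mul_pow]
    congr 1
    · rw [show 4 = 2 * 2 from rfl, pow_mul, inv_pow, Real.sq_sqrt hn0.le]
    · simp_rw [indBox_sub_eq_centred]
      rfl
  simp_rw [hblock]
  rw [integral_const_mul]
  set W : Ω → ℝ := fun ω => ∑ i ∈ Finset.Icc m N, ξ i n ω * centred E ν i ω with hWdef
  -- Trivial cases: the integral vanishes, possibly because the fourth power is not integrable.
  by_cases hWint : Integrable (fun ω => W ω ^ 4) P
  swap
  · rw [integral_undef hWint, mul_zero]
    exact hRHS
  by_cases hνtriv : ν = 0 ∨ ν = 1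
  · have hz : ∀ᵐ ω ∂P, W ω ^ 4 = 0 := by
      filter_upwards [ae_all_iff.2 (hmixE.centred_ae_eq_zero hνtriv)] with ω hω
      simp [hWdef, hω]
    rw [integral_congr_ae hz]
    simpa using hRHS
  rcases lt_or_ge N m with hNm | hmN
  · have hz : ∀ᵐ ω ∂P, W ω ^ 4 = 0 :=
      ae_of_all _ fun ω => by simp [hWdef, Finset.Icc_eq_empty_of_lt hNm]
    rw [integral_congr_ae hz]
    simpa using hRHS
  have hνpos : 0 < ν := lt_of_le_of_ne hν0 fun h => hνtriv (Or.inl h.symm)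
  have hνlt : ν < 1 := lt_of_le_of_ne hν1 fun h => hνtriv (Or.inr h)
  have hξσ : ∀ i, Measurable[⨆ p : ℤ × ℕ, MeasurableSpace.comap (fun ω => ξ p.1 p.2 ω) inferInstance]
      (ξ i n) := fun i =>
    (comap_measurable (ξ i n)).mono (le_iSup (fun p : ℤ × ℕ =>
      MeasurableSpace.comap (fun ω => ξ p.1 p.2 ω) inferInstance) (i, n)) le_rfl
  have hEσ : ∀ i, MeasurableSet[⨆ i : ℤ, MeasurableSpace.comap (U i) inferInstance] (E i) := fun i =>
    le_iSup (fun i : ℤ => MeasurableSpace.comap (U i) inferInstance) i _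
      ⟨_, measurableSet_box u v, rfl⟩
  have hξle : (⨆ p : ℤ × ℕ, MeasurableSpace.comap (fun ω => ξ p.1 p.2 ω) inferInstance)
      ≤ ‹MeasurableSpace Ω› := iSup_le fun p => (hξmeas p.1 p.2).comap_le
  have hUle : (⨆ i : ℤ, MeasurableSpace.comap (U i) inferInstance) ≤ ‹MeasurableSpace Ω› :=
    iSup_le fun i => (hUmeas i).comap_le
  have hξN : Integrable (fun ω => ξ N n ω ^ 4) P :=
    hmixE.integrable_multiplier ha0 hνpos hνlt
      (fun Q hQ h k => hUstat.ae_shift hUmeas (measurableSet_box u v) Q hQ h k)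
      (X := fun i => ξ i n) hξle hUle hξindep hξσ hEσ hmN hWint
  have hid : ∀ i j, IdentDistrib (fun ω => ξ i n ω ^ 4) (fun ω => ξ j n ω ^ 4) P P := fun i j =>
    ((hξstat n).identDistrib (fun i => hξmeas i n) i j).comp (measurable_id.pow_const 4)
  have hξ4 : ∀ i, Integrable (fun ω => ξ i n ω ^ 4) P := fun i => (hid i N).integrable_iff.2 hξN
  have hξB : ∀ i, ∫ ω, ξ i n ω ^ 4 ∂P ≤ B := by
    intro i
    rw [(hid i 0).integral_eq]
    have h4 : ∀ ω, |ξ 0 n ω| ^ (4 : ℝ) = ξ 0 n ω ^ 4 := fun ω => by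
      rw [show (4 : ℝ) = ((4 : ℕ) : ℝ) by norm_num, Real.rpow_natCast,
        Even.pow_abs (by decide)]
    have := hB₀ n
    rw [integral_congr_ae (ae_of_all _ h4)] at this
    exact this.trans (le_max_left _ _)
  have hZσ : ∀ i, Measurable[⨆ i : ℤ, MeasurableSpace.comap (U i) inferInstance]
      (centred E ν i) := fun i =>
    Measurable.sub_const (Measurable.indicator (m := ⨆ i : ℤ, MeasurableSpace.comap (U i)
      inferInstance) measurable_const (hEσ i)) ν
  have hindep : ∀ i j k l, IndepFun (fun ω => ξ i n ω * ξ j n ω * ξ k n ω * ξ l n ω)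
      (fun ω => centred E ν i ω * centred E ν j ω * centred E ν k ω * centred E ν l ω) P := by
    intro i j k l
    rw [IndepFun_iff_Indep]
    refine indep_of_indep_of_le_left (indep_of_indep_of_le_right hξindep ?_) ?_
    · exact Measurable.comap_le ((((hZσ i).mul (hZσ j)).mul (hZσ k)).mul (hZσ l))
    · exact Measurable.comap_le ((((hξσ i).mul (hξσ j)).mul (hξσ k)).mul (hξσ l))
  have hmain := integral_multiplier_sum_pow_four_le (P := P) (X := fun i => ξ i n)
    (Z := centred E ν) (fun i => hξmeas i n) hmixE.measurable_centred
    (abs_centred_le hν0 hν1) hindep hξ4 hξB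
    (hmixE.abs_integral_four_le ha0.le hθ0.le hθ1) (Finset.Icc m N)
  have hsum := sum_majorant_le hc (x := 16 * C * ν ^ θ * (3 ^ c) ^ 3)
    (y := (16 * C * ν ^ θ) ^ 2) (by positivity) (by positivity) (Finset.Icc m N)
  have hfin := hmain.trans (mul_le_mul_of_nonneg_left hsum hBnn)
  rw [hcard, ← hS] at hfin
  have hνθ : 0 ≤ ν ^ θ := by positivity
  calc ((n : ℝ)⁻¹) ^ 2 * ∫ ω, W ω ^ 4 ∂P
      ≤ ((n : ℝ)⁻¹) ^ 2 * (B * (4 * (16 * C * ν ^ θ * (3 ^ c) ^ 3) * (n * lam n s t * S ^ 3)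
          + 3 * (16 * C * ν ^ θ) ^ 2 * (n * lam n s t * S) ^ 2)) :=
        mul_le_mul_of_nonneg_left hfin (by positivity)
    _ = κ₂ * (lam n s t ^ 2 * (ν ^ θ) ^ 2) + κ₁ * ((n : ℝ)⁻¹ * lam n s t * ν ^ θ) := by
        rw [hκ₁, hκ₂]
        field_simp
        ring
    _ ≤ (κ₁ + κ₂ + 1) * (lam n s t ^ 2 * (ν ^ θ) ^ 2)
          + (κ₁ + κ₂ + 1) * ((n : ℝ)⁻¹ * lam n s t * ν ^ θ) := by
        refine add_le_add (mul_le_mul_of_nonneg_right (by linarith) (by positivity))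
          (mul_le_mul_of_nonneg_right (by linarith) (by positivity))
    _ = _ := by ring

end Stmt3
end
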